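/- arXiv:1708.05343 — 2 statements merged into one kernel-verified Lean document; each statement's English description precedes it below -/
import Mathlib

section
/- Let d ≥ 1, let a, b ∈ ℝ, c > 0, and let b₁,…,b_d > 0 and p₁,…,p_d > 0 be real numbers such that max{p_j, c/b_j} ≥ 1 for each j = 1,…,d. Define V(m) = a·m + b·m² + (1 + c·m)·∏_{j=1}^{d} (1 + b_j·m)^{p_j} (with real powers, for m in a neighborhood of 0 where all factors are positive). If b ≥ −1 then V belongs to the class 𝒱; if b ≥ 0 then V belongs to the class 𝒱∞. -/
open MeasureTheory Filter

noncomputable section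

/-- The Cauchy–Stieltjes kernel density `f(x,m) = V(m)/(V(m)+m(m-x))`. -/
def cskKernel (V : ℝ → ℝ) (m x : ℝ) : ℝ := V m / (V m + m * (m - x))

/-- `ν` is a non-degenerate, compactly supported probability measure on `ℝ` with mean `0`. -/
def IsCSKGenerator (ν : Measure ℝ) : Prop :=
  IsProbabilityMeasure ν ∧
  (∃ R : ℝ, ν (Set.Icc (-R) R)ᶜ = 0) ∧
  (∀ a : ℝ, ν ≠ Measure.dirac a) ∧
  (∫ x, x ∂ν) = 0

/-- `V` is the variance function of the CSK family generated by `ν`: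
`V` is real-analytic near `0`, `V 0 > 0`, and for all `m` near `0` the kernel
`f(x,m)` is a.e. nonnegative, integrates to `1`, and has mean `m`. -/
def IsCSKVarianceFun (ν : Measure ℝ) (V : ℝ → ℝ) : Prop :=
  AnalyticAt ℝ V 0 ∧ 0 < V 0 ∧
  ∃ ε > 0, ∀ m : ℝ, |m| < ε →
    (∀ᵐ x ∂ν, 0 ≤ cskKernel V m x) ∧
    (∫ x, cskKernel V m x ∂ν) = 1 ∧
    (∫ x, x * cskKernel V m x ∂ν) = m

/-- The class `𝒱` of variance functions of CSK families generated by
non-degenerate compactly supported probability measures with mean `0` and variance `1`. -/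
def memV (V : ℝ → ℝ) : Prop :=
  ∃ ν : Measure ℝ, IsCSKGenerator ν ∧ (∫ x, x ^ 2 ∂ν) = 1 ∧ IsCSKVarianceFun ν V

/-- The class `𝒱∞`: those `V` such that `m ↦ V (c * m)` is in `𝒱` for every real `c`. -/
def memVinf (V : ℝ → ℝ) : Prop := ∀ c : ℝ, memV (fun m => V (c * m))

namespace CSK
open Topology ComplexConjugate Bornology

/-- complement of the real segment `[α, β]` in the complex plane -/
def Jc (α β : ℝ) : Set ℂ := {z | z.im ≠ 0 ∨ z.re < α ∨ β < z.re}

/-- Cauchy transform of a measure on `[α, β]` -/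
def cau {α β : ℝ} (μ : Measure (Set.Icc α β)) (z : ℂ) : ℂ := ∫ x, (z - ((x : ℝ) : ℂ))⁻¹ ∂μ

lemma isOpen_Jc (α β : ℝ) : IsOpen (Jc α β) := by
  unfold Jc
  simp only [Set.ofPred_or]
  refine IsOpen.union ?_ (IsOpen.union ?_ ?_)
  · exact isOpen_ne_fun Complex.continuous_im continuous_const
  · exact isOpen_lt Complex.continuous_re continuous_const
  · exact isOpen_lt continuous_const Complex.continuous_re

lemma Jc_ne {α β : ℝ} {z : ℂ} (hz : z ∈ Jc α β) (x : Set.Icc α β) :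
    z - ((x : ℝ) : ℂ) ≠ 0 := by
  intro h
  have h1 : z = ((x : ℝ) : ℂ) := sub_eq_zero.mp h
  have hx := x.2
  rw [h1] at hz
  simp only [Jc, Set.mem_ofPred_eq, Complex.ofReal_im, Complex.ofReal_re] at hz
  rcases hz with h | h | h
  · exact h rfl
  · linarith [hx.1]
  · linarith [hx.2]

lemma Jc_conj {α β : ℝ} {z : ℂ} (hz : z ∈ Jc α β) : conj z ∈ Jc α β := by
  simpa [Jc] using hz

lemma cont_ker {α β : ℝ} {z : ℂ} (hz : z ∈ Jc α β) :
    Continuous fun x : Set.Icc α β => (z - ((x : ℝ) : ℂ))⁻¹ := by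
  refine Continuous.inv₀ (by fun_prop) (Jc_ne hz)

lemma integrable_of_cont {α β : ℝ} {E : Type*} [NormedAddCommGroup E]
    (μ : Measure (Set.Icc α β)) [IsFiniteMeasure μ] {f : Set.Icc α β → E}
    (hf : Continuous f) : Integrable f μ :=
  hf.integrable_of_hasCompactSupport (HasCompactSupport.of_compactSpace f)

lemma integrable_ker {α β : ℝ} (μ : Measure (Set.Icc α β)) [IsFiniteMeasure μ] {z : ℂ}
    (hz : z ∈ Jc α β) : Integrable (fun x : Set.Icc α β => (z - ((x : ℝ) : ℂ))⁻¹) μ :=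
  integrable_of_cont μ (cont_ker hz)

lemma exists_delta {α β : ℝ} {z : ℂ} (hz : z ∈ Jc α β) :
    ∃ δ > 0, ∀ x : Set.Icc α β, δ ≤ ‖z - ((x : ℝ) : ℂ)‖ := by
  by_cases hne : Nonempty (Set.Icc α β)
  · have hc : Continuous fun x : Set.Icc α β => ‖z - ((x : ℝ) : ℂ)‖ := by fun_prop
    obtain ⟨x0, -, h0⟩ := isCompact_univ.exists_isMinOn (Set.univ_nonempty) hc.continuousOn
    exact ⟨_, norm_pos_iff.mpr (Jc_ne hz x0), fun x => h0 (Set.mem_univ x)⟩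
  · exact ⟨1, one_pos, fun x => (hne ⟨x⟩).elim⟩

lemma cau_diffAt {α β : ℝ} (μ : Measure (Set.Icc α β)) [IsFiniteMeasure μ] {z : ℂ}
    (hz : z ∈ Jc α β) : DifferentiableAt ℂ (cau μ) z := by
  obtain ⟨δ, hδ, hd⟩ := exists_delta hz
  have key : ∀ x : Set.Icc α β, ∀ w ∈ Metric.ball z (δ/2), δ/2 ≤ ‖w - ((x : ℝ) : ℂ)‖ := by
    intro x w hw
    have h1 := hd x
    have h2 : ‖z - w‖ < δ/2 := by rw [← dist_eq_norm, dist_comm]; exact hw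
    have h3 : ‖z - ((x : ℝ) : ℂ)‖ ≤ ‖z - w‖ + ‖w - ((x : ℝ) : ℂ)‖ := by
      have := norm_add_le (z - w) (w - ((x : ℝ) : ℂ)); simpa using this
    linarith
  have h := hasDerivAt_integral_of_dominated_loc_of_deriv_le (μ := μ) (𝕜 := ℂ)
    (F := fun (w : ℂ) (x : Set.Icc α β) => (w - ((x : ℝ) : ℂ))⁻¹)
    (F' := fun (w : ℂ) (x : Set.Icc α β) => -1 / (w - ((x : ℝ) : ℂ))^2)
    (x₀ := z) (s := Metric.ball z (δ/2)) (bound := fun _ => 1/(δ/2)^2)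
    (Metric.ball_mem_nhds z (by positivity))
    (by
      refine Filter.Eventually.of_forall fun w => ?_
      apply Measurable.aestronglyMeasurable
      exact (measurable_const.sub
        (Complex.measurable_ofReal.comp measurable_subtype_coe)).inv)
    (integrable_ker μ hz)
    (by
      apply Measurable.aestronglyMeasurable
      exact measurable_const.div ((measurable_const.sub
        (Complex.measurable_ofReal.comp measurable_subtype_coe)).pow_const 2))
    (by
      refine Filter.Eventually.of_forall fun x w hw => ?_
      have := key x w hw
      simp only [norm_div, norm_neg, norm_one, norm_pow]
      gcongr)
    (integrable_const _)
    (by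
      refine Filter.Eventually.of_forall fun x w hw => ?_
      have h1 := key x w hw
      have h2 : w - ((x : ℝ) : ℂ) ≠ 0 := by
        rw [← norm_pos_iff]; linarith
      have h3 : HasDerivAt (fun w : ℂ => w - ((x : ℝ) : ℂ)) 1 w := (hasDerivAt_id w).sub_const _
      exact h3.fun_inv h2)
  exact h.2.differentiableAt

lemma cau_conj {α β : ℝ} (μ : Measure (Set.Icc α β)) (z : ℂ) :
    cau μ (conj z) = conj (cau μ z) := by
  unfold cau
  rw [← integral_conj]
  congr 1
  ext x
  simp

lemma im_ker (z : ℂ) (x : ℝ) : ((z - (x : ℂ))⁻¹).im = - z.im / Complex.normSq (z - x) := by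
  rw [Complex.inv_im]; simp

lemma cau_im {α β : ℝ} (μ : Measure (Set.Icc α β)) [IsFiniteMeasure μ] {z : ℂ}
    (hz : z ∈ Jc α β) : (cau μ z).im = ∫ x, ((z - ((x : Set.Icc α β) : ℝ))⁻¹).im ∂μ :=
  (integral_im (𝕜 := ℂ) (integrable_ker μ hz)).symm

lemma cau_re {α β : ℝ} (μ : Measure (Set.Icc α β)) [IsFiniteMeasure μ] {z : ℂ}
    (hz : z ∈ Jc α β) : (cau μ z).re = ∫ x, ((z - ((x : Set.Icc α β) : ℝ))⁻¹).re ∂μ :=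
  (integral_re (𝕜 := ℂ) (integrable_ker μ hz)).symm

lemma integral_pos_of_cont {α β : ℝ} (μ : Measure (Set.Icc α β)) [IsProbabilityMeasure μ]
    {f : Set.Icc α β → ℝ} (hf : Continuous f) (hpos : ∀ x, 0 < f x) : 0 < ∫ x, f x ∂μ := by
  rw [integral_pos_iff_support_of_nonneg (fun x => (hpos x).le) (integrable_of_cont μ hf)]
  have : Function.support f = Set.univ := by
    ext x; simp [(hpos x).ne']
  rw [this]; simp

lemma cau_im_neg {α β : ℝ} (μ : Measure (Set.Icc α β)) [IsProbabilityMeasure μ] {z : ℂ}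
    (hz : 0 < z.im) : (cau μ z).im < 0 := by
  have hJ : z ∈ Jc α β := Or.inl hz.ne'
  rw [cau_im μ hJ]
  have := integral_pos_of_cont μ (f := fun x => - ((z - ((x : Set.Icc α β) : ℝ))⁻¹).im)
    ((Complex.continuous_im.comp (cont_ker hJ)).neg) (by
      intro x
      rw [im_ker, neg_div, neg_neg]
      exact div_pos hz (Complex.normSq_pos.mpr (Jc_ne hJ x)))
  rw [integral_neg] at this
  linarith

lemma cau_neg_of_lt {α β : ℝ} (μ : Measure (Set.Icc α β)) [IsProbabilityMeasure μ] {x : ℝ}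
    (hx : x < α) : (cau μ x).re < 0 := by
  have hJ : (x : ℂ) ∈ Jc α β := Or.inr (Or.inl (by simpa using hx))
  rw [cau_re μ hJ]
  have := integral_pos_of_cont μ (f := fun y => - (((x : ℂ) - ((y : Set.Icc α β) : ℝ))⁻¹).re)
    ((Complex.continuous_re.comp (cont_ker hJ)).neg) (by
      intro y
      have hy := y.2.1
      rw [← Complex.ofReal_sub, ← Complex.ofReal_inv, Complex.ofReal_re, ← inv_neg]
      exact inv_pos.mpr (by linarith))
  rw [integral_neg] at this
  linarith

lemma cau_real {α β : ℝ} (μ : Measure (Set.Icc α β)) (x : ℝ) : (cau μ x).im = 0 := by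
  have := cau_conj μ (x : ℂ)
  rw [Complex.conj_ofReal] at this
  exact Complex.conj_eq_iff_im.mp this.symm

/-- for measures on `[0, β]` we have `Im (z G(z)) ≤ 0` -/
lemma cau_mul_im {α β : ℝ} (hα : 0 ≤ α) (μ : Measure (Set.Icc α β)) [IsProbabilityMeasure μ]
    {z : ℂ} (hz : 0 < z.im) : (z * cau μ z).im ≤ 0 := by
  have hJ : z ∈ Jc α β := Or.inl hz.ne'
  have h1 : z * cau μ z = ∫ x, z * (z - ((x : Set.Icc α β) : ℝ))⁻¹ ∂μ := by
    unfold cau; rw [integral_const_mul]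
  have h2 : (z * cau μ z).im = ∫ x, (z * (z - ((x : Set.Icc α β) : ℝ))⁻¹).im ∂μ := by
    rw [h1]
    exact (integral_im (𝕜 := ℂ) ((integrable_ker μ hJ).const_mul z)).symm
  rw [h2]
  apply integral_nonpos
  intro x
  have hx : z * (z - ((x : ℝ) : ℂ))⁻¹ = 1 + ((x : ℝ) : ℂ) * (z - ((x : ℝ) : ℂ))⁻¹ := by
    have := Jc_ne hJ x
    field_simp
    ring
  simp only [Pi.zero_apply]
  rw [hx, Complex.add_im, Complex.one_im, Complex.im_ofReal_mul, im_ker, zero_add]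
  apply mul_nonpos_of_nonneg_of_nonpos (hα.trans x.2.1)
  apply div_nonpos_of_nonpos_of_nonneg (by linarith) (Complex.normSq_nonneg _)

lemma Jc_of_norm {α β R : ℝ} (hR : ∀ x ∈ Set.Icc α β, |x| ≤ R) {z : ℂ} (hz : R < ‖z‖) :
    z ∈ Jc α β := by
  by_contra h
  simp only [Jc, Set.mem_ofPred_eq, not_or, not_not, not_lt] at h
  have h1 : z = (z.re : ℂ) := by apply Complex.ext <;> simp [h.1]
  have h2 := hR z.re ⟨h.2.1, h.2.2⟩
  rw [h1, Complex.norm_real, Real.norm_eq_abs] at hz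
  linarith

lemma norm_ker {α β R : ℝ} (hR : ∀ x ∈ Set.Icc α β, |x| ≤ R) {z : ℂ} (x : Set.Icc α β) :
    ‖z‖ - R ≤ ‖z - ((x : ℝ) : ℂ)‖ := by
  have := norm_sub_norm_le z ((x : ℝ) : ℂ)
  rw [Complex.norm_real, Real.norm_eq_abs] at this
  linarith [hR x x.2]

lemma cau_norm {α β R : ℝ} (hR : ∀ x ∈ Set.Icc α β, |x| ≤ R) (μ : Measure (Set.Icc α β))
    [IsProbabilityMeasure μ] {z : ℂ} (hz : R < ‖z‖) : ‖cau μ z‖ ≤ 1 / (‖z‖ - R) := by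
  have := norm_integral_le_of_norm_le_const (μ := μ) (C := 1 / (‖z‖ - R))
    (f := fun x : Set.Icc α β => (z - ((x : ℝ) : ℂ))⁻¹) (Filter.Eventually.of_forall fun x => by
      rw [norm_inv, ← one_div]
      have := norm_ker hR (z := z) x
      apply one_div_le_one_div_of_le (by linarith) this)
  simpa [cau] using this

lemma cau_lip {α β R : ℝ} (hR : ∀ x ∈ Set.Icc α β, |x| ≤ R) (μ : Measure (Set.Icc α β))
    [IsProbabilityMeasure μ] {z w : ℂ} (hz : R < ‖z‖) (hw : R < ‖w‖) :
    ‖cau μ z - cau μ w‖ ≤ ‖z - w‖ / ((‖z‖ - R) * (‖w‖ - R)) := by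
  have hJz := Jc_of_norm hR hz
  have hJw := Jc_of_norm hR hw
  unfold cau
  rw [← integral_sub (integrable_ker μ hJz) (integrable_ker μ hJw)]
  have := norm_integral_le_of_norm_le_const (μ := μ) (C := ‖z - w‖ / ((‖z‖ - R) * (‖w‖ - R)))
    (f := fun x : Set.Icc α β => (z - ((x : ℝ) : ℂ))⁻¹ - (w - ((x : ℝ) : ℂ))⁻¹)
    (Filter.Eventually.of_forall fun x => by
      have h1 := norm_ker hR (z := z) x
      have h2 := norm_ker hR (z := w) x
      have e : (z - ((x : ℝ) : ℂ))⁻¹ - (w - ((x : ℝ) : ℂ))⁻¹ =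
          (w - z) / ((z - ((x : ℝ) : ℂ)) * (w - ((x : ℝ) : ℂ))) := by
        have := Jc_ne hJz x
        have := Jc_ne hJw x
        field_simp
        ring
      rw [e, norm_div, norm_mul, norm_sub_rev]
      have : 0 < ‖z‖ - R := by linarith
      have : 0 < ‖w‖ - R := by linarith
      gcongr)
  simpa using this

/-- `z G(z) → μ(univ)` at infinity -/
lemma cau_lim {α β : ℝ} (μ : Measure (Set.Icc α β)) [IsFiniteMeasure μ] :
    Tendsto (fun z => z * cau μ z) (cobounded ℂ) (𝓝 ((μ.real Set.univ : ℝ) : ℂ)) := by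
  have hR : ∀ x ∈ Set.Icc α β, |x| ≤ |α| + |β| := by
    intro x hx
    rw [abs_le]
    constructor
    · linarith [neg_abs_le α, abs_nonneg β, hx.1]
    · linarith [le_abs_self β, abs_nonneg α, hx.2]
  set R := |α| + |β| with hRdef
  have h0 : ((μ.real Set.univ : ℝ) : ℂ) = ∫ x : Set.Icc α β, (1 : ℂ) ∂μ := by simp
  have h1 : (fun z => z * cau μ z) = fun z => ∫ x : Set.Icc α β, z * (z - ((x : ℝ) : ℂ))⁻¹ ∂μ := by
    ext z; unfold cau; rw [integral_const_mul]
  rw [h0, h1]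
  have hlarge : ∀ᶠ z : ℂ in cobounded ℂ, 2 * R + 1 ≤ ‖z‖ :=
    tendsto_norm_cobounded_atTop.eventually_ge_atTop _
  have : (cobounded ℂ).IsCountablyGenerated := by
    rw [← comap_norm_atTop]; infer_instance
  refine tendsto_integral_filter_of_dominated_convergence (fun _ => 2) ?_ ?_ (integrable_const _) ?_
  · filter_upwards with z
    apply Measurable.aestronglyMeasurable
    exact measurable_const.mul (measurable_const.sub
        (Complex.measurable_ofReal.comp measurable_subtype_coe)).inv
  · filter_upwards [hlarge] with z hz
    filter_upwards with x
    have h2 := norm_ker hR (z := z) x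
    have hR0 : 0 ≤ R := by positivity
    rw [norm_mul, norm_inv, ← div_eq_mul_inv, div_le_iff₀ (by linarith)]
    linarith
  · filter_upwards with x
    have h2 : Tendsto (fun z : ℂ => z⁻¹) (cobounded ℂ) (𝓝 0) := tendsto_inv₀_cobounded
    have h3 : Tendsto (fun z : ℂ => (1 - ((x : ℝ) : ℂ) * z⁻¹)⁻¹) (cobounded ℂ) (𝓝 (1 - ((x : ℝ) : ℂ) * 0)⁻¹) := by
      refine Tendsto.inv₀ (tendsto_const_nhds.sub (h2.const_mul _)) (by simp)
    simp only [mul_zero, sub_zero, inv_one] at h3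
    refine h3.congr' ?_
    filter_upwards [hlarge] with z hz
    have hR0 : 0 ≤ R := by positivity
    have hz0 : z ≠ 0 := by rw [← norm_pos_iff]; linarith
    have := Jc_ne (Jc_of_norm hR (show R < ‖z‖ by linarith)) x
    have e : (1 - ((x : ℝ) : ℂ) * z⁻¹) = (z - ((x : ℝ) : ℂ)) * z⁻¹ := by field_simp
    rw [e, mul_inv, inv_inv, mul_comm]

/-- compactness: pointwise limits of Cauchy transforms -/
lemma cau_compact {α β : ℝ} (μ : ℕ → ProbabilityMeasure (Set.Icc α β)) :
    ∃ ν : ProbabilityMeasure (Set.Icc α β), ∀ z ∈ Jc α β, ∀ L : ℂ,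
      Tendsto (fun n => cau (μ n : Measure (Set.Icc α β)) z) atTop (𝓝 L) →
      cau (ν : Measure (Set.Icc α β)) z = L := by
  let U : Ultrafilter ℕ := hyperfilter ℕ
  have hU : (U : Filter ℕ) ≤ atTop := Nat.hyperfilter_le_atTop
  obtain ⟨ν, -, hν⟩ := isCompact_univ.ultrafilter_le_nhds (U.map μ) (by simp)
  refine ⟨ν, fun z hz L hL => ?_⟩
  have h1 : Tendsto μ (U : Filter ℕ) (𝓝 ν) := hν
  rw [ProbabilityMeasure.tendsto_iff_forall_integral_rclike_tendsto ℂ] at h1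
  have h2 := h1 (BoundedContinuousFunction.mkOfCompact ⟨_, cont_ker hz⟩)
  exact tendsto_nhds_unique h2 (hL.mono_left hU)

end CSK

namespace CSK
open Topology ComplexConjugate Bornology

lemma circ_one {g : ℂ → ℂ} (hg : DifferentiableOn ℂ g (Metric.ball 0 1)) {r : ℝ} (hr0 : 0 < r)
    (hr1 : r < 1) {s : ℂ} (hs : ‖s‖ < 1) :
    ∫ θ in (0:ℝ)..2 * Real.pi, g (r * Complex.exp (θ * Complex.I)) *
      (1 - s * Complex.exp (-(θ * Complex.I)))⁻¹ = 2 * Real.pi * g (r * s) := by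
  have hw : (r : ℂ) * s ∈ Metric.ball (0:ℂ) r := by
    rw [mem_ball_zero_iff, norm_mul, Complex.norm_real, Real.norm_eq_abs, abs_of_pos hr0]
    nlinarith
  have h := DifferentiableOn.circleIntegral_sub_inv_smul
    (hg.mono (Metric.closedBall_subset_ball hr1)) hw
  rw [circleIntegral] at h
  have e : ∀ θ : ℝ, deriv (circleMap 0 r) θ • (circleMap 0 r θ - r * s)⁻¹ • g (circleMap 0 r θ)
      = Complex.I * (g (r * Complex.exp (θ * Complex.I)) *
      (1 - s * Complex.exp (-(θ * Complex.I)))⁻¹) := by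
    intro θ
    have hrc : (r : ℂ) ≠ 0 := by exact_mod_cast hr0.ne'
    have hE := Complex.exp_ne_zero (θ * Complex.I)
    rw [deriv_circleMap, Complex.exp_neg]
    simp only [circleMap, zero_add, smul_eq_mul]
    have : (r : ℂ) * Complex.exp (θ * Complex.I) - r * s =
      (r * Complex.exp (θ * Complex.I)) * (1 - s * (Complex.exp (θ * Complex.I))⁻¹) := by
      field_simp
    rw [this, mul_inv]
    field_simp
  simp_rw [e] at h
  rw [intervalIntegral.integral_const_mul] at h
  have hI := Complex.I_ne_zero
  apply mul_left_cancel₀ hI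
  rw [h, smul_eq_mul]
  ring

lemma circ_two {g : ℂ → ℂ} (hg : DifferentiableOn ℂ g (Metric.ball 0 1)) (g0 : g 0 = 0)
    {r : ℝ} (hr0 : 0 < r) (hr1 : r < 1) {s : ℂ} (hs : ‖s‖ < 1) :
    ∫ θ in (0:ℝ)..2 * Real.pi, g (r * Complex.exp (θ * Complex.I)) *
      (1 - s * Complex.exp (θ * Complex.I))⁻¹ = 0 := by
  have hrc : (r : ℂ) ≠ 0 := by exact_mod_cast hr0.ne'
  have hw : (0 : ℂ) ∈ Metric.ball (0:ℂ) r := by simpa using hr0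
  have hd : DifferentiableOn ℂ (fun ζ => g ζ * (1 - s / r * ζ)⁻¹) (Metric.closedBall 0 r) := by
    refine (hg.mono (Metric.closedBall_subset_ball hr1)).mul ?_
    refine DifferentiableOn.inv (by fun_prop) ?_
    intro ζ hζ h
    rw [mem_closedBall_zero_iff] at hζ
    have h1 : s / r * ζ = 1 := (sub_eq_zero.mp h).symm
    have h2 : ‖s / r * ζ‖ < 1 := by
      rw [norm_mul, norm_div, Complex.norm_real, Real.norm_eq_abs, abs_of_pos hr0]
      calc ‖s‖ / r * ‖ζ‖ ≤ ‖s‖ / r * r := by gcongr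
        _ = ‖s‖ := by field_simp
        _ < 1 := hs
    rw [h1] at h2
    simp at h2
  have h := DifferentiableOn.circleIntegral_sub_inv_smul hd hw
  rw [circleIntegral] at h
  have e : ∀ θ : ℝ, deriv (circleMap 0 r) θ • (circleMap 0 r θ - 0)⁻¹ •
      (g (circleMap 0 r θ) * (1 - s / r * circleMap 0 r θ)⁻¹)
      = Complex.I * (g (r * Complex.exp (θ * Complex.I)) *
      (1 - s * Complex.exp (θ * Complex.I))⁻¹) := by
    intro θ
    have hE := Complex.exp_ne_zero (θ * Complex.I)
    rw [deriv_circleMap]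
    simp only [circleMap, zero_add, smul_eq_mul, sub_zero]
    have : s / r * ((r : ℂ) * Complex.exp (θ * Complex.I)) = s * Complex.exp (θ * Complex.I) := by
      field_simp
    rw [this]
    field_simp
  simp_rw [e] at h
  rw [intervalIntegral.integral_const_mul] at h
  have hI := Complex.I_ne_zero
  apply mul_left_cancel₀ hI
  rw [h, g0]
  simp

lemma one_sub_ne {s E : ℂ} (hs : ‖s‖ < 1) (hE : ‖E‖ = 1) : 1 - s * E ≠ 0 := by
  intro h
  have h1 : s * E = 1 := (sub_eq_zero.mp h).symm
  have h2 : ‖s * E‖ = ‖s‖ := by rw [norm_mul, hE, mul_one]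
  rw [h1] at h2
  simp at h2
  linarith

lemma ker_identity (e ρ r : ℝ) (hρ : 0 < ρ) (hr0 : 0 < r) (θ : ℝ) (s w : ℂ) (hs0 : s ≠ 0)
    (hs : ‖s‖ < 1) :
    ((ρ / (Real.pi * r) * (w.im * Real.sin θ) : ℝ) : ℂ) *
      ((e + ρ * (s + s⁻¹)) - ((e + 2 * ρ * Real.cos θ : ℝ) : ℂ))⁻¹ =
    -(1 / (4 * Real.pi * r)) *
      (w * (1 - s * Complex.exp (θ * Complex.I))⁻¹
       - w * (1 - s * Complex.exp (-(θ * Complex.I)))⁻¹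
       - conj w * (1 - s * Complex.exp (θ * Complex.I))⁻¹
       + conj w * (1 - s * Complex.exp (-(θ * Complex.I)))⁻¹) := by
  have hE1 : ‖Complex.exp (θ * Complex.I)‖ = 1 := Complex.norm_exp_ofReal_mul_I θ
  have hE2 : ‖Complex.exp (-(θ * Complex.I))‖ = 1 := by
    have := Complex.norm_exp_ofReal_mul_I (-θ); simpa using this
  have n1 := one_sub_ne hs hE1
  have n2 := one_sub_ne hs hE2
  have hprod : Complex.exp (θ * Complex.I) * Complex.exp (-(θ * Complex.I)) = 1 := by
    rw [← Complex.exp_add]; simp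
  have hcos : (Real.cos θ : ℂ) =
      (Complex.exp (θ * Complex.I) + Complex.exp (-(θ * Complex.I))) / 2 := by
    rw [Complex.ofReal_cos, Complex.cos]; simp
  have hsin : (Real.sin θ : ℂ) =
      (Complex.exp (-(θ * Complex.I)) - Complex.exp (θ * Complex.I)) * Complex.I / 2 := by
    rw [Complex.ofReal_sin, Complex.sin]; simp
  have him : (w.im : ℂ) = (w - conj w) / (2 * Complex.I) := by
    rw [Complex.im_eq_sub_conj]
  set A := Complex.exp (θ * Complex.I)
  set B := Complex.exp (-(θ * Complex.I))
  have hden : ((e + ρ * (s + s⁻¹)) - ((e + 2 * ρ * Real.cos θ : ℝ) : ℂ)) =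
      ρ / s * ((1 - s * A) * (1 - s * B)) := by
    push_cast
    rw [← Complex.ofReal_cos, hcos]
    field_simp
    linear_combination (-ρ * s^2) * hprod
  have hπ : (Real.pi : ℂ) ≠ 0 := by exact_mod_cast Real.pi_ne_zero
  have hrc : (r : ℂ) ≠ 0 := by exact_mod_cast hr0.ne'
  have hρc : (ρ : ℂ) ≠ 0 := by exact_mod_cast hρ.ne'
  have hI := Complex.I_ne_zero
  rw [hden]
  push_cast
  rw [← Complex.ofReal_sin, hsin, him]
  have hab : s * (B - A) = (1 - s * A) - (1 - s * B) := by ring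
  generalize conj w = cw
  generalize 1 - s * A = a at *
  generalize 1 - s * B = b at *
  field_simp
  linear_combination 4 * (w - cw) * hab

/-- the approximating measures for the Herglotz-type representation (Robertson) -/
lemma typ_real (e ρ : ℝ) (hρ : 0 < ρ) {g : ℂ → ℂ}
    (hg : DifferentiableOn ℂ g (Metric.ball 0 1)) (g0 : g 0 = 0)
    (gconj : ∀ ζ : ℂ, ‖ζ‖ < 1 → g (conj ζ) = conj (g ζ))
    (gim : ∀ ζ : ℂ, ‖ζ‖ < 1 → 0 ≤ (g ζ).im * ζ.im) {r : ℝ} (hr0 : 0 < r) (hr1 : r < 1) :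
    ∃ μ : Measure (Set.Icc (e - 2 * ρ) (e + 2 * ρ)), IsFiniteMeasure μ ∧
      ∀ s : ℂ, s ≠ 0 → ‖s‖ < 1 → cau μ (e + ρ * (s + s⁻¹)) = g (r * s) / r := by
  have hnorm : ∀ θ : ℝ, ‖(r : ℂ) * Complex.exp (θ * Complex.I)‖ = r := by
    intro θ
    rw [norm_mul, Complex.norm_exp_ofReal_mul_I, Complex.norm_real, Real.norm_eq_abs,
      abs_of_pos hr0, mul_one]
  have hgc : Continuous fun θ : ℝ => g (r * Complex.exp (θ * Complex.I)) := by
    refine hg.continuousOn.comp_continuous (by fun_prop) ?_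
    intro θ
    rw [mem_ball_zero_iff, hnorm]; exact hr1
  let D : ℝ → ℝ := fun θ => ρ / (Real.pi * r) * ((g (r * Complex.exp (θ * Complex.I))).im * Real.sin θ)
  have hDc : Continuous D :=
    continuous_const.mul ((Complex.continuous_im.comp hgc).mul Real.continuous_sin)
  have hD0 : ∀ θ, 0 ≤ D θ := by
    intro θ
    have h1 := gim (r * Complex.exp (θ * Complex.I)) (by rw [hnorm]; exact hr1)
    rw [Complex.im_ofReal_mul, Complex.exp_ofReal_mul_I_im] at h1
    have h2 : 0 ≤ (g (r * Complex.exp (θ * Complex.I))).im * Real.sin θ := by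
      have : (g (r * Complex.exp (θ * Complex.I))).im * (r * Real.sin θ) =
        r * ((g (r * Complex.exp (θ * Complex.I))).im * Real.sin θ) := by ring
      rw [this] at h1
      exact nonneg_of_mul_nonneg_right h1 hr0
    have := Real.pi_pos
    positivity
  let X : ℝ → Set.Icc (e - 2 * ρ) (e + 2 * ρ) := fun θ => ⟨e + 2 * ρ * Real.cos θ, by
    constructor <;> nlinarith [Real.neg_one_le_cos θ, Real.cos_le_one θ]⟩
  have hXc : Continuous X := by
    apply Continuous.subtype_mk
    fun_prop
  let κ : Measure ℝ := (volume.restrict (Set.Ioc 0 (2 * Real.pi))).withDensity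
    (fun θ => ENNReal.ofReal (D θ))
  have hκ : IsFiniteMeasure κ := by
    apply isFiniteMeasure_withDensity_ofReal
    exact ((hDc.intervalIntegrable 0 (2 * Real.pi)).1).2
  refine ⟨κ.map X, inferInstance, ?_⟩
  intro s hs0 hs
  unfold cau
  have hmeas : Measurable fun x : Set.Icc (e - 2 * ρ) (e + 2 * ρ) =>
      ((e + ρ * (s + s⁻¹) : ℂ) - ((x : ℝ) : ℂ))⁻¹ :=
    (measurable_const.sub (Complex.measurable_ofReal.comp measurable_subtype_coe)).inv
  rw [integral_map hXc.measurable.aemeasurable hmeas.aestronglyMeasurable]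
  rw [integral_withDensity_eq_integral_toReal_smul (hDc.measurable.ennreal_ofReal)
    (Filter.Eventually.of_forall fun _ => ENNReal.ofReal_lt_top)]
  rw [← intervalIntegral.integral_of_le (by positivity)]
  have hcont1 : Continuous fun θ : ℝ => (1 - s * Complex.exp (θ * Complex.I))⁻¹ := by
    refine Continuous.inv₀ (by fun_prop) fun θ => one_sub_ne hs (Complex.norm_exp_ofReal_mul_I θ)
  have hcont2 : Continuous fun θ : ℝ => (1 - s * Complex.exp (-(θ * Complex.I)))⁻¹ := by
    refine Continuous.inv₀ (by fun_prop) fun θ => one_sub_ne hs ?_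
    have := Complex.norm_exp_ofReal_mul_I (-θ); simpa using this
  have hgcc : Continuous fun θ : ℝ => conj (g (r * Complex.exp (θ * Complex.I))) :=
    Complex.continuous_conj.comp hgc
  have e1 : ∀ θ : ℝ, (ENNReal.ofReal (D θ)).toReal •
      ((e + ρ * (s + s⁻¹) : ℂ) - (((X θ : Set.Icc (e - 2 * ρ) (e + 2 * ρ)) : ℝ) : ℂ))⁻¹ =
     -(1 / (4 * Real.pi * r)) *
      (g (r * Complex.exp (θ * Complex.I)) * (1 - s * Complex.exp (θ * Complex.I))⁻¹
       - g (r * Complex.exp (θ * Complex.I)) * (1 - s * Complex.exp (-(θ * Complex.I)))⁻¹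
       - conj (g (r * Complex.exp (θ * Complex.I))) * (1 - s * Complex.exp (θ * Complex.I))⁻¹
       + conj (g (r * Complex.exp (θ * Complex.I))) * (1 - s * Complex.exp (-(θ * Complex.I)))⁻¹) := by
    intro θ
    rw [ENNReal.toReal_ofReal (hD0 θ), ← ker_identity e ρ r hρ hr0 θ s _ hs0 hs,
      Complex.real_smul]
  simp_rw [e1]
  rw [intervalIntegral.integral_const_mul, intervalIntegral.integral_add,
    intervalIntegral.integral_sub, intervalIntegral.integral_sub]
  rotate_left
  · exact (hgc.mul hcont1).intervalIntegrable _ _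
  · exact (hgc.mul hcont2).intervalIntegrable _ _
  · exact ((hgc.mul hcont1).sub (hgc.mul hcont2)).intervalIntegrable _ _
  · exact (hgcc.mul hcont1).intervalIntegrable _ _
  · exact (((hgc.mul hcont1).sub (hgc.mul hcont2)).sub (hgcc.mul hcont1)).intervalIntegrable _ _
  · exact (hgcc.mul hcont2).intervalIntegrable _ _
  have hsc : ‖conj s‖ < 1 := by rwa [Complex.norm_conj]
  have c3 : ∫ θ in (0:ℝ)..2 * Real.pi, conj (g (r * Complex.exp (θ * Complex.I))) *
      (1 - s * Complex.exp (θ * Complex.I))⁻¹ = 2 * Real.pi * g (r * s) := by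
    have h := congrArg (fun z : ℂ => conj z) (circ_one hg hr0 hr1 hsc)
    rw [← intervalIntegral.intervalIntegral_conj] at h
    have h2 : conj (2 * Real.pi * g (r * conj s)) = 2 * Real.pi * g (r * s) := by
      have : (r : ℂ) * conj s = conj ((r : ℂ) * s) := by simp
      rw [this, gconj]
      · simp only [map_mul, Complex.conj_ofReal, Complex.conj_conj]
        rw [Complex.conj_ofNat]
      · rw [norm_mul, Complex.norm_real, Real.norm_eq_abs, abs_of_pos hr0]; nlinarith [norm_nonneg s]
    rw [h2] at h
    rw [← h]
    congr 1
    ext θ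
    simp [← Complex.exp_conj]
  have c4 : ∫ θ in (0:ℝ)..2 * Real.pi, conj (g (r * Complex.exp (θ * Complex.I))) *
      (1 - s * Complex.exp (-(θ * Complex.I)))⁻¹ = 0 := by
    have h := congrArg (fun z : ℂ => conj z) (circ_two hg g0 hr0 hr1 hsc)
    rw [← intervalIntegral.intervalIntegral_conj, map_zero] at h
    rw [← h]
    congr 1
    ext θ
    simp [← Complex.exp_conj]
  rw [circ_one hg hr0 hr1 hs, circ_two hg g0 hr0 hr1 hs, c3, c4]
  have hπ : (Real.pi : ℂ) ≠ 0 := by exact_mod_cast Real.pi_ne_zero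
  have hrc : (r : ℂ) ≠ 0 := by exact_mod_cast hr0.ne'
  field_simp
  ring

end CSK

namespace CSK
open Topology ComplexConjugate Bornology

/-- functions that are Cauchy transforms of probability measures on `[α, β]` -/
structure Cl (α β : ℝ) (f : ℂ → ℂ) : Prop where
  diff : DifferentiableOn ℂ f (Jc α β)
  symm : ∀ z ∈ Jc α β, f (conj z) = conj (f z)
  im : ∀ z : ℂ, 0 < z.im → (f z).im ≤ 0
  lim : Tendsto (fun z => z * f z) (cobounded ℂ) (𝓝 1)

/-- Joukowski map -/
def zz (e ρ : ℝ) (s : ℂ) : ℂ := e + ρ * (s + s⁻¹)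

lemma zz_im (e ρ : ℝ) (s : ℂ) : (zz e ρ s).im = ρ * (s.im * (1 - (Complex.normSq s)⁻¹)) := by
  simp only [zz, Complex.add_im, Complex.ofReal_im, Complex.im_ofReal_mul, Complex.inv_im]
  ring

lemma normSq_inv_gt {s : ℂ} (hs0 : s ≠ 0) (hs : ‖s‖ < 1) : 1 < (Complex.normSq s)⁻¹ := by
  have h1 : 0 < Complex.normSq s := Complex.normSq_pos.mpr hs0
  have h2 : Complex.normSq s < 1 := by
    rw [Complex.normSq_eq_norm_sq]; nlinarith [norm_nonneg s]
  exact (one_lt_inv₀ h1).mpr h2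

lemma zz_mem {e ρ : ℝ} (hρ : 0 < ρ) {s : ℂ} (hs0 : s ≠ 0) (hs : ‖s‖ < 1) :
    zz e ρ s ∈ Jc (e - 2 * ρ) (e + 2 * ρ) := by
  by_cases him : s.im = 0
  · right
    have h1 : s = (s.re : ℂ) := by apply Complex.ext <;> simp [him]
    have hx0 : s.re ≠ 0 := by
      intro h; apply hs0; rw [h1, h]; simp
    have hx1 : |s.re| < 1 := by
      rw [h1, Complex.norm_real] at hs; exact hs
    have h2 : (zz e ρ s).re = e + ρ * (s.re + s.re⁻¹) := by
      rw [h1]; simp only [zz]; norm_cast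
    rw [h2]
    rw [abs_lt] at hx1
    generalize s.re = x at *
    rcases lt_or_gt_of_ne hx0 with h | h
    · left
      have : x + x⁻¹ < -2 := by
        have h3 : x * x⁻¹ = 1 := mul_inv_cancel₀ hx0
        have h4 : x⁻¹ < 0 := inv_lt_zero.mpr h
        have h5 : x + x⁻¹ + 2 = (x + 1)^2 * x⁻¹ := by linear_combination (-x - 2) * h3
        have h6 : 0 < (x+1)^2 := by apply pow_pos; linarith
        nlinarith
      nlinarith
    · right
      have : 2 < x + x⁻¹ := by
        have h3 : x * x⁻¹ = 1 := mul_inv_cancel₀ hx0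
        have h4 : 0 < x⁻¹ := inv_pos.mpr h
        have h5 : x + x⁻¹ - 2 = (1 - x)^2 * x⁻¹ := by linear_combination (-x + 2) * h3
        have h6 : 0 < (1 - x)^2 := by apply pow_pos; linarith
        nlinarith
      nlinarith
  · left
    rw [zz_im]
    have := normSq_inv_gt hs0 hs
    have h2 : (1 - (Complex.normSq s)⁻¹) ≠ 0 := by linarith
    positivity

lemma zz_surj {e ρ : ℝ} (hρ : 0 < ρ) {z : ℂ} (hz : z ∈ Jc (e - 2 * ρ) (e + 2 * ρ)) :
    ∃ s : ℂ, s ≠ 0 ∧ ‖s‖ < 1 ∧ zz e ρ s = z := by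
  have hρc : (ρ : ℂ) ≠ 0 := by exact_mod_cast hρ.ne'
  obtain ⟨s, hs⟩ := exists_quadratic_eq_zero (a := (1:ℂ)) (b := -((z - e) / ρ)) (c := 1)
    one_ne_zero (IsAlgClosed.exists_eq_mul_self _)
  have hs0 : s ≠ 0 := by
    rintro rfl; simp at hs
  have hzs : zz e ρ s = z := by
    unfold zz
    field_simp
    field_simp at hs
    linear_combination hs
  rcases lt_trichotomy ‖s‖ 1 with h | h | h
  · exact ⟨s, hs0, h, hzs⟩
  · exfalso
    have h1 : Complex.normSq s = 1 := by rw [Complex.normSq_eq_norm_sq, h]; norm_num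
    have him : (zz e ρ s).im = 0 := by rw [zz_im, h1]; simp
    have hre : (zz e ρ s).re = e + ρ * (2 * s.re) := by
      simp only [zz, Complex.add_re, Complex.ofReal_re, Complex.re_ofReal_mul, Complex.inv_re, h1]
      ring
    have h3 := Complex.abs_re_le_norm s
    rw [h, abs_le] at h3
    rw [hzs] at him hre
    rcases hz with h4 | h4 | h4
    · exact h4 him
    · rw [hre] at h4; nlinarith
    · rw [hre] at h4; nlinarith
  · refine ⟨s⁻¹, inv_ne_zero hs0, ?_, ?_⟩
    · rw [norm_inv]; exact inv_lt_one_of_one_lt₀ h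
    · rw [← hzs]; simp only [zz, inv_inv]; ring

lemma zz_mul (e ρ : ℝ) {s : ℂ} (hs0 : s ≠ 0) : zz e ρ s * s = e * s + ρ * (s * s + 1) := by
  unfold zz; field_simp

lemma zz_mul_lim (e ρ : ℝ) : Tendsto (fun s => zz e ρ s * s) (𝓝[≠] 0) (𝓝 (ρ : ℂ)) := by
  have h : Tendsto (fun s : ℂ => (e : ℂ) * s + ρ * (s * s + 1)) (𝓝 0) (𝓝 (e * 0 + ρ * (0 * 0 + 1))) := by
    apply Continuous.tendsto; fun_prop
  simp only [mul_zero, zero_add, mul_one] at h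
  refine (h.mono_left nhdsWithin_le_nhds).congr' ?_
  filter_upwards [self_mem_nhdsWithin] with s hs
  rw [zz_mul e ρ hs]

lemma zz_cobounded {e ρ : ℝ} (hρ : 0 < ρ) : Tendsto (zz e ρ) (𝓝[≠] 0) (cobounded ℂ) := by
  have h1 := zz_mul_lim e ρ
  have h2 : Tendsto (fun s : ℂ => s⁻¹) (𝓝[≠] 0) (cobounded ℂ) := tendsto_inv₀_nhdsNE_zero
  rw [← tendsto_norm_atTop_iff_cobounded] at h2 ⊢
  have h3 : Tendsto (fun s : ℂ => ‖zz e ρ s * s‖ * ‖s⁻¹‖) (𝓝[≠] 0) atTop := by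
    refine Tendsto.pos_mul_atTop (C := ρ) hρ ?_ h2
    have := h1.norm
    rwa [Complex.norm_real, Real.norm_eq_abs, abs_of_pos hρ] at this
  refine h3.congr' ?_
  filter_upwards [self_mem_nhdsWithin] with s hs
  rw [← norm_mul]
  congr 1
  have : s ≠ 0 := hs
  field_simp

lemma Cl.tendsto_zero {α β : ℝ} {f : ℂ → ℂ} (hf : Cl α β f) : Tendsto f (cobounded ℂ) (𝓝 0) := by
  have h2 : Tendsto (fun z : ℂ => z⁻¹) (cobounded ℂ) (𝓝 0) := tendsto_inv₀_cobounded
  have h := hf.lim.mul h2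
  rw [mul_zero] at h
  refine h.congr' ?_
  have hlarge : ∀ᶠ z : ℂ in cobounded ℂ, 1 ≤ ‖z‖ :=
    tendsto_norm_cobounded_atTop.eventually_ge_atTop _
  filter_upwards [hlarge] with z hz
  have : z ≠ 0 := by rw [← norm_pos_iff]; linarith
  field_simp

theorem herglotz_aux {e ρ : ℝ} (hρ : 0 < ρ) {f : ℂ → ℂ} (hf : Cl (e - 2 * ρ) (e + 2 * ρ) f) :
    ∃ μ : ProbabilityMeasure (Set.Icc (e - 2 * ρ) (e + 2 * ρ)),
      ∀ z ∈ Jc (e - 2 * ρ) (e + 2 * ρ),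
        cau (μ : Measure (Set.Icc (e - 2 * ρ) (e + 2 * ρ))) z = f z := by
  classical
  let g : ℂ → ℂ := fun s => if s = 0 then 0 else f (zz e ρ s)
  have g0 : g 0 = 0 := by simp [g]
  have gne : ∀ s, s ≠ 0 → g s = f (zz e ρ s) := fun s hs => by simp [g, hs]
  have hρc : (ρ : ℂ) ≠ 0 := by exact_mod_cast hρ.ne'
  have hgd : DifferentiableOn ℂ g (Metric.ball 0 1) := by
    rw [← Complex.differentiableOn_compl_singleton_and_continuousAt_iff
      (Metric.ball_mem_nhds (0:ℂ) one_pos)]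
    constructor
    · have : DifferentiableOn ℂ (fun s => f (zz e ρ s)) (Metric.ball 0 1 \ {0}) := by
        refine hf.diff.comp (t := Jc (e - 2 * ρ) (e + 2 * ρ)) ?_ ?_
        · unfold zz
          refine (differentiableOn_const _).add ((differentiableOn_const _).mul
            (differentiableOn_id.add (DifferentiableOn.inv differentiableOn_id ?_)))
          intro s hs; exact hs.2
        · intro s hs
          exact zz_mem hρ hs.2 (by simpa using hs.1)
      refine this.congr ?_
      intro s hs
      exact gne s hs.2
    · rw [continuousAt_iff_punctured_nhds, g0]
      refine (hf.tendsto_zero.comp (zz_cobounded (e := e) hρ)).congr' ?_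
      filter_upwards [self_mem_nhdsWithin] with s hs
      exact (gne s hs).symm
  have zzconj : ∀ s : ℂ, zz e ρ (conj s) = conj (zz e ρ s) := by
    intro s; simp [zz]
  have gconj : ∀ ζ : ℂ, ‖ζ‖ < 1 → g (conj ζ) = conj (g ζ) := by
    intro s hs
    by_cases h : s = 0
    · subst h; simp [g0]
    · rw [gne s h, gne _ (by simpa using h), zzconj, hf.symm _ (zz_mem hρ h hs)]
  have gpos : ∀ ζ : ℂ, ‖ζ‖ < 1 → 0 < ζ.im → 0 ≤ (g ζ).im := by
    intro s hs him
    have h : s ≠ 0 := by rintro rfl; simp at him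
    rw [gne s h]
    have h1 := hf.symm _ (zz_mem (e := e) hρ h hs)
    have h2 : 0 < (conj (zz e ρ s)).im := by
      rw [Complex.conj_im, zz_im]
      have := normSq_inv_gt h hs
      have h3 : 0 < ρ * (s.im * ((Complex.normSq s)⁻¹ - 1)) := by
        have : 0 < (Complex.normSq s)⁻¹ - 1 := by linarith
        positivity
      linarith
    have h3 := hf.im _ h2
    rw [h1, Complex.conj_im] at h3
    linarith
  have gim : ∀ ζ : ℂ, ‖ζ‖ < 1 → 0 ≤ (g ζ).im * ζ.im := by
    intro s hs
    rcases lt_trichotomy s.im 0 with h | h | h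
    · have := gpos (conj s) (by simpa using hs) (by simpa using h)
      rw [gconj s hs, Complex.conj_im] at this
      nlinarith
    · simp [h]
    · exact mul_nonneg (gpos s hs h) h.le
  -- approximating measures
  have hr : ∀ n : ℕ, ∃ μ : ProbabilityMeasure (Set.Icc (e - 2 * ρ) (e + 2 * ρ)),
      ∀ s : ℂ, s ≠ 0 → ‖s‖ < 1 → cau (μ : Measure (Set.Icc (e - 2 * ρ) (e + 2 * ρ))) (zz e ρ s) =
        g (((1 - 1 / ((n:ℝ) + 2) : ℝ) : ℂ) * s) / ((1 - 1 / ((n:ℝ) + 2) : ℝ) : ℂ) := by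
    intro n
    have hr0 : (0:ℝ) < 1 - 1 / ((n:ℝ) + 2) := by
      rw [sub_pos, div_lt_one (by positivity)]; linarith [(Nat.cast_nonneg n : (0:ℝ) ≤ n)]
    have hr1 : (1:ℝ) - 1 / ((n:ℝ) + 2) < 1 := by
      have : 0 < 1 / ((n:ℝ) + 2) := by positivity
      linarith
    generalize (1:ℝ) - 1 / ((n:ℝ) + 2) = r at *
    have hrc : (r : ℂ) ≠ 0 := by exact_mod_cast hr0.ne'
    obtain ⟨μ, hfin, hμ⟩ := typ_real e ρ hρ hgd g0 gconj gim hr0 hr1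
    have hl1 := (cau_lim μ).comp (zz_cobounded (e := e) hρ)
    have hrt : Tendsto (fun s : ℂ => (r : ℂ) * s) (𝓝[≠] 0) (𝓝[≠] 0) := by
      apply tendsto_nhdsWithin_of_tendsto_nhds_of_eventually_within
      · have : Tendsto (fun s : ℂ => (r : ℂ) * s) (𝓝 0) (𝓝 (r * 0)) := by
          apply Continuous.tendsto; fun_prop
        rw [mul_zero] at this
        exact this.mono_left nhdsWithin_le_nhds
      · filter_upwards [self_mem_nhdsWithin] with s hs
        exact mul_ne_zero hrc hs
    have hl2 : Tendsto (fun s : ℂ => (zz e ρ (r * s) * f (zz e ρ (r * s))) *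
        ((zz e ρ s * s) / (zz e ρ (r * s) * (r * s)))) (𝓝[≠] 0) (𝓝 (1 * (ρ / ρ))) :=
      ((hf.lim.comp (zz_cobounded (e := e) hρ)).comp hrt).mul
        ((zz_mul_lim e ρ).div ((zz_mul_lim e ρ).comp hrt) hρc)
    rw [div_self hρc, one_mul] at hl2
    have hev : ∀ᶠ s : ℂ in 𝓝[≠] 0, (zz e ρ (r * s) * f (zz e ρ (r * s))) *
        ((zz e ρ s * s) / (zz e ρ (r * s) * (r * s))) = zz e ρ s * cau μ (zz e ρ s) := by
      have hb : ∀ᶠ s : ℂ in 𝓝[≠] 0, s ∈ Metric.ball (0:ℂ) 1 :=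
        nhdsWithin_le_nhds (Metric.ball_mem_nhds _ one_pos)
      have hnz : ∀ᶠ s : ℂ in 𝓝[≠] 0, zz e ρ (r * s) * (r * s) ≠ 0 :=
        ((zz_mul_lim e ρ).comp hrt).eventually_ne hρc
      filter_upwards [self_mem_nhdsWithin, hb, hnz] with s hs hs1 hn
      have hs0 : s ≠ 0 := hs
      have e1 := hμ s hs0 (by simpa using hs1)
      change cau μ (zz e ρ s) = _ at e1
      rw [e1, gne _ (mul_ne_zero hrc hs0)]
      have hn' : zz e ρ (r * s) ≠ 0 := left_ne_zero_of_mul hn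
      field_simp
    have hmass := tendsto_nhds_unique (hl2.congr' hev) hl1
    have hprob : IsProbabilityMeasure μ := by
      constructor
      have : μ.real Set.univ = 1 := by exact_mod_cast hmass.symm
      rw [Measure.real, ENNReal.toReal_eq_one_iff] at this
      exact this
    exact ⟨⟨μ, hprob⟩, fun s hs0 hs => hμ s hs0 hs⟩
  choose μ hμ using hr
  obtain ⟨ν, hν⟩ := cau_compact μ
  refine ⟨ν, fun z hz => hν z hz _ ?_⟩
  obtain ⟨s, hs0, hs, rfl⟩ := zz_surj hρ hz
  simp_rw [hμ _ s hs0 hs]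
  have hrl : Tendsto (fun n : ℕ => ((1 - 1 / ((n:ℝ) + 2) : ℝ) : ℂ)) atTop (𝓝 1) := by
    have h1 : Tendsto (fun n : ℕ => (1 - 1 / ((n:ℝ) + 2) : ℝ)) atTop (𝓝 (1 - 0)) := by
      refine tendsto_const_nhds.sub ?_
      refine Tendsto.div_atTop tendsto_const_nhds ?_
      exact tendsto_atTop_add_const_right _ _ tendsto_natCast_atTop_atTop
    rw [sub_zero] at h1
    exact_mod_cast (Complex.continuous_ofReal.tendsto 1).comp h1
  have hgs : ContinuousAt g s :=
    (hgd.differentiableAt (Metric.isOpen_ball.mem_nhds (by simpa using hs))).continuousAt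
  have h1 : Tendsto (fun n : ℕ => g (((1 - 1 / ((n:ℝ) + 2) : ℝ) : ℂ) * s)) atTop (𝓝 (g s)) := by
    refine hgs.tendsto.comp ?_
    have := hrl.mul_const s
    rwa [one_mul] at this
  have h2 := h1.div hrl one_ne_zero
  rw [div_one, gne s hs0] at h2
  exact h2

/-- Herglotz / Stieltjes representation -/
theorem herglotz {α β : ℝ} (hαβ : α < β) {f : ℂ → ℂ} (hf : Cl α β f) :
    ∃ μ : ProbabilityMeasure (Set.Icc α β),
      ∀ z ∈ Jc α β, cau (μ : Measure (Set.Icc α β)) z = f z := by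
  obtain ⟨e, ρ, hρ, rfl, rfl⟩ : ∃ e ρ : ℝ, 0 < ρ ∧ e - 2 * ρ = α ∧ e + 2 * ρ = β :=
    ⟨(α + β) / 2, (β - α) / 4, by linarith, by ring, by ring⟩
  exact herglotz_aux hρ hf

end CSK

namespace CSK
open Topology ComplexConjugate Bornology

lemma cau_dirac {α β : ℝ} (x : Set.Icc α β) (z : ℂ) :
    cau (Measure.dirac x) z = (z - ((x : ℝ) : ℂ))⁻¹ := by
  unfold cau
  rw [integral_dirac]

lemma cau_lim_prob {α β : ℝ} (μ : Measure (Set.Icc α β)) [IsProbabilityMeasure μ] :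
    Tendsto (fun z => z * cau μ z) (cobounded ℂ) (𝓝 1) := by
  simpa using cau_lim μ

lemma cau_tendsto_zero {α β : ℝ} (μ : Measure (Set.Icc α β)) [IsProbabilityMeasure μ] :
    Tendsto (cau μ) (cobounded ℂ) (𝓝 0) := by
  have h1 := (cau_lim_prob μ).mul (tendsto_inv₀_cobounded (α := ℂ))
  simp only [mul_zero] at h1
  refine h1.congr' ?_
  filter_upwards [eventually_ne_cobounded (0:ℂ)] with z hz
  field_simp

/-- fixed points of Nevanlinna-type maps are Cauchy transforms -/
lemma iter {α β R M : ℝ} (hαβ : α < β) (h0 : (0:ℝ) ∈ Set.Icc α β)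
    (hR : ∀ x ∈ Set.Icc α β, |x| ≤ R) (hR0 : 0 < R) (hM : 1 ≤ M * R) (Φ : ℂ → ℂ → ℂ)
    (hΦ : ∀ μ : ProbabilityMeasure (Set.Icc α β),
      (∀ z : ℂ, R < ‖z‖ → ‖cau (μ : Measure (Set.Icc α β)) z‖ ≤ M) →
      Cl α β (fun z => Φ z (cau (μ : Measure (Set.Icc α β)) z)) ∧
      ∀ z : ℂ, R < ‖z‖ → ‖Φ z (cau (μ : Measure (Set.Icc α β)) z)‖ ≤ M)
    (hL : ∀ z : ℂ, R < ‖z‖ → ∀ m m' : ℂ, ‖m‖ ≤ M → ‖m'‖ ≤ M →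
      ‖Φ z m - Φ z m'‖ ≤ (1/2) * ‖m - m'‖) :
    ∃ μ : ProbabilityMeasure (Set.Icc α β), ∀ z : ℂ, R < ‖z‖ → ∀ m : ℂ, ‖m‖ ≤ M →
      Φ z m = m → cau (μ : Measure (Set.Icc α β)) z = m := by
  let S := {μ : ProbabilityMeasure (Set.Icc α β) //
    ∀ z : ℂ, R < ‖z‖ → ‖cau (μ : Measure (Set.Icc α β)) z‖ ≤ M}
  have step : ∀ μ : S, ∃ ν : S, ∀ z ∈ Jc α β,
      cau (ν.1 : Measure (Set.Icc α β)) z = Φ z (cau (μ.1 : Measure (Set.Icc α β)) z) := by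
    rintro ⟨μ, hμ⟩
    obtain ⟨h1, h2⟩ := hΦ μ hμ
    obtain ⟨ν, hν⟩ := herglotz hαβ h1
    exact ⟨⟨ν, fun z hz => by rw [hν z (Jc_of_norm hR hz)]; exact h2 z hz⟩, hν⟩
  choose F hF using step
  let s0 : S := ⟨⟨Measure.dirac ⟨0, h0⟩, inferInstance⟩, fun z hz => by
    simp only [ProbabilityMeasure.coe_mk]
    rw [cau_dirac]
    simp only [Complex.ofReal_zero, sub_zero, norm_inv]
    rw [inv_le_comm₀ (by linarith) (by by_contra hh; nlinarith)]
    rw [inv_le_iff_one_le_mul₀ (by by_contra hh; nlinarith)]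
    have : 0 < M := by by_contra hh; nlinarith
    nlinarith⟩
  let s : ℕ → S := fun n => F^[n] s0
  obtain ⟨ν, hν⟩ := cau_compact (fun n => (s n).1)
  refine ⟨ν, fun z hz m hm hfix => hν z (Jc_of_norm hR hz) m ?_⟩
  have hb : ∀ n, ‖cau ((s n).1 : Measure (Set.Icc α β)) z - m‖ ≤ (1/2)^n * (2 * M) := by
    intro n
    induction n with
    | zero =>
      have := norm_sub_le (cau ((s 0).1 : Measure (Set.Icc α β)) z) m
      have := (s 0).2 z hz
      simp only [pow_zero]; linarith
    | succ n ih =>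
      have e : s (n+1) = F (s n) := Function.iterate_succ_apply' F n s0
      rw [e, hF _ z (Jc_of_norm hR hz)]
      have := hL z hz _ m ((s n).2 z hz) hm
      rw [hfix] at this
      rw [pow_succ]; linarith
  rw [tendsto_iff_norm_sub_tendsto_zero]
  refine squeeze_zero (fun _ => norm_nonneg _) hb ?_
  have := (tendsto_pow_atTop_nhds_zero_of_lt_one (r := (1/2:ℝ)) (by norm_num) (by norm_num)).mul_const (2*M)
  simpa using this

/-- the representation property -/
def Rep {α β : ℝ} (μ : Measure (Set.Icc α β)) (P : ℝ → ℝ) : Prop :=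
  ∀ᶠ m in 𝓝[≠] (0:ℝ), cau μ ((P m / m : ℝ) : ℂ) = m

lemma rep_large {P : ℝ → ℝ} (hP : ContinuousAt P 0) (h1 : P 0 = 1) (R : ℝ) :
    ∀ᶠ m in 𝓝[≠] (0:ℝ), R < ‖((P m / m : ℝ) : ℂ)‖ := by
  have h2 : Tendsto (fun m => |P m|) (𝓝[≠] (0:ℝ)) (𝓝 1) := by
    have := (hP.tendsto.mono_left (nhdsWithin_le_nhds (s := {0}ᶜ))).abs
    simpa [h1] using this
  have h3 : Tendsto (fun m : ℝ => |m|⁻¹) (𝓝[≠] (0:ℝ)) atTop := by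
    have := tendsto_norm_inv_nhdsNE_zero_atTop (α := ℝ)
    simpa [norm_inv] using this
  have h4 := h2.pos_mul_atTop one_pos h3
  filter_upwards [h4.eventually_gt_atTop R] with m hm
  rw [Complex.norm_real, Real.norm_eq_abs, abs_div, div_eq_mul_inv]
  exact hm

end CSK

namespace CSK
open Topology ComplexConjugate Bornology

lemma im_mul_arg (z u : ℂ) : (z * u).im = ‖z‖ * ‖u‖ * Real.sin (z.arg + u.arg) := by
  rw [Complex.mul_im, Real.sin_add, ← Complex.norm_mul_cos_arg z, ← Complex.norm_mul_cos_arg u,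
    ← Complex.norm_mul_sin_arg z, ← Complex.norm_mul_sin_arg u]
  ring

lemma arg_pos_of_im {z : ℂ} (hz : 0 < z.im) : 0 < z.arg ∧ z.arg < Real.pi := by
  constructor
  · rcases (Complex.arg_nonneg_iff.mpr hz.le).lt_or_eq with h | h
    · exact h
    · rw [eq_comm, Complex.arg_eq_zero_iff] at h
      exact absurd h.2 hz.ne'
  · exact Complex.arg_lt_pi_iff.mpr (Or.inr hz.ne')

lemma im_mul_exp_pos {z u l : ℂ} (hz : 0 < z.im) (hu : u.im < 0) (hzu : (z * u).im ≤ 0)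
    (h0 : 0 ≤ l.im) (h1 : l.im < Real.pi + u.arg) : 0 < (z * Complex.exp l).im := by
  obtain ⟨a1, a2⟩ := arg_pos_of_im hz
  have b1 : u.arg < 0 := Complex.arg_neg_iff.mpr hu
  have b2 := Complex.neg_pi_lt_arg u
  have hsum : z.arg + u.arg ≤ 0 := by
    by_contra hc
    push Not at hc
    have := Real.sin_pos_of_pos_of_lt_pi hc (by linarith)
    rw [im_mul_arg] at hzu
    have hz0 : 0 < ‖z‖ := norm_pos_iff.mpr (by rintro rfl; simp at hz)
    have hu0 : 0 < ‖u‖ := norm_pos_iff.mpr (by rintro rfl; simp at hu)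
    have : 0 < ‖z‖ * ‖u‖ * Real.sin (z.arg + u.arg) := by positivity
    linarith
  have hz0 : z ≠ 0 := by rintro rfl; simp at hz
  have e : z * Complex.exp l = Complex.exp (Complex.log z + l) := by
    rw [Complex.exp_add, Complex.exp_log hz0]
  rw [e, Complex.exp_im]
  refine mul_pos (Real.exp_pos _) (Real.sin_pos_of_pos_of_lt_pi ?_ ?_)
  · simp [Complex.log_im]; linarith
  · simp [Complex.log_im]; linarith

lemma mult_step {R0 : ℝ} (hR0 : 0 < R0) (lam : ProbabilityMeasure (Set.Icc 0 R0)) (P : ℝ → ℝ)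
    (hP : ContinuousAt P 0) (hP0 : P 0 = 1) (hrep : Rep (lam : Measure (Set.Icc 0 R0)) P)
    (l : ℂ → ℂ) (hd : ∀ u, 1 - u ∈ Complex.slitPlane → DifferentiableAt ℂ l u)
    (hconj : ∀ u, 1 - u ∈ Complex.slitPlane → l (conj u) = conj (l u)) (hl0 : l 0 = 0)
    (him : ∀ u : ℂ, u.im < 0 → 0 ≤ (l u).im ∧ (l u).im < Real.pi + u.arg) :
    ∃ R1 > 0, ∃ μ : ProbabilityMeasure (Set.Icc (0:ℝ) R1),
      Rep (μ : Measure (Set.Icc 0 R1)) (fun m => P m * Real.exp (-(l m).re)) := by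
  set g : ℂ → ℂ := fun u => Complex.exp (l u) with hg
  have hgd : ∀ u, 1 - u ∈ Complex.slitPlane → DifferentiableAt ℂ g u := fun u hu => (hd u hu).cexp
  have hopen : IsOpen {u : ℂ | 1 - u ∈ Complex.slitPlane} :=
    Complex.isOpen_slitPlane.preimage (by fun_prop)
  have h0mem : (0:ℂ) ∈ {u : ℂ | 1 - u ∈ Complex.slitPlane} := by simp
  have hgan : AnalyticAt ℂ g 0 := by
    have : DifferentiableOn ℂ g {u : ℂ | 1 - u ∈ Complex.slitPlane} :=
      fun u hu => (hgd u hu).differentiableWithinAt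
    exact this.analyticAt (hopen.mem_nhds h0mem)
  have hg0 : g 0 = 1 := by simp [hg, hl0]
  obtain ⟨K, t, ht, hK⟩ := (hgan.contDiffAt (n := 1)).exists_lipschitzOnWith
  have hsm : ∀ᶠ u in 𝓝 (0:ℂ), ‖g u - 1‖ < 1/2 := by
    have := hgan.continuousAt.tendsto
    rw [hg0, tendsto_iff_norm_sub_tendsto_zero] at this
    exact this.eventually_lt_const (by norm_num)
  obtain ⟨M0, hM0, hball⟩ := Metric.eventually_nhds_iff.mp
    ((hsm.and (hopen.mem_nhds h0mem)).and ht)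
  set M := M0 / 2 with hMd
  have hM : 0 < M := by positivity
  have hMb : ∀ u : ℂ, ‖u‖ ≤ M → ‖g u - 1‖ < 1/2 ∧ 1 - u ∈ Complex.slitPlane ∧ u ∈ t := by
    intro u hu
    have := hball (y := u) (by rw [dist_zero_right]; linarith)
    exact ⟨this.1.1, this.1.2, this.2⟩
  have hgn : ∀ u : ℂ, ‖u‖ ≤ M → 1/2 ≤ ‖g u‖ := by
    intro u hu
    have h1 := (hMb u hu).1
    have h2 := norm_sub_norm_le (1:ℂ) (g u)
    rw [norm_sub_rev] at h2
    simp at h2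
    linarith
  set R : ℝ := 4 / M + 4 * R0 + 32 * K + 1 with hRd
  have hK0 : (0:ℝ) ≤ K := K.2
  have hMi : 0 < 4 / M := by positivity
  have hRpos : 0 < R := by positivity
  have hRb : ∀ x ∈ Set.Icc (0:ℝ) R, |x| ≤ R := fun x hx => by rw [abs_of_nonneg hx.1]; exact hx.2
  have hR0b : ∀ x ∈ Set.Icc (0:ℝ) R0, |x| ≤ R0 := fun x hx => by
    rw [abs_of_nonneg hx.1]; exact hx.2
  have hbig : ∀ z u : ℂ, R < ‖z‖ → ‖u‖ ≤ M → ‖z‖ / 4 ≤ ‖z * g u‖ - R0 := by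
    intro z u hz hu
    rw [norm_mul]
    have := hgn u hu
    nlinarith [norm_nonneg z]
  have hΦb : ∀ z u : ℂ, R < ‖z‖ → ‖u‖ ≤ M → ‖cau (lam : Measure (Set.Icc 0 R0)) (z * g u)‖ ≤ M := by
    intro z u hz hu
    have h1 := hbig z u hz hu
    have h3 : 4 / M < ‖z‖ := by linarith
    have hzp : 0 < ‖z‖ := by linarith
    have h2 := cau_norm hR0b (lam : Measure (Set.Icc 0 R0)) (z := z * g u) (by linarith)
    refine h2.trans ?_
    rw [div_le_iff₀ (by linarith)]
    rw [div_lt_iff₀ hM] at h3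
    nlinarith
  have hit := iter (α := 0) (β := R) (R := R) (M := M) hRpos ⟨le_rfl, hRpos.le⟩ hRb hRpos
    (by
      have : M * (4 / M) = 4 := by field_simp
      nlinarith [mul_nonneg hM.le hR0.le, mul_nonneg hM.le hK0])
    (fun z u => cau (lam : Measure (Set.Icc 0 R0)) (z * g u))
  refine Exists.elim (hit ?_ ?_) (fun μ hμ => ?_)
  rotate_left 2
  · refine ⟨R, hRpos, μ, ?_⟩
    have hcl : ContinuousAt (fun m : ℝ => (l m).re) 0 := by
      have h1 : ContinuousAt l ((0:ℝ):ℂ) := (hd _ (by simp)).continuousAt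
      exact Complex.continuous_re.continuousAt.comp
        (h1.comp (f := fun m : ℝ => (m:ℂ)) Complex.continuous_ofReal.continuousAt)
    have hQ : ContinuousAt (fun m : ℝ => P m * Real.exp (-(l m).re)) 0 :=
      hP.mul (Real.continuous_exp.continuousAt.comp hcl.neg)
    have hQ0 : (fun m : ℝ => P m * Real.exp (-(l m).re)) 0 = 1 := by simp [hP0, hl0]
    have hsmall : ∀ᶠ m in 𝓝[≠] (0:ℝ), |m| < M := by
      apply eventually_nhdsWithin_of_eventually_nhds
      have : Tendsto (fun m : ℝ => |m|) (𝓝 0) (𝓝 0) := by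
        simpa using (continuous_abs (G := ℝ)).tendsto 0
      exact this.eventually_lt_const hM
    filter_upwards [hrep, rep_large hQ hQ0 R, hsmall] with m h1 h2 h3
    have hmn : ‖(m:ℂ)‖ ≤ M := by simpa using h3.le
    apply hμ _ h2 _ hmn
    have hreal : l m = ((l m).re : ℂ) := by
      have := hconj m (hMb _ hmn).2.1
      rw [Complex.conj_ofReal] at this
      exact (Complex.conj_eq_iff_re.mp this.symm).symm
    have e : ((P m * Real.exp (-(l m).re) / m : ℝ) : ℂ) * g m = ((P m / m : ℝ) : ℂ) := by
      simp only [hg]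
      rw [hreal]
      simp only [Complex.ofReal_re]
      rw [← Complex.ofReal_exp, ← Complex.ofReal_mul]
      congr 1
      rw [Real.exp_neg]
      field_simp
    rw [e, h1]
  · intro ν hν
    have hpos : ∀ z : ℂ, 0 < z.im → 0 < (z * g (cau (ν : Measure (Set.Icc 0 R)) z)).im := by
      intro z hz
      have h1 := cau_im_neg (ν : Measure (Set.Icc 0 R)) hz
      have h2 := cau_mul_im le_rfl (ν : Measure (Set.Icc 0 R)) hz
      exact im_mul_exp_pos hz h1 h2 (him _ h1).1 (him _ h1).2
    have hslit_pos : ∀ z : ℂ, 0 < z.im → 1 - cau (ν : Measure (Set.Icc 0 R)) z ∈ Complex.slitPlane := by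
      intro z hz
      have h1 := cau_im_neg (ν : Measure (Set.Icc 0 R)) hz
      exact Or.inr (by simp; exact h1.ne)
    have hgconj : ∀ u, 1 - u ∈ Complex.slitPlane → g (conj u) = conj (g u) := by
      intro u hu
      simp only [hg]
      rw [hconj u hu, Complex.exp_conj]
    have key : ∀ z ∈ Jc 0 R, 1 - cau (ν : Measure (Set.Icc 0 R)) z ∈ Complex.slitPlane ∧
        z * g (cau (ν : Measure (Set.Icc 0 R)) z) ∈ Jc 0 R0 := by
      intro z hz
      rcases lt_trichotomy z.im 0 with h | h | h
      · have h' : 0 < (conj z).im := by simpa using h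
        have e1 := hslit_pos _ h'
        have e2 := hpos _ h'
        rw [cau_conj] at e1 e2
        have e3 : 1 - cau (ν : Measure (Set.Icc 0 R)) z ∈ Complex.slitPlane := by
          rw [Complex.mem_slitPlane_iff] at e1 ⊢
          simpa using e1
        rw [hgconj _ e3, ← map_mul] at e2
        exact ⟨e3, Or.inl (by rw [Complex.conj_im] at e2; linarith)⟩
      · by_cases hn : R < ‖z‖
        · have hb := hν z hn
          refine ⟨(hMb _ hb).2.1, Jc_of_norm hR0b ?_⟩
          have := hbig z _ hn hb
          have : 0 < ‖z‖ := by linarith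
          linarith
        · have hzr : z = (z.re : ℂ) := by apply Complex.ext <;> simp [h]
          have hre : z.re < 0 := by
            rcases hz with h1 | h1 | h1
            · exact absurd h h1
            · exact h1
            · exfalso; apply hn
              exact h1.trans_le (Complex.re_le_norm z)
          have hu1 := cau_neg_of_lt (ν : Measure (Set.Icc 0 R)) hre
          have hu2 := cau_real (ν : Measure (Set.Icc 0 R)) z.re
          rw [← hzr] at hu1 hu2
          have hs : 1 - cau (ν : Measure (Set.Icc 0 R)) z ∈ Complex.slitPlane :=
            Or.inl (by simp; linarith)
          refine ⟨hs, Or.inr (Or.inl ?_)⟩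
          have hreal : l (cau (ν : Measure (Set.Icc 0 R)) z)
              = ((l (cau (ν : Measure (Set.Icc 0 R)) z)).re : ℂ) := by
            have := hconj _ hs
            rw [Complex.conj_eq_iff_im.mpr hu2] at this
            exact (Complex.conj_eq_iff_re.mp this.symm).symm
          simp only [hg]
          rw [hreal, ← Complex.ofReal_exp, hzr, ← Complex.ofReal_mul, Complex.ofReal_re]
          exact mul_neg_of_neg_of_pos hre (Real.exp_pos _)
      · exact ⟨hslit_pos z h, Or.inl (hpos z h).ne'⟩
    refine ⟨⟨?_, ?_, ?_, ?_⟩, fun z hz => hΦb z _ hz (hν z hz)⟩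
    · intro z hz
      obtain ⟨k1, k2⟩ := key z hz
      have d1 := cau_diffAt (ν : Measure (Set.Icc 0 R)) hz
      have d2 := (hgd _ k1).comp z d1
      have d3 := cau_diffAt (lam : Measure (Set.Icc 0 R0)) k2
      exact (DifferentiableAt.comp z d3 (differentiableAt_id.mul d2)).differentiableWithinAt
    · intro z hz
      obtain ⟨k1, k2⟩ := key z hz
      rw [cau_conj, hgconj _ k1, ← map_mul, cau_conj]
    · intro z hz
      exact (cau_im_neg _ (hpos z hz)).le
    · have hu := cau_tendsto_zero (ν : Measure (Set.Icc 0 R))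
      have hgu : Tendsto (fun z => g (cau (ν : Measure (Set.Icc 0 R)) z)) (cobounded ℂ) (𝓝 1) := by
        have := hgan.continuousAt.tendsto.comp hu
        rwa [hg0] at this
      have hev : ∀ᶠ z in cobounded ℂ, R < ‖z‖ := tendsto_norm_cobounded_atTop.eventually_gt_atTop R
      have hw : Tendsto (fun z => z * g (cau (ν : Measure (Set.Icc 0 R)) z)) (cobounded ℂ)
          (cobounded ℂ) := by
        rw [← tendsto_norm_atTop_iff_cobounded]
        have h4 : Tendsto (fun z : ℂ => ‖z‖ / 4) (cobounded ℂ) atTop :=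
          tendsto_norm_cobounded_atTop.atTop_div_const (by norm_num)
        refine tendsto_atTop_mono' _ ?_ h4
        filter_upwards [hev] with z hz
        have := hbig z _ hz (hν z hz)
        linarith
      have h5 := ((cau_lim_prob (lam : Measure (Set.Icc 0 R0))).comp hw).div hgu one_ne_zero
      simp only [div_one] at h5
      refine h5.congr ?_
      intro z
      have : g (cau (ν : Measure (Set.Icc 0 R)) z) ≠ 0 := Complex.exp_ne_zero _
      simp only [Function.comp_apply, Pi.div_apply]
      field_simp
  · intro z hz m m' hm hm'
    have h1 := hbig z m hz hm
    have h2 := hbig z m' hz hm'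
    have hzp : 0 < ‖z‖ := by linarith
    have h3 := cau_lip hR0b (lam : Measure (Set.Icc 0 R0)) (z := z * g m) (w := z * g m')
      (by linarith) (by linarith)
    refine h3.trans ?_
    rw [div_le_iff₀ (by apply mul_pos <;> linarith)]
    have h4 : ‖z * g m - z * g m'‖ ≤ ‖z‖ * (K * ‖m - m'‖) := by
      rw [← mul_sub, norm_mul]
      have := hK.dist_le_mul _ (hMb m hm).2.2 _ (hMb m' hm').2.2
      rw [dist_eq_norm, dist_eq_norm] at this
      gcongr
    refine h4.trans ?_
    have h5 : (‖z‖/4) * (‖z‖/4) ≤ (‖z * g m‖ - R0) * (‖z * g m'‖ - R0) := by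
      gcongr
      linarith
    have h6 : 32 * (K:ℝ) ≤ ‖z‖ := by linarith
    have h7 := norm_nonneg (m - m')
    calc ‖z‖ * (K * ‖m - m'‖) ≤ 1/2 * ‖m-m'‖ * ((‖z‖/4) * (‖z‖/4)) := by
          have : ‖z‖ * ‖m-m'‖ * (32 * (K:ℝ)) ≤ ‖z‖ * ‖m-m'‖ * ‖z‖ := by gcongr
          nlinarith
      _ ≤ _ := by gcongr

end CSK

namespace CSK
open Topology ComplexConjugate Bornology

lemma arg_lt_of {x y : ℂ} (hx : 0 < x.im) (hy : 0 < y.im) (hxy : 0 < (y * conj x).im) :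
    x.arg < y.arg := by
  obtain ⟨a1, a2⟩ := arg_pos_of_im hx
  obtain ⟨b1, b2⟩ := arg_pos_of_im hy
  rw [im_mul_arg, Complex.arg_conj, if_neg (by linarith)] at hxy
  by_contra hc
  push Not at hc
  have h1 := Real.sin_nonpos_of_nonpos_of_neg_pi_le (x := y.arg + -x.arg) (by linarith) (by linarith)
  have : ‖y‖ * ‖conj x‖ * Real.sin (y.arg + -x.arg) ≤ 0 :=
    mul_nonpos_of_nonneg_of_nonpos (by positivity) h1
  linarith

lemma arg_one_sub {u : ℂ} (hu : u.im < 0) {s : ℝ} (hs0 : 0 ≤ s) (hs1 : s < 1) :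
    0 ≤ (1 - s * u).arg ∧ (1 - s * u).arg ≤ (1 - u).arg := by
  have h1 : 0 < (1 - u).im := by simpa using hu
  rcases hs0.lt_or_eq with h | h
  · have h2 : 0 < (1 - s * u).im := by simp; nlinarith
    refine ⟨(arg_pos_of_im h2).1.le, (arg_lt_of h2 h1 ?_).le⟩
    simp [Complex.mul_im]
    nlinarith
  · subst h
    simp
    exact hu.le

lemma arg_one_sub_lt {u : ℂ} (hu : u.im < 0) : (1 - u).arg < Real.pi + u.arg := by
  have h1 : 0 < (1 - u).im := by simpa using hu
  have h2 : 0 < (-u).im := by simpa using hu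
  have h3 : (-u).arg = u.arg + Real.pi := Complex.arg_neg_eq_arg_add_pi_of_im_neg hu
  have := arg_lt_of h1 h2 (by simp [Complex.mul_im]; linarith)
  linarith

/-- basic logarithmic building block -/
def lg (s : ℝ) (u : ℂ) : ℂ := Complex.log (1 - u) - Complex.log (1 - s * u)

lemma slit_s {s : ℝ} (hs0 : 0 ≤ s) (hs1 : s < 1) {u : ℂ} (hu : 1 - u ∈ Complex.slitPlane) :
    1 - s * u ∈ Complex.slitPlane := by
  rw [Complex.mem_slitPlane_iff] at hu ⊢
  simp at hu ⊢
  rcases hs0.lt_or_eq with h | h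
  · rcases hu with hu | hu
    · left
      nlinarith
    · right; exact ⟨h.ne', hu⟩
  · left; subst h; simp

lemma lg_diff {s : ℝ} (hs0 : 0 ≤ s) (hs1 : s < 1) {u : ℂ} (hu : 1 - u ∈ Complex.slitPlane) :
    DifferentiableAt ℂ (lg s) u := by
  have h1 : DifferentiableAt ℂ (fun u : ℂ => Complex.log (1 - u)) u :=
    DifferentiableAt.clog (by fun_prop) hu
  have h2 : DifferentiableAt ℂ (fun u : ℂ => Complex.log (1 - s * u)) u :=
    DifferentiableAt.clog (by fun_prop) (slit_s hs0 hs1 hu)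
  exact h1.sub h2

lemma log_conj_slit {z : ℂ} (hz : z ∈ Complex.slitPlane) :
    Complex.log (conj z) = conj (Complex.log z) :=
  Complex.log_conj z (Complex.slitPlane_arg_ne_pi hz)

lemma lg_conj {s : ℝ} (hs0 : 0 ≤ s) (hs1 : s < 1) {u : ℂ} (hu : 1 - u ∈ Complex.slitPlane) :
    lg s (conj u) = conj (lg s u) := by
  unfold lg
  rw [map_sub, ← log_conj_slit hu, ← log_conj_slit (slit_s hs0 hs1 hu)]
  simp

lemma lg_zero (s : ℝ) : lg s 0 = 0 := by simp [lg]

lemma lg_im {s : ℝ} (hs0 : 0 ≤ s) (hs1 : s < 1) {u : ℂ} (hu : u.im < 0) :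
    0 ≤ (lg s u).im ∧ (lg s u).im ≤ (1 - u).arg := by
  obtain ⟨h1, h2⟩ := arg_one_sub hu hs0 hs1
  simp only [lg, Complex.sub_im, Complex.log_im]
  constructor <;> linarith

lemma lg_real {s : ℝ} {u : ℝ} (hu : 0 < 1 - u) (hsu : 0 < 1 - s * u) :
    lg s u = ((Real.log (1 - u) - Real.log (1 - s * u) : ℝ) : ℂ) := by
  unfold lg
  push_cast
  rw [Complex.ofReal_log hu.le, Complex.ofReal_log hsu.le]
  push_cast
  rfl

lemma base_rep {ι : Type*} [Fintype ι] (s q : ι → ℝ) (hs0 : ∀ i, 0 ≤ s i) (hs1 : ∀ i, s i < 1)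
    (hq : ∀ i, 0 ≤ q i) :
    ∃ R > 0, ∃ μ : ProbabilityMeasure (Set.Icc (0:ℝ) R),
      Rep (μ : Measure (Set.Icc 0 R))
        (fun u => Real.exp (-(∑ i, q i * (Real.log (1 - u) - Real.log (1 - s i * u))))) := by
  obtain ⟨N, hN⟩ := exists_nat_ge (∑ i, q i)
  have hN1 : (0:ℝ) < N + 1 := by positivity
  set l : ℂ → ℂ := fun u => ∑ i, ((q i / (N+1) : ℝ) : ℂ) * lg (s i) u with hl
  have hd : ∀ u, 1 - u ∈ Complex.slitPlane → DifferentiableAt ℂ l u := by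
    intro u hu
    exact DifferentiableAt.fun_sum fun i _ => (lg_diff (hs0 i) (hs1 i) hu).const_mul _
  have hconj : ∀ u, 1 - u ∈ Complex.slitPlane → l (conj u) = conj (l u) := by
    intro u hu
    simp only [hl, map_sum, map_mul, Complex.conj_ofReal]
    exact Finset.sum_congr rfl fun i _ => by rw [lg_conj (hs0 i) (hs1 i) hu]
  have hl0 : l 0 = 0 := by simp [hl, lg_zero]
  have him : ∀ u : ℂ, u.im < 0 → 0 ≤ (l u).im ∧ (l u).im < Real.pi + u.arg := by
    intro u hu
    have e : (l u).im = ∑ i, q i / (N+1) * (lg (s i) u).im := by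
      simp only [hl, Complex.im_sum, Complex.im_ofReal_mul]
    have h1 : 0 < (1 - u).im := by simpa using hu
    have hp := (arg_pos_of_im h1).1
    rw [e]
    constructor
    · exact Finset.sum_nonneg fun i _ =>
        mul_nonneg (div_nonneg (hq i) hN1.le) (lg_im (hs0 i) (hs1 i) hu).1
    · refine lt_of_le_of_lt ?_ (arg_one_sub_lt hu)
      calc ∑ i, q i / (N+1) * (lg (s i) u).im ≤ ∑ i, q i / (N+1) * (1 - u).arg :=
            Finset.sum_le_sum fun i _ => mul_le_mul_of_nonneg_left (lg_im (hs0 i) (hs1 i) hu).2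
              (div_nonneg (hq i) hN1.le)
        _ = (∑ i, q i) / (N+1) * (1 - u).arg := by
            rw [Finset.sum_div, Finset.sum_mul]
        _ ≤ 1 * (1 - u).arg := by
            gcongr
            rw [div_le_one hN1]; linarith
        _ = _ := one_mul _
  have hcl : ContinuousAt (fun m : ℝ => (l m).re) 0 := by
    have h1 : ContinuousAt l ((0:ℝ):ℂ) := (hd _ (by simp)).continuousAt
    exact Complex.continuous_re.continuousAt.comp
      (h1.comp (f := fun m : ℝ => (m:ℂ)) Complex.continuous_ofReal.continuousAt)
  have ind : ∀ k : ℕ, ∃ R > 0, ∃ μ : ProbabilityMeasure (Set.Icc (0:ℝ) R),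
      Rep (μ : Measure (Set.Icc 0 R)) (fun m => Real.exp (-(k * (l m).re))) := by
    intro k
    induction k with
    | zero =>
      refine ⟨1, one_pos, ⟨Measure.dirac ⟨0, by simp⟩, inferInstance⟩, ?_⟩
      refine Eventually.of_forall fun m => ?_
      simp only [ProbabilityMeasure.coe_mk]
      rw [cau_dirac]
      simp
    | succ k ih =>
      obtain ⟨R, hR, μ, hμ⟩ := ih
      have hc : ContinuousAt (fun m : ℝ => Real.exp (-(k * (l m).re))) 0 :=
        Real.continuous_exp.continuousAt.comp (continuousAt_const.mul hcl).neg
      obtain ⟨R1, hR1, ν, hν⟩ := mult_step hR μ _ hc (by simp [hl0]) hμ l hd hconj hl0 him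
      refine ⟨R1, hR1, ν, ?_⟩
      convert hν using 2 with m
      rw [← Real.exp_add]
      push_cast
      ring_nf
  obtain ⟨R, hR, μ, hμ⟩ := ind (N+1)
  refine ⟨R, hR, μ, ?_⟩
  have hev : ∀ᶠ u in 𝓝[≠] (0:ℝ), |u| < 1 := by
    apply eventually_nhdsWithin_of_eventually_nhds
    have : Tendsto (fun m : ℝ => |m|) (𝓝 0) (𝓝 0) := by
      simpa using (continuous_abs (G := ℝ)).tendsto 0
    exact this.eventually_lt_const one_pos
  filter_upwards [hμ, hev] with u h1 h2
  rw [← h1]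
  congr 4
  rw [abs_lt] at h2
  have e : (l u).re = ∑ i, q i / (N+1) * (Real.log (1 - u) - Real.log (1 - s i * u)) := by
    simp only [hl, Complex.re_sum, Complex.re_ofReal_mul]
    refine Finset.sum_congr rfl fun i _ => ?_
    rw [lg_real (by linarith) (by nlinarith [hs0 i, hs1 i]), Complex.ofReal_re]
  rw [e, Finset.mul_sum]
  congr 1
  refine Finset.sum_congr rfl fun i _ => ?_
  push_cast
  field_simp

end CSK

namespace CSK
open Topology ComplexConjugate Bornology

lemma Jc_dich {R : ℝ} {z : ℂ} (hz : z ∈ Jc (-R) R) : z.im ≠ 0 ∨ R < ‖z‖ := by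
  rcases hz with h | h | h
  · exact Or.inl h
  · right
    have := Complex.abs_re_le_norm z
    have := neg_le_abs z.re
    linarith
  · right
    exact h.trans_le (Complex.re_le_norm z)

lemma Icc_bd (R : ℝ) : ∀ x ∈ Set.Icc (-R) R, |x| ≤ R := fun _ hx => abs_le.mpr hx

lemma cau_im_ne {α β : ℝ} (μ : Measure (Set.Icc α β)) [IsProbabilityMeasure μ] {z : ℂ}
    (hz : z.im ≠ 0) : (cau μ z).im ≠ 0 ∧ (z - cau μ z).im ≠ 0 := by
  rcases lt_or_gt_of_ne hz with h | h
  · have h1 : 0 < (conj z).im := by simpa using h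
    have h2 := cau_im_neg μ h1
    rw [cau_conj] at h2
    simp at h2
    refine ⟨h2.ne', ?_⟩
    simp; intro hh; linarith
  · have h2 := cau_im_neg μ h
    refine ⟨h2.ne, ?_⟩
    simp; intro hh; linarith

lemma to_m {α β R0 : ℝ} (hR0 : ∀ x ∈ Set.Icc α β, |x| ≤ R0) (hp : 0 < R0)
    (lam : ProbabilityMeasure (Set.Icc α β)) (P : ℝ → ℝ) (hP : ContinuousAt P 0) (hP0 : P 0 = 1)
    (hrep : Rep (lam : Measure (Set.Icc α β)) P) :
    ∃ R > (0:ℝ), ∃ μ : ProbabilityMeasure (Set.Icc (-R) R),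
      Rep (μ : Measure (Set.Icc (-R) R)) (fun m => (1 + m) * P (m / (1 + m))) := by
  set R := R0 + 3 with hRd
  have hRp : 0 < R := by linarith
  set c := cau (lam : Measure (Set.Icc α β)) with hc
  have hJ : ∀ z ∈ Jc (-R) R, z ∈ Jc α β := fun z hz => by
    rcases Jc_dich hz with h | h
    · exact Or.inl h
    · exact Jc_of_norm hR0 (by linarith)
  have hcb : ∀ z : ℂ, R < ‖z‖ → ‖c z‖ ≤ 1/3 := fun z hz => by
    refine (cau_norm hR0 _ (by linarith)).trans ?_
    exact one_div_le_one_div_of_le (by norm_num) (by linarith)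
  have hne : ∀ z ∈ Jc (-R) R, 1 - c z ≠ 0 := fun z hz hh => by
    rcases Jc_dich hz with h | h
    · have h1 := (cau_im_ne (lam : Measure (Set.Icc α β)) h).1
      have h2 := congrArg Complex.im hh
      simp at h2
      exact h1 h2
    · have h1 := hcb z h
      rw [sub_eq_zero] at hh
      rw [← hh] at h1
      norm_num at h1
  have hcl : Cl (-R) R (fun z => c z / (1 - c z)) := by
    refine ⟨?_, ?_, ?_, ?_⟩
    · intro z hz
      have d := cau_diffAt (lam : Measure (Set.Icc α β)) (hJ z hz)
      exact (d.div (d.const_sub 1) (hne z hz)).differentiableWithinAt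
    · intro z hz
      simp only [hc]
      rw [cau_conj]
      simp
    · intro z hz
      have h1 := cau_im_neg (lam : Measure (Set.Icc α β)) hz
      have e : c z / (1 - c z) = (1 - c z)⁻¹ - 1 := by
        have := hne z (Or.inl hz.ne')
        field_simp
        ring
      rw [e, Complex.sub_im, Complex.inv_im]
      simp only [Complex.sub_im, Complex.one_im, zero_sub, neg_neg, sub_zero]
      exact div_nonpos_of_nonpos_of_nonneg h1.le (Complex.normSq_nonneg _)
    · have h1 := (cau_lim_prob (lam : Measure (Set.Icc α β))).div
        ((cau_tendsto_zero (lam : Measure (Set.Icc α β))).const_sub 1) (by simp)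
      simp only [sub_zero, div_one] at h1
      refine h1.congr fun z => ?_
      simp only [Pi.div_apply, hc]
      ring
  obtain ⟨μ, hμ⟩ := herglotz (by linarith) hcl
  refine ⟨R, hRp, μ, ?_⟩
  have ht0 : Tendsto (fun m : ℝ => m / (1 + m)) (𝓝 0) (𝓝 0) := by
    have : ContinuousAt (fun m : ℝ => m / (1 + m)) 0 :=
      ContinuousAt.div (by fun_prop) (by fun_prop) (by simp)
    simpa using this.tendsto
  have hsm : ∀ᶠ m in 𝓝 (0:ℝ), 0 < 1 + m := by
    have : ContinuousAt (fun m : ℝ => 1 + m) 0 := by fun_prop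
    exact this.eventually_const_lt (by simp)
  have ht : Tendsto (fun m : ℝ => m / (1 + m)) (𝓝[≠] 0) (𝓝[≠] 0) := by
    refine tendsto_nhdsWithin_of_tendsto_nhds_of_eventually_within _
      (ht0.mono_left nhdsWithin_le_nhds) ?_
    filter_upwards [self_mem_nhdsWithin, nhdsWithin_le_nhds hsm] with m h1 h2
    exact div_ne_zero h1 (ne_of_gt h2)
  filter_upwards [ht.eventually hrep, ht.eventually (rep_large hP hP0 R), self_mem_nhdsWithin,
    nhdsWithin_le_nhds hsm] with m h1 h2 h3 h4
  have h5 : m ≠ 0 := h3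
  have h6 : (1 + m) ≠ 0 := ne_of_gt h4
  have e : (1 + m) * P (m / (1 + m)) / m = P (m / (1 + m)) / (m / (1 + m)) := by
    field_simp
  rw [e, hμ _ (Jc_of_norm (Icc_bd R) h2)]
  simp only [hc]
  rw [h1]
  have h7 : (1 + (m:ℂ)) ≠ 0 := by exact_mod_cast h6
  push_cast
  field_simp
  ring

lemma affine {α β R0 : ℝ} (hR0 : ∀ x ∈ Set.Icc α β, |x| ≤ R0) (hp : 0 < R0)
    (lam : ProbabilityMeasure (Set.Icc α β)) (P : ℝ → ℝ) (hP : ContinuousAt P 0) (hP0 : P 0 = 1)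
    (hrep : Rep (lam : Measure (Set.Icc α β)) P) (t a : ℝ) :
    ∃ R > (0:ℝ), ∃ μ : ProbabilityMeasure (Set.Icc (-R) R),
      Rep (μ : Measure (Set.Icc (-R) R)) (fun m => P (t * m) + a * m) := by
  set R := |t| * R0 + |a| + 1 with hRd
  have hRp : 0 < R := by positivity
  have hφ : ∀ x : Set.Icc α β, t * x + a ∈ Set.Icc (-R) R := fun x => by
    rw [Set.mem_Icc, ← abs_le]
    refine (abs_add_le _ _).trans ?_
    rw [abs_mul]
    have := hR0 x x.2
    have : |t| * |(x:ℝ)| ≤ |t| * R0 := by gcongr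
    linarith
  let φ : Set.Icc α β → Set.Icc (-R) R := fun x => ⟨t * x + a, hφ x⟩
  have hφc : Continuous φ := by
    apply Continuous.subtype_mk
    fun_prop
  refine ⟨R, hRp, lam.map hφc.measurable.aemeasurable, ?_⟩
  have hcm : ∀ z : ℂ, z ∈ Jc (-R) R → cau ((lam.map hφc.measurable.aemeasurable :
      ProbabilityMeasure (Set.Icc (-R) R)) : Measure (Set.Icc (-R) R)) z
      = ∫ x, (z - (t * ((x : Set.Icc α β) : ℝ) + a))⁻¹ ∂(lam : Measure (Set.Icc α β)) := by
    intro z hz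
    unfold cau
    rw [ProbabilityMeasure.toMeasure_map, integral_map hφc.measurable.aemeasurable
      (cont_ker hz).aestronglyMeasurable]
    refine integral_congr_ae (Eventually.of_forall fun x => ?_)
    simp [φ]
  have hQ : ContinuousAt (fun m => P (t * m) + a * m) 0 := by
    refine ContinuousAt.add ?_ (by fun_prop)
    refine ContinuousAt.comp (g := P) ?_ (by fun_prop)
    simpa using hP
  by_cases ht0 : t = 0
  · filter_upwards [rep_large hQ (by simp [hP0]) R, self_mem_nhdsWithin] with m h1 h2
    have h3 : (m:ℂ) ≠ 0 := by exact_mod_cast h2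
    rw [hcm _ (Jc_of_norm (Icc_bd R) h1)]
    simp only [ht0, zero_mul, hP0]
    push_cast
    simp only [zero_mul, zero_add, integral_const, probReal_univ, one_smul]
    field_simp
    simp
  · have ht : Tendsto (fun m : ℝ => t * m) (𝓝[≠] 0) (𝓝[≠] 0) := by
      refine tendsto_nhdsWithin_of_tendsto_nhds_of_eventually_within _ ?_ ?_
      · have : ContinuousAt (fun m : ℝ => t * m) 0 := by fun_prop
        have h2 := this.tendsto.mono_left (nhdsWithin_le_nhds (s := {0}ᶜ))
        simpa using h2
      · filter_upwards [self_mem_nhdsWithin] with m h1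
        exact mul_ne_zero ht0 h1
    filter_upwards [rep_large hQ (by simp [hP0]) R, self_mem_nhdsWithin, ht.eventually hrep]
      with m h1 h2 h4
    have h3 : (m:ℂ) ≠ 0 := by exact_mod_cast h2
    have h5 : (t:ℂ) ≠ 0 := by exact_mod_cast ht0
    rw [hcm _ (Jc_of_norm (Icc_bd R) h1)]
    have e : ∀ x : Set.Icc α β, ((((P (t * m) + a * m) / m : ℝ) : ℂ) - (t * ((x:ℝ):ℂ) + a))⁻¹
        = (t:ℂ)⁻¹ * (((P (t * m) / (t * m) : ℝ) : ℂ) - ((x:ℝ):ℂ))⁻¹ := by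
      intro x
      rw [← mul_inv]
      congr 1
      push_cast
      field_simp
      ring
    simp only [e]
    rw [integral_const_mul]
    have h6 : ∫ x : Set.Icc α β, (((P (t * m) / (t * m) : ℝ) : ℂ) - ((x:ℝ):ℂ))⁻¹
        ∂(lam : Measure (Set.Icc α β)) = ((t * m : ℝ) : ℂ) := h4
    rw [h6]
    push_cast
    field_simp

lemma semi {α β R0 B : ℝ} (hR0 : ∀ x ∈ Set.Icc α β, |x| ≤ R0) (hp : 0 < R0) (hB : 0 ≤ B)
    (lam : ProbabilityMeasure (Set.Icc α β)) (P : ℝ → ℝ) (hP : ContinuousAt P 0) (hP0 : P 0 = 1)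
    (hrep : Rep (lam : Measure (Set.Icc α β)) P) :
    ∃ R > (0:ℝ), ∃ μ : ProbabilityMeasure (Set.Icc (-R) R),
      Rep (μ : Measure (Set.Icc (-R) R)) (fun m => P m + B * m ^ 2) := by
  set R := R0 + 2 + 2 * B with hRd
  have hRp : 0 < R := by positivity
  have hbig : ∀ z m : ℂ, R < ‖z‖ → ‖m‖ ≤ 1 → 2 + B ≤ ‖z - B * m‖ - R0 := by
    intro z m hz hm
    have h1 := norm_sub_norm_le z (B * m)
    rw [norm_mul, Complex.norm_real, Real.norm_eq_abs, abs_of_nonneg hB] at h1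
    nlinarith
  have hit := iter (α := -R) (β := R) (R := R) (M := 1) (by linarith) ⟨by linarith, by linarith⟩
    (Icc_bd R) hRp (by linarith) (fun z m => cau (lam : Measure (Set.Icc α β)) (z - B * m))
  refine Exists.elim (hit ?_ ?_) (fun μ hμ => ?_)
  · intro ν hν
    set u := cau (ν : Measure (Set.Icc (-R) R)) with hu
    have him : ∀ z : ℂ, 0 < z.im → 0 < (z - B * u z).im := fun z hz => by
      have := cau_im_neg (ν : Measure (Set.Icc (-R) R)) hz
      rw [Complex.sub_im, Complex.im_ofReal_mul]
      nlinarith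
    have hJ : ∀ z ∈ Jc (-R) R, z - B * u z ∈ Jc α β := fun z hz => by
      rcases Jc_dich hz with h | h
      · left
        rcases lt_or_gt_of_ne h with h' | h'
        · have h1 := him (conj z) (by simpa using h')
          simp only [hu] at h1
          rw [cau_conj] at h1
          simp at h1
          simp
          intro hh
          simp only [hu] at hh
          linarith
        · exact (him z h').ne'
      · refine Jc_of_norm hR0 ?_
        have := hbig z _ h (hν z h)
        linarith
    refine ⟨⟨?_, ?_, ?_, ?_⟩, ?_⟩
    · intro z hz
      have d1 := cau_diffAt (ν : Measure (Set.Icc (-R) R)) hz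
      have d2 := cau_diffAt (lam : Measure (Set.Icc α β)) (hJ z hz)
      exact (DifferentiableAt.comp z d2
        (differentiableAt_id.sub (d1.const_mul (B:ℂ)))).differentiableWithinAt
    · intro z hz
      simp only [hu]
      rw [cau_conj (ν : Measure (Set.Icc (-R) R)), ← cau_conj (lam : Measure (Set.Icc α β))]
      simp
    · intro z hz
      exact (cau_im_neg _ (him z hz)).le
    · have h0 := cau_tendsto_zero (ν : Measure (Set.Icc (-R) R))
      have hw : Tendsto (fun z => z - B * u z) (cobounded ℂ) (cobounded ℂ) := by
        rw [← tendsto_norm_atTop_iff_cobounded]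
        have h4 : Tendsto (fun z : ℂ => ‖z‖ + (-B)) (cobounded ℂ) atTop :=
          tendsto_norm_cobounded_atTop.atTop_add tendsto_const_nhds
        refine tendsto_atTop_mono' _ ?_ h4
        have hev : ∀ᶠ z in cobounded ℂ, R < ‖z‖ :=
          tendsto_norm_cobounded_atTop.eventually_gt_atTop R
        filter_upwards [hev] with z hz
        have h1 := norm_sub_norm_le z (B * u z)
        rw [norm_mul, Complex.norm_real, Real.norm_eq_abs, abs_of_nonneg hB] at h1
        have := hν z hz
        nlinarith
      have h5 := ((cau_lim_prob (lam : Measure (Set.Icc α β))).comp hw).add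
        ((h0.const_mul (B:ℂ)).mul ((cau_tendsto_zero (lam : Measure (Set.Icc α β))).comp hw))
      simp only [mul_zero, add_zero] at h5
      refine h5.congr fun z => ?_
      simp only [Function.comp_apply, hu]
      ring
    · intro z hz
      have h1 := hbig z _ hz (hν z hz)
      refine (cau_norm hR0 (lam : Measure (Set.Icc α β)) (by linarith)).trans ?_
      rw [div_le_one (by linarith)]
      linarith
  · intro z hz m m' hm hm'
    have h1 := hbig z m hz hm
    have h2 := hbig z m' hz hm'
    refine (cau_lip hR0 (lam : Measure (Set.Icc α β)) (by linarith) (by linarith)).trans ?_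
    rw [div_le_iff₀ (by apply mul_pos <;> linarith)]
    have e : ‖z - B * m - (z - B * m')‖ = B * ‖m - m'‖ := by
      have : z - B * m - (z - B * m') = -(B * (m - m')) := by ring
      rw [this, norm_neg, norm_mul, Complex.norm_real, Real.norm_eq_abs, abs_of_nonneg hB]
    rw [e]
    have h3 : (2 + B) * (2 + B) ≤ (‖z - B * m‖ - R0) * (‖z - B * m'‖ - R0) := by
      gcongr
      linarith
    have h4 : 2 * B ≤ (‖z - B * m‖ - R0) * (‖z - B * m'‖ - R0) := by nlinarith
    have := norm_nonneg (m - m')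
    nlinarith
  · refine ⟨R, hRp, μ, ?_⟩
    have hQ : ContinuousAt (fun m => P m + B * m ^ 2) 0 := hP.add (by fun_prop)
    have hsmall : ∀ᶠ m in 𝓝[≠] (0:ℝ), |m| < 1 := by
      apply eventually_nhdsWithin_of_eventually_nhds
      have : Tendsto (fun m : ℝ => |m|) (𝓝 0) (𝓝 0) := by
        simpa using (continuous_abs (G := ℝ)).tendsto 0
      exact this.eventually_lt_const one_pos
    filter_upwards [hrep, rep_large hQ (by simp [hP0]) R, hsmall, self_mem_nhdsWithin]
      with m h1 h2 h3 h4
    apply hμ _ h2 _ (by simpa using h3.le)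
    rw [← h1]
    congr 1
    rw [h1]
    have h5 : m ≠ 0 := h4
    rw [← Complex.ofReal_mul, ← Complex.ofReal_sub]
    congr 1
    field_simp
    ring

lemma final {α β R0 : ℝ} (hR0 : ∀ x ∈ Set.Icc α β, |x| ≤ R0) (hp : 0 < R0)
    (lam : ProbabilityMeasure (Set.Icc α β)) (V : ℝ → ℝ) (hV : ContinuousAt V 0) (hV0 : V 0 = 1)
    (hrep : Rep (lam : Measure (Set.Icc α β)) (fun m => V m + m ^ 2)) :
    ∃ R > (0:ℝ), ∃ μ : ProbabilityMeasure (Set.Icc (-R) R), ∀ᶠ m in 𝓝[≠] (0:ℝ),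
      cau (μ : Measure (Set.Icc (-R) R)) (((V m + m ^ 2) / m : ℝ) : ℂ) = ((m / V m : ℝ) : ℂ) := by
  set R := R0 + 1 with hRd
  have hRp : 0 < R := by linarith
  set c := cau (lam : Measure (Set.Icc α β)) with hc
  have hJ : ∀ z ∈ Jc (-R) R, z ∈ Jc α β := fun z hz => by
    rcases Jc_dich hz with h | h
    · exact Or.inl h
    · exact Jc_of_norm hR0 (by linarith)
  have hcb : ∀ z : ℂ, R < ‖z‖ → ‖c z‖ ≤ 1 := fun z hz => by
    refine (cau_norm hR0 _ (by linarith)).trans ?_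
    rw [div_le_one (by linarith)]
    linarith
  have hne : ∀ z ∈ Jc (-R) R, z - c z ≠ 0 := fun z hz hh => by
    rcases Jc_dich hz with h | h
    · have h1 := (cau_im_ne (lam : Measure (Set.Icc α β)) h).2
      have h2 := congrArg Complex.im hh
      rw [Complex.zero_im] at h2
      exact h1 h2
    · have h1 := hcb z h
      rw [sub_eq_zero] at hh
      rw [← hh] at h1
      linarith
  have hcl : Cl (-R) R (fun z => (z - c z)⁻¹) := by
    refine ⟨?_, ?_, ?_, ?_⟩
    · intro z hz
      have d := cau_diffAt (lam : Measure (Set.Icc α β)) (hJ z hz)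
      exact ((differentiableAt_id.sub d).inv (hne z hz)).differentiableWithinAt
    · intro z hz
      simp only [hc]
      rw [cau_conj]
      simp
    · intro z hz
      have h1 := cau_im_neg (lam : Measure (Set.Icc α β)) hz
      rw [Complex.inv_im, Complex.sub_im]
      refine div_nonpos_of_nonpos_of_nonneg ?_ (Complex.normSq_nonneg _)
      simp only [hc]
      linarith
    · have h1 := ((cau_tendsto_zero (lam : Measure (Set.Icc α β))).mul
        (tendsto_inv₀_cobounded (α := ℂ))).const_sub 1
      have h2 := h1.inv₀ (by simp)
      simp only [mul_zero, sub_zero, inv_one] at h2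
      refine h2.congr' ?_
      filter_upwards [eventually_ne_cobounded (0:ℂ)] with z hz
      have : 1 - cau (lam : Measure (Set.Icc α β)) z * z⁻¹ = (z - c z) / z := by
        simp only [hc]
        field_simp
      rw [this, inv_div]
      rfl
  obtain ⟨μ, hμ⟩ := herglotz (by linarith) hcl
  refine ⟨R, hRp, μ, ?_⟩
  have hQ : ContinuousAt (fun m => V m + m ^ 2) 0 := hV.add (by fun_prop)
  filter_upwards [hrep, rep_large hQ (by simp [hV0]) R, self_mem_nhdsWithin] with m h1 h2 h3
  have h5 : m ≠ 0 := h3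
  rw [hμ _ (Jc_of_norm (Icc_bd R) h2)]
  simp only [hc]
  rw [h1, ← Complex.ofReal_sub, ← Complex.ofReal_inv]
  congr 1
  have : (V m + m ^ 2) / m - m = V m / m := by field_simp; ring
  rw [this, inv_div]

end CSK

namespace CSK
open Topology ComplexConjugate Bornology

lemma memV_of {R : ℝ} (hR : 0 < R) (μ : ProbabilityMeasure (Set.Icc (-R) R)) (V : ℝ → ℝ)
    (hV : AnalyticAt ℝ V 0) (hV0 : V 0 = 1)
    (h : ∀ᶠ m in 𝓝[≠] (0:ℝ),
      cau (μ : Measure (Set.Icc (-R) R)) (((V m + m ^ 2) / m : ℝ) : ℂ) = ((m / V m : ℝ) : ℂ)) :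
    memV V := by
  set ν : Measure ℝ := (μ : Measure (Set.Icc (-R) R)).map Subtype.val with hν
  have hIntEq : ∀ F : ℝ → ℝ, ∫ x, F x ∂ν = ∫ x, F ((x : Set.Icc (-R) R) : ℝ)
      ∂(μ : Measure (Set.Icc (-R) R)) := fun F =>
    (MeasurableEmbedding.subtype_coe measurableSet_Icc).integral_map F
  set P : ℝ → ℝ := fun m => V m + m ^ 2 with hPd
  have hVc := hV.continuousAt
  have hPc : ContinuousAt P 0 := hVc.add (by fun_prop)
  have hP0 : P 0 = 1 := by simp [hPd, hV0]
  -- smallness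
  have hsm : ∀ᶠ m in 𝓝 (0:ℝ), |m| * R < 1/4 ∧ 1/2 < P m ∧ 0 < V m := by
    have h1 : ContinuousAt (fun m : ℝ => |m| * R) 0 := by fun_prop
    have e1 := h1.eventually_lt_const (u := 1/4) (by simp)
    have e2 := hPc.eventually_const_lt (u := 1/2) (by rw [hP0]; norm_num)
    have e3 := hVc.eventually_const_lt (u := 0) (by rw [hV0]; norm_num)
    filter_upwards [e1, e2, e3] with m a1 a2 a3 using ⟨a1, a2, a3⟩
  have hpos : ∀ m : ℝ, |m| * R < 1/4 → 1/2 < P m → ∀ x : Set.Icc (-R) R,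
      1/4 < P m - m * x := by
    intro m h1 h2 x
    have h3 : |m * (x:ℝ)| ≤ |m| * R := by
      rw [abs_mul]
      exact mul_le_mul_of_nonneg_left (Icc_bd R _ x.2) (abs_nonneg _)
    have := le_abs_self (m * (x:ℝ))
    linarith
  have hcont : ∀ m : ℝ, |m| * R < 1/4 → 1/2 < P m →
      Continuous fun x : Set.Icc (-R) R => (P m - m * (x:ℝ))⁻¹ := by
    intro m h1 h2
    refine Continuous.inv₀ (by fun_prop) fun x => ?_
    have := hpos m h1 h2 x
    linarith
  have E1 : ∀ᶠ m in 𝓝[≠] (0:ℝ), ∫ x : Set.Icc (-R) R, (P m - m * (x:ℝ))⁻¹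
      ∂(μ : Measure (Set.Icc (-R) R)) = 1 / V m := by
    filter_upwards [h, self_mem_nhdsWithin, nhdsWithin_le_nhds hsm] with m h1 h2 h3
    have hm : m ≠ 0 := h2
    have e : ∀ x : Set.Icc (-R) R, ((((V m + m ^ 2) / m : ℝ) : ℂ) - ((x:ℝ):ℂ))⁻¹
        = ((m * (P m - m * (x:ℝ))⁻¹ : ℝ) : ℂ) := by
      intro x
      rw [← Complex.ofReal_sub, ← Complex.ofReal_inv]
      congr 1
      have h5 : (V m + m ^ 2) / m - (x:ℝ) = (P m - m * (x:ℝ)) / m := by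
        simp only [hPd]; field_simp
      rw [h5, inv_div, div_eq_mul_inv]
    unfold cau at h1
    simp only [e] at h1
    rw [integral_complex_ofReal] at h1
    have h6 := Complex.ofReal_injective h1
    rw [integral_const_mul] at h6
    have hv := h3.2.2.ne'
    apply mul_left_cancel₀ hm
    rw [h6]; ring
  have E2 : ∀ᶠ m in 𝓝[≠] (0:ℝ), ∫ x : Set.Icc (-R) R, (x:ℝ) * (P m - m * (x:ℝ))⁻¹
      ∂(μ : Measure (Set.Icc (-R) R)) = m / V m := by
    filter_upwards [E1, self_mem_nhdsWithin, nhdsWithin_le_nhds hsm] with m h1 h2 h3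
    have hm : m ≠ 0 := h2
    have hv := h3.2.2.ne'
    have e : ∀ x : Set.Icc (-R) R, (x:ℝ) * (P m - m * (x:ℝ))⁻¹
        = m⁻¹ * (P m * (P m - m * (x:ℝ))⁻¹ - 1) := by
      intro x
      have : P m - m * (x:ℝ) ≠ 0 := by
        have := hpos m h3.1 h3.2.1 x
        linarith
      have key := mul_inv_cancel₀ this
      have h7 : P m * (P m - m * (x:ℝ))⁻¹ - 1 = m * ((x:ℝ) * (P m - m * (x:ℝ))⁻¹) := by
        linear_combination key
      rw [h7, ← mul_assoc, inv_mul_cancel₀ hm, one_mul]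
    simp only [e]
    rw [integral_const_mul, integral_sub ((integrable_of_cont _ (hcont m h3.1 h3.2.1)).const_mul _)
      (integrable_const _), integral_const_mul, h1]
    simp only [integral_const, probReal_univ, one_smul, hPd]
    field_simp
    ring
  have DC : ∀ g : Set.Icc (-R) R → ℝ, Continuous g →
      Tendsto (fun m => ∫ x : Set.Icc (-R) R, g x * (P m - m * (x:ℝ))⁻¹
        ∂(μ : Measure (Set.Icc (-R) R))) (𝓝[≠] 0)
        (𝓝 (∫ x, g x ∂(μ : Measure (Set.Icc (-R) R)))) := by
    intro g hg
    refine tendsto_integral_filter_of_dominated_convergence (fun x => |g x| * 4) ?_ ?_ ?_ ?_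
    · filter_upwards [nhdsWithin_le_nhds hsm] with m h3
      exact (hg.mul (hcont m h3.1 h3.2.1)).aestronglyMeasurable
    · filter_upwards [nhdsWithin_le_nhds hsm] with m h3
      refine Eventually.of_forall fun x => ?_
      have h4 := hpos m h3.1 h3.2.1 x
      rw [norm_mul, Real.norm_eq_abs, norm_inv, Real.norm_eq_abs, abs_of_pos (a := P m - m * (x:ℝ)) (by linarith)]
      refine mul_le_mul_of_nonneg_left ?_ (abs_nonneg _)
      rw [inv_le_comm₀ (by linarith) (by norm_num)]
      linarith
    · exact integrable_of_cont _ (by fun_prop)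
    · refine Eventually.of_forall fun x => ?_
      have h1 : ContinuousAt (fun m : ℝ => g x * (P m - m * (x:ℝ))⁻¹) 0 := by
        refine continuousAt_const.mul (ContinuousAt.inv₀ (hPc.sub (by fun_prop)) ?_)
        simp [hP0]
      have h2 := h1.tendsto.mono_left (nhdsWithin_le_nhds (s := {0}ᶜ))
      simpa [hP0] using h2
  have hlimid : Tendsto (fun m => m / V m) (𝓝[≠] (0:ℝ)) (𝓝 0) := by
    have h1 : ContinuousAt (fun m : ℝ => m / V m) 0 :=
      ContinuousAt.div (by fun_prop) hVc (by simp [hV0])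
    have h2 := h1.tendsto.mono_left (nhdsWithin_le_nhds (s := {0}ᶜ))
    simpa using h2
  have hmean : ∫ x : Set.Icc (-R) R, (x:ℝ) ∂(μ : Measure (Set.Icc (-R) R)) = 0 := by
    refine tendsto_nhds_unique (DC (fun x => (x:ℝ)) (by fun_prop)) ?_
    refine hlimid.congr' ?_
    filter_upwards [E2] with m h1
    exact h1.symm
  have hvar : ∫ x : Set.Icc (-R) R, (x:ℝ) ^ 2 ∂(μ : Measure (Set.Icc (-R) R)) = 1 := by
    refine tendsto_nhds_unique (DC (fun x => (x:ℝ) ^ 2) (by fun_prop)) ?_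
    have h1 : ContinuousAt (fun m : ℝ => P m / V m) 0 :=
      ContinuousAt.div hPc hVc (by simp [hV0])
    have h2 := h1.tendsto.mono_left (nhdsWithin_le_nhds (s := {0}ᶜ))
    simp only [hP0, hV0, div_one] at h2
    refine h2.congr' ?_
    filter_upwards [E2, self_mem_nhdsWithin, nhdsWithin_le_nhds hsm] with m h1 h2 h3
    have hm : m ≠ 0 := h2
    have hv := h3.2.2.ne'
    have e : ∀ x : Set.Icc (-R) R, (x:ℝ) ^ 2 * (P m - m * (x:ℝ))⁻¹
        = m⁻¹ * (P m * ((x:ℝ) * (P m - m * (x:ℝ))⁻¹) - (x:ℝ)) := by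
      intro x
      have : P m - m * (x:ℝ) ≠ 0 := by
        have := hpos m h3.1 h3.2.1 x
        linarith
      have key := mul_inv_cancel₀ this
      have h7 : P m * ((x:ℝ) * (P m - m * (x:ℝ))⁻¹) - (x:ℝ)
          = m * ((x:ℝ) ^ 2 * (P m - m * (x:ℝ))⁻¹) := by
        linear_combination (x:ℝ) * key
      rw [h7, ← mul_assoc, inv_mul_cancel₀ hm, one_mul]
    simp only [e]
    have hi1 : Integrable (fun x : Set.Icc (-R) R => (x:ℝ) * (P m - m * (x:ℝ))⁻¹)
        (μ : Measure (Set.Icc (-R) R)) :=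
      integrable_of_cont _ (continuous_subtype_val.mul (hcont m h3.1 h3.2.1))
    rw [integral_const_mul, integral_sub (hi1.const_mul _)
      (integrable_of_cont _ continuous_subtype_val), integral_const_mul, h1, hmean]
    field_simp
    ring
  have hprob : IsProbabilityMeasure ν :=
    Measure.isProbabilityMeasure_map measurable_subtype_coe.aemeasurable
  have hmean' : ∫ x, x ∂ν = 0 := by rw [hIntEq]; exact hmean
  have hvar' : ∫ x, x ^ 2 ∂ν = 1 := by rw [hIntEq]; exact hvar
  refine ⟨ν, ⟨hprob, ⟨R, ?_⟩, ?_, hmean'⟩, hvar', hV, by rw [hV0]; norm_num, ?_⟩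
  · rw [hν, Measure.map_apply measurable_subtype_coe measurableSet_Icc.compl]
    convert measure_empty (μ := (μ : Measure (Set.Icc (-R) R)))
    ext x
    simp
  · intro a ha
    rw [ha, integral_dirac] at hmean' hvar'
    rw [hmean'] at hvar'
    norm_num at hvar'
  · have hall := (E1.and E2).and (nhdsWithin_le_nhds hsm)
    rw [eventually_nhdsWithin_iff, Metric.eventually_nhds_iff] at hall
    obtain ⟨ε, hε, hb⟩ := hall
    refine ⟨ε, hε, fun m hm => ?_⟩
    by_cases hm0 : m = 0
    · subst hm0
      have hk : ∀ x, cskKernel V 0 x = 1 := fun x => by simp [cskKernel, hV0]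
      simp only [hk, mul_one, hmean', integral_const, probReal_univ, one_smul, zero_le_one,
        Eventually.of_forall, implies_true, and_self]
    · obtain ⟨⟨h1, h2⟩, h3⟩ := hb (y := m) (by simpa using hm) hm0
      have hv := h3.2.2
      have hk : ∀ x, cskKernel V m x = V m * (P m - m * x)⁻¹ := fun x => by
        have : V m + m * (m - x) = P m - m * x := by simp only [hPd]; ring
        rw [cskKernel, this, div_eq_mul_inv]
      refine ⟨?_, ?_, ?_⟩
      · rw [hν, (MeasurableEmbedding.subtype_coe measurableSet_Icc).ae_map_iff]
        refine Eventually.of_forall fun x => ?_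
        rw [hk]
        have := hpos m h3.1 h3.2.1 x
        exact mul_nonneg hv.le (inv_nonneg.mpr (by linarith))
      · rw [hIntEq]
        simp only [hk]
        rw [integral_const_mul, h1]
        field_simp
      · rw [hIntEq]
        have e : ∀ x : Set.Icc (-R) R, (x:ℝ) * cskKernel V m x
            = V m * ((x:ℝ) * (P m - m * (x:ℝ))⁻¹) := fun x => by rw [hk]; ring
        simp only [e]
        rw [integral_const_mul, h2]
        field_simp

end CSK

namespace CSK
open Topology ComplexConjugate Bornology

lemma Rep.congr {α β : ℝ} {μ : Measure (Set.Icc α β)} {P Q : ℝ → ℝ} (h : Rep μ P)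
    (hPQ : ∀ᶠ m in 𝓝 (0:ℝ), P m = Q m) : Rep μ Q := by
  have h1 := nhdsWithin_le_nhds (s := {(0:ℝ)}ᶜ) hPQ
  filter_upwards [h, h1] with m a1 a2
  rw [← a2, a1]

lemma pos_near {ι : Type} [Fintype ι] (β : ι → ℝ) :
    ∀ᶠ m in 𝓝 (0:ℝ), ∀ i, 0 < 1 + β i * m := by
  rw [eventually_all]
  intro i
  have : ContinuousAt (fun m : ℝ => 1 + β i * m) 0 := by fun_prop
  exact this.eventually_const_lt (by simp)

lemma norm_rep {ι : Type} [Fintype ι] (β q : ι → ℝ) (hβ0 : ∀ i, 0 < β i) (hβ1 : ∀ i, β i ≤ 1)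
    (hq : ∀ i, 0 ≤ q i) :
    ∃ R > (0:ℝ), ∃ μ : ProbabilityMeasure (Set.Icc (-R) R),
      Rep (μ : Measure (Set.Icc (-R) R)) (fun m => (1 + m) * ∏ i, (1 + β i * m) ^ (q i)) := by
  obtain ⟨R0, hR0, lam, hlam⟩ := base_rep (fun i => 1 - β i) q (fun i => by linarith [hβ1 i])
    (fun i => by linarith [hβ0 i]) hq
  have hc : ContinuousAt (fun u : ℝ => Real.exp (-(∑ i, q i *
      (Real.log (1 - u) - Real.log (1 - (1 - β i) * u))))) 0 := by
    refine Real.continuous_exp.continuousAt.comp (ContinuousAt.neg ?_)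
    refine tendsto_finsetSum _ fun i _ => ?_
    refine ContinuousAt.mul continuousAt_const (ContinuousAt.sub ?_ ?_)
    · exact ContinuousAt.log (by fun_prop) (by simp)
    · exact ContinuousAt.log (by fun_prop) (by simp)
  obtain ⟨R, hR, μ, hμ⟩ := to_m (R0 := R0)
    (fun x hx => by rw [abs_of_nonneg hx.1]; exact hx.2) hR0 lam _ hc (by simp) hlam
  refine ⟨R, hR, μ, hμ.congr ?_⟩
  have h1 : ∀ᶠ m in 𝓝 (0:ℝ), 0 < 1 + m := by
    have : ContinuousAt (fun m : ℝ => 1 + m) 0 := by fun_prop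
    exact this.eventually_const_lt (by simp)
  filter_upwards [h1, pos_near β] with m a1 a2
  congr 1
  rw [← Finset.sum_neg_distrib, Real.exp_sum]
  refine Finset.prod_congr rfl fun i _ => ?_
  have e1 : 1 - m / (1 + m) = 1 / (1 + m) := by field_simp; ring
  have e2 : 1 - (1 - β i) * (m / (1 + m)) = (1 + β i * m) / (1 + m) := by field_simp; ring
  rw [e1, e2, Real.log_div one_ne_zero a1.ne', Real.log_div (a2 i).ne' a1.ne', Real.log_one,
    Real.rpow_def_of_pos (a2 i)]
  ring_nf

lemma prod_analytic {ι : Type} [Fintype ι] (β q : ι → ℝ) (t : ℝ) :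
    AnalyticAt ℝ (fun m => ∏ i, (1 + β i * (t * m)) ^ (q i)) 0 := by
  refine Finset.analyticAt_fun_prod _ fun i _ => ?_
  have hl : AnalyticAt ℝ (fun m : ℝ => Real.log (1 + β i * (t * m))) 0 :=
    AnalyticAt.log (by fun_prop) (by simp)
  have he : AnalyticAt ℝ (fun m : ℝ => Real.exp (Real.log (1 + β i * (t * m)) * q i)) 0 :=
    (hl.mul analyticAt_const).rexp'
  refine he.congr ?_
  have hc : ContinuousAt (fun m : ℝ => 1 + β i * (t * m)) 0 := by fun_prop
  filter_upwards [hc.eventually_const_lt (u := 0) (by simp)] with m hm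
  rw [Real.rpow_def_of_pos hm]

lemma core {ι : Type} [Fintype ι] (β q : ι → ℝ) (hβ0 : ∀ i, 0 < β i) (hβ1 : ∀ i, β i ≤ 1)
    (hq : ∀ i, 0 ≤ q i) (t a B : ℝ) (hB : 0 ≤ B) (V : ℝ → ℝ) (hV : AnalyticAt ℝ V 0)
    (hVe : ∀ᶠ m in 𝓝 (0:ℝ), V m + m ^ 2 =
      (1 + t * m) * ∏ i, (1 + β i * (t * m)) ^ (q i) + a * m + B * m ^ 2) : memV V := by
  obtain ⟨R1, hR1, μ1, h1⟩ := norm_rep β q hβ0 hβ1 hq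
  have hV0 : V 0 = 1 := by simpa using hVe.self_of_nhds
  have hPc : ContinuousAt (fun m => (1 + m) * ∏ i, (1 + β i * m) ^ (q i)) 0 := by
    have := (prod_analytic β q 1).continuousAt
    simp only [one_mul] at this
    exact ContinuousAt.mul (by fun_prop) this
  obtain ⟨R2, hR2, μ2, h2⟩ := affine (Icc_bd R1) hR1 μ1 _ hPc (by simp) h1 t a
  have hPc2 : ContinuousAt (fun m => (1 + t * m) * ∏ i, (1 + β i * (t * m)) ^ (q i) + a * m) 0 := by
    have := (prod_analytic β q t).continuousAt
    exact ContinuousAt.add (ContinuousAt.mul (by fun_prop) this) (by fun_prop)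
  obtain ⟨R3, hR3, μ3, h3⟩ := semi (Icc_bd R2) hR2 hB μ2 _ hPc2 (by simp) h2
  have h4 := h3.congr (Q := fun m => V m + m ^ 2) (by filter_upwards [hVe] with m hm using hm.symm)
  obtain ⟨R4, hR4, μ4, h5⟩ := final (Icc_bd R3) hR3 μ3 V hV.continuousAt hV0 h4
  exact memV_of hR4 μ4 V hV hV0 h5

lemma params (d : ℕ) (c : ℝ) (hc : 0 < c) (bb p : Fin d → ℝ) (hbb : ∀ j, 0 < bb j)
    (hp : ∀ j, 0 < p j) (hmax : ∀ j, 1 ≤ max (p j) (c / bb j)) :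
    ∃ C : ℝ, ∃ β q : Option (Fin d) → ℝ, (∀ i, 0 < β i) ∧ (∀ i, β i ≤ 1) ∧ (∀ i, 0 ≤ q i) ∧
      ∀ᶠ m in 𝓝 (0:ℝ), (1 + c * m) * ∏ j, (1 + bb j * m) ^ (p j) =
        (1 + C * m) * ∏ i, (1 + β i * (C * m)) ^ (q i) := by
  by_cases hall : ∀ j, bb j ≤ c
  · refine ⟨c, fun i => i.elim 1 (fun j => bb j / c), fun i => i.elim 0 p, ?_, ?_, ?_, ?_⟩
    · rintro (_ | j)
      · simp
      · exact div_pos (hbb j) hc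
    · rintro (_ | j)
      · simp
      · exact (div_le_one hc).mpr (hall j)
    · rintro (_ | j)
      · simp
      · exact (hp j).le
    · refine Eventually.of_forall fun m => ?_
      rw [Fintype.prod_option]
      simp only [Option.elim, Real.rpow_zero, one_mul]
      congr 1
      refine Finset.prod_congr rfl fun j _ => ?_
      congr 2
      field_simp
  · push Not at hall
    obtain ⟨j1, hj1⟩ := hall
    have : Nonempty (Fin d) := ⟨j1⟩
    obtain ⟨j0, hj0⟩ := Finite.exists_max bb
    have hcC : c < bb j0 := hj1.trans_le (hj0 j1)
    have hC := hbb j0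
    have hp1 : 1 ≤ p j0 := by
      rcases le_max_iff.mp (hmax j0) with h | h
      · exact h
      · rw [le_div_iff₀ hC] at h; linarith
    refine ⟨bb j0, fun i => i.elim (c / bb j0) (fun j => bb j / bb j0),
      fun i => i.elim 1 (fun j => p j - if j = j0 then 1 else 0), ?_, ?_, ?_, ?_⟩
    · rintro (_ | j)
      · exact div_pos hc hC
      · exact div_pos (hbb j) hC
    · rintro (_ | j)
      · exact (div_le_one hC).mpr hcC.le
      · exact (div_le_one hC).mpr (hj0 j)
    · rintro (_ | j)
      · simp
      · simp only [Option.elim]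
        split_ifs with h
        · subst h; linarith
        · linarith [hp j]
    · filter_upwards [pos_near bb] with m hm
      rw [Fintype.prod_option]
      simp only [Option.elim, Real.rpow_one]
      have e1 : ∀ x : ℝ, x / bb j0 * (bb j0 * m) = x * m := fun x => by field_simp
      simp only [e1]
      have e2 : ∏ j, (1 + bb j * m) ^ (p j) = (∏ j, (1 + bb j * m) ^ (p j - if j = j0 then 1 else 0))
          * (1 + bb j0 * m) := by
        have e3 : ∏ j, (1 + bb j * m) ^ (if j = j0 then (1:ℝ) else 0) = 1 + bb j0 * m := by
          rw [Finset.prod_eq_single j0]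
          · simp
          · intro j _ hj; simp [hj]
          · simp
        rw [← e3, ← Finset.prod_mul_distrib]
        refine Finset.prod_congr rfl fun j _ => ?_
        rw [← Real.rpow_add (hm j)]
        congr 1
        ring
      rw [e2]
      ring

lemma scaled (d : ℕ) (a b c : ℝ) (hc : 0 < c) (bb p : Fin d → ℝ) (hbb : ∀ j, 0 < bb j)
    (hp : ∀ j, 0 < p j) (hmax : ∀ j, 1 ≤ max (p j) (c / bb j)) (s : ℝ) (hs : 0 ≤ b * s ^ 2 + 1) :
    memV (fun m => a * (s * m) + b * (s * m) ^ 2 +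
      (1 + c * (s * m)) * ∏ j, (1 + bb j * (s * m)) ^ (p j)) := by
  obtain ⟨C, β, q, h0, h1, h2, h3⟩ := params d c hc bb p hbb hp hmax
  refine core β q h0 h1 h2 (C * s) (a * s) (b * s ^ 2 + 1) hs _ ?_ ?_
  · have := prod_analytic bb p s
    refine AnalyticAt.add (by fun_prop) (AnalyticAt.mul (by fun_prop) this)
  · have ht : Tendsto (fun m : ℝ => s * m) (𝓝 0) (𝓝 0) := by
      have : ContinuousAt (fun m : ℝ => s * m) 0 := by fun_prop
      simpa using this.tendsto
    filter_upwards [ht.eventually h3] with m hm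
    rw [hm, mul_assoc C s m]
    ring

end CSK

/-- Let `bⱼ, pⱼ > 0`, `c > 0`, with `max{pⱼ, c/bⱼ} ≥ 1` for each `j`, and put
`V(m) = a·m + b·m² + (1+c·m)·∏ⱼ (1+bⱼm)^{pⱼ}`. If `b ≥ −1` then `V ∈ 𝒱`;
if `b ≥ 0` then `V ∈ 𝒱∞`. -/
theorem perturbed_product_rpow_memV (d : ℕ) (hd : 1 ≤ d) (a b c : ℝ) (hc : 0 < c)
    (bb p : Fin d → ℝ) (hbb : ∀ j, 0 < bb j) (hp : ∀ j, 0 < p j)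
    (hmax : ∀ j, 1 ≤ max (p j) (c / bb j)) :
    ((-1 : ℝ) ≤ b →
      memV (fun m => a * m + b * m ^ 2 + (1 + c * m) * ∏ j, (1 + bb j * m) ^ (p j))) ∧
    ((0 : ℝ) ≤ b →
      memVinf (fun m => a * m + b * m ^ 2 + (1 + c * m) * ∏ j, (1 + bb j * m) ^ (p j))) := by
  refine ⟨fun hb => ?_, fun hb s => ?_⟩
  · have := CSK.scaled d a b c hc bb p hbb hp hmax 1 (by linarith)
    simpa only [one_mul] using this
  · exact CSK.scaled d a b c hc bb p hbb hp hmax s (by positivity)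
end
end

section
/- Fix real numbers a, b, c and consider the polynomials {Pₙ} defined by P₀(x) = 1, P₁(x) = x, and the 4-step recursion x·P₁(x) = P₂(x) + a·P₁(x) + P₀(x), x·P₂(x) = P₃(x) + a·P₂(x) + b·P₁(x), and x·Pₙ(x) = P_{n+1}(x) + a·Pₙ(x) + b·P_{n−1}(x) + c·P_{n−2}(x) for n ≥ 3. Then the following are equivalent: (1) b³ ≥ 27c²; (2) there exists a probability measure ν on ℝ with all moments finite such that the polynomials {Pₙ} are ν-2-orthogonal. -/
open MeasureTheory

noncomputable section

/-- The polynomials `P` are `ν-d`-orthogonal: `∫ Pₙ dν = 0` for `n ≥ 1` and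
`∫ Pₙ·P_k dν = 0` for all `k ≥ 1` and `n ≥ 2 + (k-1)d`. -/
def NuDOrthogonal (ν : Measure ℝ) (d : ℕ) (P : ℕ → Polynomial ℝ) : Prop :=
  (∀ n : ℕ, 1 ≤ n → (∫ x, (P n).eval x ∂ν) = 0) ∧
  (∀ k : ℕ, 1 ≤ k → ∀ n : ℕ, 2 + (k - 1) * d ≤ n →
    (∫ x, (P n).eval x * (P k).eval x ∂ν) = 0)


structure Rec4 (a b c : ℝ) (P : ℕ → Polynomial ℝ) : Prop where
  h0 : P 0 = 1
  h1 : P 1 = Polynomial.X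
  h2 : Polynomial.X * P 1 = P 2 + Polynomial.C a * P 1 + P 0
  h3 : Polynomial.X * P 2 = P 3 + Polynomial.C a * P 2 + Polynomial.C b * P 1
  h4 : ∀ n : ℕ, Polynomial.X * P (n + 3) = P (n + 4) + Polynomial.C a * P (n + 3)
        + Polynomial.C b * P (n + 2) + Polynomial.C c * P (n + 1)

lemma orth_pow {a b c : ℝ} {P : ℕ → Polynomial ℝ} (hP : Rec4 a b c P)
    (L : Polynomial ℝ →ₗ[ℝ] ℝ) (hL : ∀ n, 1 ≤ n → L (P n) = 0) :
    ∀ j n, 1 ≤ n → 2 * j ≤ n → L (Polynomial.X ^ j * P n) = 0 := by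
  intro j
  induction j with
  | zero => intro n hn _; simpa using hL n hn
  | succ j ih =>
    intro n hn hj
    rw [pow_succ, mul_assoc]
    match n, hn, hj with
    | 2, _, hj =>
      have e : Polynomial.X ^ j * (Polynomial.X * P 2) =
        Polynomial.X ^ j * P 3 + a • (Polynomial.X ^ j * P 2) + b • (Polynomial.X ^ j * P 1) := by
        rw [hP.h3]; simp only [Polynomial.smul_eq_C_mul]; ring
      rw [e, map_add, map_add, map_smul, map_smul, ih 3 (by omega) (by omega),
        ih 2 (by omega) (by omega), ih 1 (by omega) (by omega)]
      simp
    | n + 3, _, hj =>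
      have e : Polynomial.X ^ j * (Polynomial.X * P (n + 3)) =
        Polynomial.X ^ j * P (n + 4) + a • (Polynomial.X ^ j * P (n + 3))
          + b • (Polynomial.X ^ j * P (n + 2)) + c • (Polynomial.X ^ j * P (n + 1)) := by
        rw [hP.h4]; simp only [Polynomial.smul_eq_C_mul]; ring
      rw [e, map_add, map_add, map_add, map_smul, map_smul, map_smul, ih (n+4) (by omega) (by omega),
        ih (n+3) (by omega) (by omega), ih (n+2) (by omega) (by omega),
        ih (n+1) (by omega) (by omega)]
      simp

lemma expand2 {a b c : ℝ} {P : ℕ → Polynomial ℝ} (hP : Rec4 a b c P) (L : Polynomial ℝ →ₗ[ℝ] ℝ)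
    (j : ℕ) (R : Polynomial ℝ) : L (Polynomial.X ^ j * P 2 * R) =
      L (Polynomial.X ^ (j + 1) * P 1 * R) - a * L (Polynomial.X ^ j * P 1 * R)
      - L (Polynomial.X ^ j * P 0 * R) := by
  have e : Polynomial.X ^ j * P 2 * R = Polynomial.X ^ (j + 1) * P 1 * R
      - a • (Polynomial.X ^ j * P 1 * R) - Polynomial.X ^ j * P 0 * R := by
    simp only [Polynomial.smul_eq_C_mul]
    linear_combination (-Polynomial.X ^ j * R) * hP.h2
  rw [e, map_sub, map_sub, map_smul, smul_eq_mul]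

lemma expand3 {a b c : ℝ} {P : ℕ → Polynomial ℝ} (hP : Rec4 a b c P) (L : Polynomial ℝ →ₗ[ℝ] ℝ)
    (j : ℕ) (R : Polynomial ℝ) : L (Polynomial.X ^ j * P 3 * R) =
      L (Polynomial.X ^ (j + 1) * P 2 * R) - a * L (Polynomial.X ^ j * P 2 * R)
      - b * L (Polynomial.X ^ j * P 1 * R) := by
  have e : Polynomial.X ^ j * P 3 * R = Polynomial.X ^ (j + 1) * P 2 * R
      - a • (Polynomial.X ^ j * P 2 * R) - b • (Polynomial.X ^ j * P 1 * R) := by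
    simp only [Polynomial.smul_eq_C_mul]
    linear_combination (-Polynomial.X ^ j * R) * hP.h3
  rw [e, map_sub, map_sub, map_smul, map_smul, smul_eq_mul, smul_eq_mul]

lemma expand4 {a b c : ℝ} {P : ℕ → Polynomial ℝ} (hP : Rec4 a b c P) (L : Polynomial ℝ →ₗ[ℝ] ℝ)
    (j n : ℕ) (R : Polynomial ℝ) : L (Polynomial.X ^ j * P (n + 4) * R) =
      L (Polynomial.X ^ (j + 1) * P (n + 3) * R) - a * L (Polynomial.X ^ j * P (n + 3) * R)
      - b * L (Polynomial.X ^ j * P (n + 2) * R) - c * L (Polynomial.X ^ j * P (n + 1) * R) := by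
  have e : Polynomial.X ^ j * P (n + 4) * R = Polynomial.X ^ (j + 1) * P (n + 3) * R
      - a • (Polynomial.X ^ j * P (n + 3) * R) - b • (Polynomial.X ^ j * P (n + 2) * R)
      - c • (Polynomial.X ^ j * P (n + 1) * R) := by
    simp only [Polynomial.smul_eq_C_mul]
    linear_combination (-Polynomial.X ^ j * R) * hP.h4 n
  rw [e, map_sub, map_sub, map_sub, map_smul, map_smul, map_smul, smul_eq_mul, smul_eq_mul,
    smul_eq_mul]

lemma orth_all {a b c : ℝ} {P : ℕ → Polynomial ℝ} (hP : Rec4 a b c P)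
    (L : Polynomial ℝ →ₗ[ℝ] ℝ) (hL : ∀ n, 1 ≤ n → L (P n) = 0) (k : ℕ) :
    ∀ j n, 1 ≤ n → 2 * (j + k) ≤ n → L (Polynomial.X ^ j * P k * P n) = 0 := by
  induction k using Nat.strong_induction_on with
  | _ k ih =>
    intro j n hn hj
    match k, ih, hj with
    | 0, _, hj => rw [hP.h0, mul_one]; exact orth_pow hP L hL j n hn (by omega)
    | 1, _, hj => rw [hP.h1, ← pow_succ]; exact orth_pow hP L hL _ n hn (by omega)
    | 2, ih, hj =>
      rw [expand2 hP, ih 1 (by omega) _ n hn (by omega), ih 1 (by omega) _ n hn (by omega),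
        ih 0 (by omega) _ n hn (by omega)]; simp
    | 3, ih, hj =>
      rw [expand3 hP, ih 2 (by omega) _ n hn (by omega), ih 2 (by omega) _ n hn (by omega),
        ih 1 (by omega) _ n hn (by omega)]; simp
    | k + 4, ih, hj =>
      rw [expand4 hP, ih (k + 3) (by omega) _ n hn (by omega),
        ih (k + 3) (by omega) _ n hn (by omega), ih (k + 2) (by omega) _ n hn (by omega),
        ih (k + 1) (by omega) _ n hn (by omega)]; simp

/-- growth bound for the functional -/
lemma bound_pow {a b c : ℝ} {P : ℕ → Polynomial ℝ} (hP : Rec4 a b c P)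
    (L : Polynomial ℝ →ₗ[ℝ] ℝ) (hL0 : L 1 = 1) (hL : ∀ n, 1 ≤ n → L (P n) = 0) :
    ∀ j n, |L (Polynomial.X ^ j * P n)| ≤ (2 + |a| + |b| + |c|) ^ j := by
  intro j
  induction j with
  | zero =>
    intro n
    rcases Nat.eq_zero_or_pos n with h | h
    · subst h; simp [hP.h0, hL0]
    · simp [hL n h]
  | succ j ih =>
    intro n
    rw [pow_succ, mul_assoc, pow_succ]
    set M := (2 + |a| + |b| + |c|) ^ j with hM
    have hM0 : 0 ≤ M := by positivity
    have tri : ∀ x y : ℝ, |x| ≤ M → |y * x| ≤ |y| * M := fun x y h => by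
      rw [abs_mul]; exact mul_le_mul_of_nonneg_left h (abs_nonneg _)
    have hA := mul_nonneg (abs_nonneg a) hM0
    have hB := mul_nonneg (abs_nonneg b) hM0
    have hC := mul_nonneg (abs_nonneg c) hM0
    match n with
    | 0 =>
      have e : Polynomial.X ^ j * (Polynomial.X * P 0) = Polynomial.X ^ j * P 1 := by
        rw [hP.h0, hP.h1, mul_one]
      rw [e]
      nlinarith [ih 1]
    | 1 =>
      have e : Polynomial.X ^ j * (Polynomial.X * P 1) =
        Polynomial.X ^ j * P 2 + a • (Polynomial.X ^ j * P 1) + (Polynomial.X ^ j * P 0) := by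
        rw [hP.h2]; simp only [Polynomial.smul_eq_C_mul]; ring
      rw [e, map_add, map_add, map_smul, smul_eq_mul]
      have := tri _ a (ih 1)
      have := abs_add_three (L (Polynomial.X ^ j * P 2)) (a * L (Polynomial.X ^ j * P 1))
        (L (Polynomial.X ^ j * P 0))
      nlinarith [ih 2, ih 0]
    | 2 =>
      have e : Polynomial.X ^ j * (Polynomial.X * P 2) =
        Polynomial.X ^ j * P 3 + a • (Polynomial.X ^ j * P 2) + b • (Polynomial.X ^ j * P 1) := by
        rw [hP.h3]; simp only [Polynomial.smul_eq_C_mul]; ring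
      rw [e, map_add, map_add, map_smul, map_smul, smul_eq_mul, smul_eq_mul]
      have := tri _ a (ih 2)
      have := tri _ b (ih 1)
      have := abs_add_three (L (Polynomial.X ^ j * P 3)) (a * L (Polynomial.X ^ j * P 2))
        (b * L (Polynomial.X ^ j * P 1))
      nlinarith [ih 3]
    | n + 3 =>
      have e : Polynomial.X ^ j * (Polynomial.X * P (n + 3)) =
        Polynomial.X ^ j * P (n + 4) + a • (Polynomial.X ^ j * P (n + 3))
          + b • (Polynomial.X ^ j * P (n + 2)) + c • (Polynomial.X ^ j * P (n + 1)) := by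
        rw [hP.h4]; simp only [Polynomial.smul_eq_C_mul]; ring
      rw [e, map_add, map_add, map_add, map_smul, map_smul, map_smul, smul_eq_mul, smul_eq_mul,
        smul_eq_mul]
      have := tri _ a (ih (n+3))
      have := tri _ b (ih (n+2))
      have := tri _ c (ih (n+1))
      have := abs_add_three (L (Polynomial.X ^ j * P (n+4))) (a * L (Polynomial.X ^ j * P (n+3)))
        (b * L (Polynomial.X ^ j * P (n+2)))
      have := abs_add_le (L (Polynomial.X ^ j * P (n+4)) + (a * L (Polynomial.X ^ j * P (n+3)))
        + (b * L (Polynomial.X ^ j * P (n+2)))) (c * L (Polynomial.X ^ j * P (n+1)))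
      nlinarith [ih (n+4)]

lemma bound_all {a b c : ℝ} {P : ℕ → Polynomial ℝ} (hP : Rec4 a b c P)
    (L : Polynomial ℝ →ₗ[ℝ] ℝ) (hL0 : L 1 = 1) (hL : ∀ n, 1 ≤ n → L (P n) = 0) (n k : ℕ) :
    ∀ j, |L (Polynomial.X ^ j * P k * P n)| ≤
      (3 + 2 * (|a| + |b| + |c|)) ^ k * (2 + |a| + |b| + |c|) ^ j := by
  set C := 2 + |a| + |b| + |c| with hC
  set E := 3 + 2 * (|a| + |b| + |c|) with hE
  have ha := abs_nonneg a
  have hb := abs_nonneg b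
  have hc := abs_nonneg c
  have hC0 : 0 ≤ C := by positivity
  have hE1 : 1 ≤ E := by linarith
  have tri : ∀ x y M : ℝ, |x| ≤ M → |y * x| ≤ |y| * M := fun x y M h => by
      rw [abs_mul]; exact mul_le_mul_of_nonneg_left h (abs_nonneg _)
  induction k using Nat.strong_induction_on with
  | _ k ih =>
    intro j
    have hj : 0 ≤ C ^ j := by positivity
    -- weak form
    have weak : ∀ i m, i ≤ m → m < k → |L (Polynomial.X ^ j * P i * P n)| ≤ E ^ m * C ^ j := by
      intro i m him hm
      refine (ih i (by omega) j).trans ?_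
      gcongr
    match k, ih, weak with
    | 0, _, _ =>
      rw [hP.h0, mul_one, pow_zero, one_mul]; exact bound_pow hP L hL0 hL j n
    | 1, _, _ =>
      rw [hP.h1, ← pow_succ]; refine (bound_pow hP L hL0 hL (j+1) n).trans ?_
      rw [pow_one, pow_succ, mul_comm]; gcongr; linarith
    | 2, ih, weak =>
      rw [expand2 hP]
      have h1 := ih 1 (by omega) (j+1)
      have h2 := tri _ a _ (weak 1 1 (by omega) (by omega))
      have h3 := weak 0 1 (by omega) (by omega)
      have hM : 0 ≤ E ^ 1 * C ^ j := by positivity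
      have e1 : E ^ 1 * C ^ (j+1) = C * (E ^ 1 * C ^ j) := by ring
      have e2 : E ^ 2 * C ^ j = E * (E ^ 1 * C ^ j) := by ring
      rw [e1] at h1; rw [e2]
      have := abs_sub (L (Polynomial.X ^ (j + 1) * P 1 * P n)) (a * L (Polynomial.X ^ j * P 1 * P n))
      have := abs_sub (L (Polynomial.X ^ (j + 1) * P 1 * P n) - (a * L (Polynomial.X ^ j * P 1 * P n))) (L (Polynomial.X ^ j * P 0 * P n))
      generalize E ^ 1 * C ^ j = M at *
      nlinarith [mul_nonneg ha hM, mul_nonneg hb hM, mul_nonneg hc hM]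
    | 3, ih, weak =>
      rw [expand3 hP]
      have h1 := ih 2 (by omega) (j+1)
      have h2 := tri _ a _ (weak 2 2 (by omega) (by omega))
      have h3 := tri _ b _ (weak 1 2 (by omega) (by omega))
      have hM : 0 ≤ E ^ 2 * C ^ j := by positivity
      have e1 : E ^ 2 * C ^ (j+1) = C * (E ^ 2 * C ^ j) := by ring
      have e2 : E ^ 3 * C ^ j = E * (E ^ 2 * C ^ j) := by ring
      rw [e1] at h1; rw [e2]
      have := abs_sub (L (Polynomial.X ^ (j + 1) * P 2 * P n)) (a * L (Polynomial.X ^ j * P 2 * P n))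
      have := abs_sub (L (Polynomial.X ^ (j + 1) * P 2 * P n) - (a * L (Polynomial.X ^ j * P 2 * P n))) (b * L (Polynomial.X ^ j * P 1 * P n))
      generalize E ^ 2 * C ^ j = M at *
      nlinarith [mul_nonneg ha hM, mul_nonneg hb hM, mul_nonneg hc hM]
    | k + 4, ih, weak =>
      rw [expand4 hP]
      have h1 := ih (k+3) (by omega) (j+1)
      have h2 := tri _ a _ (weak (k+3) (k+3) (by omega) (by omega))
      have h3 := tri _ b _ (weak (k+2) (k+3) (by omega) (by omega))
      have h4 := tri _ c _ (weak (k+1) (k+3) (by omega) (by omega))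
      have hM : 0 ≤ E ^ (k+3) * C ^ j := by positivity
      have e1 : E ^ (k+3) * C ^ (j+1) = C * (E ^ (k+3) * C ^ j) := by ring
      have e2 : E ^ (k+4) * C ^ j = E * (E ^ (k+3) * C ^ j) := by ring
      rw [e1] at h1; rw [e2]
      have := abs_sub (L (Polynomial.X ^ (j + 1) * P (k+3) * P n)) (a * L (Polynomial.X ^ j * P (k+3) * P n))
      have := abs_sub (L (Polynomial.X ^ (j + 1) * P (k+3) * P n) - (a * L (Polynomial.X ^ j * P (k+3) * P n))) (b * L (Polynomial.X ^ j * P (k+2) * P n))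
      have := abs_sub (L (Polynomial.X ^ (j + 1) * P (k+3) * P n) - (a * L (Polynomial.X ^ j * P (k+3) * P n)) - (b * L (Polynomial.X ^ j * P (k+2) * P n))) (c * L (Polynomial.X ^ j * P (k+1) * P n))
      generalize E ^ (k+3) * C ^ j = M at *
      nlinarith [mul_nonneg ha hM, mul_nonneg hb hM, mul_nonneg hc hM]

lemma integrable_poly {ν : Measure ℝ} (h : ∀ n : ℕ, Integrable (fun x : ℝ => x ^ n) ν)
    (p : Polynomial ℝ) : Integrable (fun x => p.eval x) ν := by
  induction p using Polynomial.induction_on' with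
  | add p q hp hq =>
    simp only [Polynomial.eval_add]
    exact Integrable.add hp hq
  | monomial n r => simpa using (h n).const_mul r

/-- integration against a measure as a linear functional on polynomials -/
def intL (ν : Measure ℝ) (h : ∀ n : ℕ, Integrable (fun x : ℝ => x ^ n) ν) :
    Polynomial ℝ →ₗ[ℝ] ℝ where
  toFun p := ∫ x, p.eval x ∂ν
  map_add' p q := by
    simp only [Polynomial.eval_add]
    exact integral_add (integrable_poly h p) (integrable_poly h q)
  map_smul' r p := by
    simp only [Polynomial.eval_smul, smul_eq_mul, RingHom.id_apply]
    exact integral_const_mul r _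

/-- scalar spectral measure of a bounded self-adjoint operator -/
lemma exists_spectral_measure {H : Type*} [NormedAddCommGroup H] [InnerProductSpace ℂ H]
    [CompleteSpace H] (A : H →L[ℂ] H) (hA : IsSelfAdjoint A) (e : H) (he : ‖e‖ = 1) :
    ∃ ν : Measure ℝ, IsProbabilityMeasure ν ∧
      (∀ n : ℕ, Integrable (fun x : ℝ => x ^ n) ν) ∧
      ∀ p : Polynomial ℝ, ∫ x, p.eval x ∂ν = (inner ℂ e (Polynomial.aeval A p e)).re := by
  let S := spectrum ℝ A
  haveI : CompactSpace S := isCompact_iff_compactSpace.mp (spectrum.isCompact A)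
  let Λ₀ : C(S, ℝ) →ₗ[ℝ] ℝ :=
    { toFun := fun f => (inner ℂ e (cfcHom hA f e)).re
      map_add' := fun f g => by simp [inner_add_right]
      map_smul' := fun r f => by
        rw [map_smul]
        have : ((r • cfcHom hA f : H →L[ℂ] H)) e = (r : ℂ) • (cfcHom hA f e) := by
          simp
        rw [this, inner_smul_right]; simp }
  have hpos : ∀ f : C(S, ℝ), 0 ≤ f → 0 ≤ Λ₀ f := by
    intro f hf
    let g : C(S, ℝ) := ⟨fun x => Real.sqrt (f x), by fun_prop⟩
    have hg : f = star g * g := by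
      ext x
      simp only [ContinuousMap.mul_apply, ContinuousMap.star_apply, star_trivial]
      exact (Real.mul_self_sqrt (hf x)).symm
    change 0 ≤ (inner ℂ e (cfcHom hA f e)).re
    rw [hg, map_mul, map_star, ContinuousLinearMap.star_eq_adjoint]
    change 0 ≤ (inner ℂ e (ContinuousLinearMap.adjoint (cfcHom hA g) (cfcHom hA g e))).re
    rw [ContinuousLinearMap.adjoint_inner_right]
    exact inner_self_nonneg (𝕜 := ℂ)
  let Λ : CompactlySupportedContinuousMap S ℝ →ₚ[ℝ] ℝ := PositiveLinearMap.mk₀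
    { toFun := fun f => Λ₀ f.toContinuousMap
      map_add' := fun f g => by
        rw [← map_add]; rfl
      map_smul' := fun r f => by
        rw [RingHom.id_apply, ← map_smul]; rfl }
    (fun f hf => hpos _ (fun x => hf x))
  have key : ∀ f : C(S, ℝ), ∫ x, f x ∂(RealRMK.rieszMeasure Λ) = Λ₀ f := by
    intro f
    have := RealRMK.integral_rieszMeasure Λ (CompactlySupportedContinuousMap.continuousMapEquiv f)
    exact this
  have hfin : IsFiniteMeasure (RealRMK.rieszMeasure Λ) := inferInstance
  have hone : Λ₀ 1 = 1 := by
    change (inner ℂ e (cfcHom hA 1 e)).re = 1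
    rw [map_one]
    simp [he]
  have hprob : IsProbabilityMeasure (RealRMK.rieszMeasure Λ) := by
    constructor
    have := key 1
    rw [hone] at this
    simp [Measure.real] at this
    rw [← ENNReal.ofReal_toReal (measure_ne_top (RealRMK.rieszMeasure Λ) Set.univ), this]
    simp
  have hIntg : ∀ f : C(S, ℝ), Integrable f (RealRMK.rieszMeasure Λ) := fun f =>
    f.continuous.integrable_of_hasCompactSupport (HasCompactSupport.of_compactSpace f)
  have hemb : MeasurableEmbedding (Subtype.val : S → ℝ) :=
    MeasurableEmbedding.subtype_coe (spectrum.isCompact A).measurableSet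
  refine ⟨(RealRMK.rieszMeasure Λ).map Subtype.val, ?_, ?_, ?_⟩
  · exact Measure.isProbabilityMeasure_map measurable_subtype_coe.aemeasurable
  · intro n
    rw [hemb.integrable_map_iff]
    exact hIntg ⟨fun x => (x : ℝ) ^ n, by fun_prop⟩
  · intro p
    rw [hemb.integral_map]
    have h2 := key ⟨fun x : S => p.eval (x : ℝ), by fun_prop⟩
    refine h2.trans ?_
    change (inner ℂ e (cfcHom hA _ e)).re = _
    rw [← cfc_polynomial p A hA, cfc_apply p.eval A hA]
    rfl

lemma exists_nu_of_selfadj {H : Type*} [NormedAddCommGroup H] [InnerProductSpace ℂ H]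
    [CompleteSpace H] (B : H →L[ℂ] H) (hB : IsSelfAdjoint B) (e : H) (he : ‖e‖ = 1)
    (w : ℕ → H) {a b c : ℝ} (hw0 : B e = w 0) (hw1 : B (w 0) = w 1 + (a : ℂ) • w 0 + e)
    (hw2 : B (w 1) = w 2 + (a : ℂ) • w 1 + (b : ℂ) • w 0)
    (hw3 : ∀ n, B (w (n + 2)) = w (n + 3) + (a : ℂ) • w (n + 2) + (b : ℂ) • w (n + 1)
      + (c : ℂ) • w n)
    (ho : ∀ n, inner ℂ e (w n) = 0)
    {P : ℕ → Polynomial ℝ} (hP : Rec4 a b c P) :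
    ∃ ν : Measure ℝ, IsProbabilityMeasure ν ∧
      (∀ n : ℕ, Integrable (fun x : ℝ => x ^ n) ν) ∧
      ∀ n : ℕ, 1 ≤ n → ∫ x, (P n).eval x ∂ν = 0 := by
  obtain ⟨ν, h1, h2, h3⟩ := exists_spectral_measure B hB e he
  refine ⟨ν, h1, h2, ?_⟩
  have cB : ∀ (r : ℝ) (p : Polynomial ℝ), Polynomial.aeval B (Polynomial.C r * p) e =
      (r : ℂ) • (Polynomial.aeval B p e) := by
    intro r p
    rw [← Polynomial.smul_eq_C_mul, map_smul]; simp
  have xB : ∀ (p : Polynomial ℝ), Polynomial.aeval B (Polynomial.X * p) e =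
      B (Polynomial.aeval B p e) := by
    intro p
    rw [map_mul, Polynomial.aeval_X]; rfl
  have key : ∀ n, Polynomial.aeval B (P (n + 1)) e = w n := by
    intro n
    induction n using Nat.strong_induction_on with
    | _ n ih =>
      match n, ih with
      | 0, _ => rw [zero_add, hP.h1, Polynomial.aeval_X, hw0]
      | 1, ih =>
        have h := congrArg (fun p => Polynomial.aeval B p e) hP.h2
        simp only [map_add, add_apply, xB, cB] at h
        have i0 : Polynomial.aeval B (P 1) e = w 0 := ih 0 (by omega)
        rw [i0, hP.h0, hw1, map_one] at h
        exact (add_right_cancel (add_right_cancel h)).symm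
      | 2, ih =>
        have h := congrArg (fun p => Polynomial.aeval B p e) hP.h3
        simp only [map_add, add_apply, xB, cB] at h
        have i0 : Polynomial.aeval B (P 1) e = w 0 := ih 0 (by omega)
        have i1 : Polynomial.aeval B (P 2) e = w 1 := ih 1 (by omega)
        rw [i0, i1, hw2] at h
        exact (add_right_cancel (add_right_cancel h)).symm
      | n + 3, ih =>
        have h := congrArg (fun p => Polynomial.aeval B p e) (hP.h4 n)
        simp only [map_add, add_apply, xB, cB] at h
        have i0 : Polynomial.aeval B (P (n + 1)) e = w n := ih n (by omega)
        have i1 : Polynomial.aeval B (P (n + 2)) e = w (n + 1) := ih (n+1) (by omega)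
        have i2 : Polynomial.aeval B (P (n + 3)) e = w (n + 2) := ih (n+2) (by omega)
        rw [i0, i1, i2, hw3] at h
        exact (add_right_cancel (add_right_cancel (add_right_cancel h))).symm
  intro n hn
  obtain ⟨m, rfl⟩ : ∃ m, n = m + 1 := ⟨n - 1, by omega⟩
  rw [h3, key, ho]
  simp

lemma exists_nu_of_operator {H : Type*} [NormedAddCommGroup H] [InnerProductSpace ℂ H]
    [CompleteSpace H] (M : H →ₗ[ℂ] H) (hM : M.IsSymmetric) (v : ℕ → H) {a b c : ℝ}
    (hv : ‖v 0‖ = 1) (hv1 : M (v 0) = v 1 + (a : ℂ) • v 0)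
    (hv2 : M (v 1) = v 2 + (a : ℂ) • v 1 + (b : ℂ) • v 0)
    (hv3 : ∀ n, M (v (n + 2)) = v (n + 3) + (a : ℂ) • v (n + 2) + (b : ℂ) • v (n + 1)
      + (c : ℂ) • v n)
    (ho : ∀ n, inner ℂ (v 0) (v (n + 1)) = 0)
    {P : ℕ → Polynomial ℝ} (hP : Rec4 a b c P) :
    ∃ ν : Measure ℝ, IsProbabilityMeasure ν ∧
      (∀ n : ℕ, Integrable (fun x : ℝ => x ^ n) ν) ∧
      ∀ n : ℕ, 1 ≤ n → ∫ x, (P n).eval x ∂ν = 0 := by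
  let A₀ : WithLp 2 (ℂ × H) →ₗ[ℂ] WithLp 2 (ℂ × H) :=
    { toFun := fun f => WithLp.toLp 2 (inner ℂ (v 0) f.snd, f.fst • v 0 + M f.snd)
      map_add' := fun f g => by
        apply (WithLp.ofLp_injective 2)
        ext
        · simp [inner_add_right]
        · simp [add_smul]; abel
      map_smul' := fun r f => by
        apply (WithLp.ofLp_injective 2)
        ext
        · simp [inner_smul_right]
        · simp [mul_smul] }
  have hA₀ : A₀.IsSymmetric := by
    intro f g
    simp only [A₀, LinearMap.coe_mk, AddHom.coe_mk, WithLp.prod_inner_apply, inner_add_left,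
      inner_add_right, inner_smul_left, inner_smul_right]
    have h1 : inner ℂ (M f.ofLp.2) g.ofLp.2 = inner ℂ f.ofLp.2 (M g.ofLp.2) := hM f.snd g.snd
    have h2 : inner ℂ (M f.snd) g.ofLp.2 = inner ℂ (M f.ofLp.2) g.ofLp.2 := rfl
    have h3 : inner ℂ f.ofLp.2 (M g.snd) = inner ℂ f.ofLp.2 (M g.ofLp.2) := rfl
    rw [h2, h3, h1]
    simp only [RCLike.inner_apply, inner_conj_symm]
    change g.ofLp.1 * inner ℂ f.ofLp.2 (v 0) + ((starRingEnd ℂ) f.ofLp.1 * inner ℂ (v 0) g.ofLp.2 + _) = inner ℂ (v 0) g.ofLp.2 * (starRingEnd ℂ) f.ofLp.1 + (g.ofLp.1 * inner ℂ f.ofLp.2 (v 0) + _)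
    ring
  let A : WithLp 2 (ℂ × H) →L[ℂ] WithLp 2 (ℂ × H) := hA₀.toSelfAdjoint
  have hAs : IsSelfAdjoint A := hA₀.toSelfAdjoint.2
  have hAa : ∀ f, A f =
    WithLp.toLp 2 (inner ℂ (v 0) f.snd, f.fst • v 0 + M f.snd) := fun f => rfl
  let e : WithLp 2 (ℂ × H) := WithLp.toLp 2 (1, 0)
  have he : ‖e‖ = 1 := by
    simp [e, WithLp.prod_norm_eq_of_L2]
  let w : ℕ → WithLp 2 (ℂ × H) := fun n => WithLp.toLp 2 (0, v n)
  have hAe : A e = w 0 := by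
    rw [hAa]; simp [e, w]
  have hAw : ∀ n, A (w n) =
      WithLp.toLp 2 (inner ℂ (v 0) (v n), M (v n)) := by
    intro n; rw [hAa]; simp [w]
  refine exists_nu_of_selfadj A hAs e he w hAe ?_ ?_ ?_ ?_ hP
  · rw [hAw, hv1]
    apply (WithLp.ofLp_injective 2)
    ext
    · simp [w, e, hv]
    · simp [w, e]
  · rw [hAw, hv2, ho 0]
    apply (WithLp.ofLp_injective 2)
    ext
    · simp [w]
    · simp [w]
  · intro n
    rw [hAw, hv3, ho (n + 1)]
    apply (WithLp.ofLp_injective 2)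
    ext
    · simp [w]
    · simp [w]
  · intro n
    simp [e, w]

/-- the auxiliary homogeneous polynomials, evaluated -/
def Qr (a b c : ℝ) (x : ℝ) : ℕ → ℝ
  | 0 => 1
  | 1 => x - a
  | 2 => (x - a) * (x - a) - b
  | n + 3 => (x - a) * Qr a b c x (n + 2) - b * Qr a b c x (n + 1) - c * Qr a b c x n

lemma exists_nu_of_measure {Ω : Type*} [MeasurableSpace Ω] (σ : Measure Ω)
    [IsProbabilityMeasure σ] (x : Ω → ℝ) (hx : Measurable x) (R : ℝ) (hR : ∀ ω, |x ω| ≤ R)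
    {a b c : ℝ} (ho : ∀ n, ∫ ω, Qr a b c (x ω) (n + 1) ∂σ = 0)
    {P : ℕ → Polynomial ℝ} (hP : Rec4 a b c P) :
    ∃ ν : Measure ℝ, IsProbabilityMeasure ν ∧
      (∀ n : ℕ, Integrable (fun x : ℝ => x ^ n) ν) ∧
      ∀ n : ℕ, 1 ≤ n → ∫ x, (P n).eval x ∂ν = 0 := by
  have hxm : MemLp (fun ω => (x ω : ℂ)) ⊤ σ :=
    memLp_top_of_bound (Complex.measurable_ofReal.comp hx).aestronglyMeasurable R
      (Filter.Eventually.of_forall fun ω => by simpa using hR ω)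
  let xL : Lp ℂ ⊤ σ := hxm.toLp _
  let M : Lp ℂ 2 σ →ₗ[ℂ] Lp ℂ 2 σ :=
    { toFun := fun f => xL • f
      map_add' := fun f g => Lp.add_smul xL f g
      map_smul' := fun r f => (Lp.smul_comm r xL f).symm }
  have hMc : ∀ f : Lp ℂ 2 σ, (M f : Ω → ℂ) =ᵐ[σ] fun ω => (x ω : ℂ) * f ω := by
    intro f
    have h1 := Lp.coeFn_lpSMul (r := 2) xL f
    filter_upwards [h1, hxm.coeFn_toLp] with ω h1 h2
    change (xL • f : Lp ℂ 2 σ) ω = _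
    rw [h1]
    simp only [Pi.smul_apply', smul_eq_mul]
    rw [h2]
  have hMs : M.IsSymmetric := by
    intro f g
    rw [L2.inner_def, L2.inner_def]
    apply integral_congr_ae
    filter_upwards [hMc f, hMc g] with ω h1 h2
    rw [h1, h2]
    simp
    ring
  let one : Lp ℂ 2 σ := (memLp_const (1 : ℂ)).toLp _
  let rec' : ℕ → (Lp ℂ 2 σ) × (Lp ℂ 2 σ) × (Lp ℂ 2 σ) := fun n =>
    Nat.rec (one, M one - (a : ℂ) • one, M (M one - (a : ℂ) • one)
      - (a : ℂ) • (M one - (a : ℂ) • one) - (b : ℂ) • one)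
      (fun _ t => (t.2.1, t.2.2, M t.2.2 - (a : ℂ) • t.2.2 - (b : ℂ) • t.2.1 - (c : ℂ) • t.1)) n
  let v : ℕ → Lp ℂ 2 σ := fun n => (rec' n).1
  have e0 : v 0 = one := rfl
  have e1 : v 1 = M (v 0) - (a : ℂ) • v 0 := rfl
  have e2 : v 2 = M (v 1) - (a : ℂ) • v 1 - (b : ℂ) • v 0 := rfl
  have e3 : ∀ n, v (n + 3) = M (v (n + 2)) - (a : ℂ) • v (n + 2) - (b : ℂ) • v (n + 1)
    - (c : ℂ) • v n := fun n => rfl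
  have hv : ∀ n, (v n : Ω → ℂ) =ᵐ[σ] fun ω => ((Qr a b c (x ω) n : ℝ) : ℂ) := by
    intro n
    have hone : (v 0 : Ω → ℂ) =ᵐ[σ] fun ω => 1 := (memLp_const (1 : ℂ)).coeFn_toLp
    induction n using Nat.strong_induction_on with
    | _ n ih =>
      match n, ih with
      | 0, _ => simpa [Qr] using hone
      | 1, _ =>
        rw [e1]
        filter_upwards [hone, hMc (v 0), Lp.coeFn_sub (M (v 0)) ((a : ℂ) • v 0),
          Lp.coeFn_smul (a : ℂ) (v 0)] with ω h1 h2 h3 h4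
        rw [h3, Pi.sub_apply, h4, Pi.smul_apply, h2, h1]
        simp [Qr]
      | 2, ih =>
        rw [e2]
        filter_upwards [hone, ih 1 (by omega), hMc (v 1), Lp.coeFn_sub (M (v 1)) ((a : ℂ) • v 1),
          Lp.coeFn_smul (a : ℂ) (v 1), Lp.coeFn_smul (b : ℂ) (v 0),
          Lp.coeFn_sub (M (v 1) - (a : ℂ) • v 1) ((b : ℂ) • v 0)] with ω h1 h2 h3 h4 h5 h6 h7
        rw [h7, Pi.sub_apply, h4, Pi.sub_apply, h5, h6, Pi.smul_apply, Pi.smul_apply, h3, h2, h1]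
        simp [Qr]
        ring
      | n + 3, ih =>
        rw [e3]
        filter_upwards [ih n (by omega), ih (n+1) (by omega), ih (n+2) (by omega),
          hMc (v (n+2)), Lp.coeFn_sub (M (v (n+2))) ((a : ℂ) • v (n+2)),
          Lp.coeFn_smul (a : ℂ) (v (n+2)), Lp.coeFn_smul (b : ℂ) (v (n+1)),
          Lp.coeFn_smul (c : ℂ) (v n),
          Lp.coeFn_sub (M (v (n+2)) - (a : ℂ) • v (n+2)) ((b : ℂ) • v (n+1)),
          Lp.coeFn_sub (M (v (n+2)) - (a : ℂ) • v (n+2) - (b : ℂ) • v (n+1)) ((c : ℂ) • v n)]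
          with ω h1 h2 h3 h4 h5 h6 h7 h8 h9 h10
        rw [h10, Pi.sub_apply, h9, Pi.sub_apply, h5, Pi.sub_apply, h6, h7, h8, Pi.smul_apply,
          Pi.smul_apply, Pi.smul_apply, h4, h3, h2, h1]
        simp [Qr]
        ring
  have hin : ∀ n, inner ℂ (v 0) (v n) = ((∫ ω, Qr a b c (x ω) n ∂σ : ℝ) : ℂ) := by
    intro n
    rw [L2.inner_def, ← integral_complex_ofReal]
    apply integral_congr_ae
    filter_upwards [hv 0, hv n] with ω h1 h2
    rw [h1, h2]
    simp [Qr]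
  refine exists_nu_of_operator M hMs v (a := a) (b := b) (c := c) ?_ ?_ ?_ ?_ ?_ hP
  · have h := hin 0
    rw [inner_self_eq_norm_sq_to_K] at h
    have h' : ‖v 0‖ ^ 2 = 1 := by
      have h2 : ∫ ω, Qr a b c (x ω) 0 ∂σ = 1 := by simp [Qr]
      rw [h2] at h
      exact Complex.ofReal_injective (by simpa using h)
    nlinarith [norm_nonneg (v 0)]
  · rw [e1]; abel
  · rw [e2]; abel
  · intro n; rw [e3]; abel
  · intro n; exact (hin (n + 1)).trans (by rw [ho]; simp)



/-- the explicit curve in polar coordinates -/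
lemma exists_curve {b c : ℝ} (hb : 0 < b) (h : b ^ 3 ≥ 27 * c ^ 2) :
    ∃ (r r' : ℝ → ℝ) (t : ℝ), 0 < t ∧ Continuous r ∧ Measurable r' ∧ (∀ θ, |r' θ| ≤ 2 * t) ∧
      (∀ θ, t ≤ r θ) ∧ (∀ θ, r θ ≤ 2 * t) ∧
      (∀ θ, r θ ^ 3 - b * r θ = 2 * c * Real.cos θ) ∧
      (∀ θ ∈ Set.Ioo 0 Real.pi, HasDerivAt r (r' θ) θ) ∧
      (∀ θ ∈ Set.Ioo 0 Real.pi, 0 < 3 * r θ ^ 2 - b) := by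
  obtain ⟨t, ht, htb⟩ : ∃ t : ℝ, 0 < t ∧ b = 3 * t ^ 2 :=
    ⟨Real.sqrt (b / 3), Real.sqrt_pos.mpr (by positivity), by
      rw [Real.sq_sqrt (by positivity)]; ring⟩
  obtain ⟨s, hs⟩ : ∃ s : ℝ, c = s * t ^ 3 := ⟨c / t ^ 3, by field_simp⟩
  have hs1 : s ^ 2 ≤ 1 := by
    rw [htb, hs] at h
    have h6 : 0 < t ^ 6 := by positivity
    have : s ^ 2 * t ^ 6 ≤ 1 * t ^ 6 := by nlinarith
    exact le_of_mul_le_mul_right this h6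
  have hsabs : |s| ≤ 1 := by rwa [← sq_le_one_iff_abs_le_one]
  have hsc : ∀ θ, |s * Real.cos θ| ≤ 1 := fun θ => by
    rw [abs_mul]
    exact mul_le_one₀ hsabs (abs_nonneg _) (Real.abs_cos_le_one θ)
  have hpi := Real.pi_pos
  let φ : ℝ → ℝ := fun θ => Real.arccos (s * Real.cos θ) / 3
  let φ' : ℝ → ℝ := fun θ => (s * Real.sin θ / Real.sqrt (1 - (s * Real.cos θ) ^ 2)) / 3
  have hφ0 : ∀ θ, 0 ≤ φ θ := fun θ => by have := Real.arccos_nonneg (s * Real.cos θ); positivity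
  have hφ1 : ∀ θ, φ θ ≤ Real.pi / 3 := fun θ => by
    have := Real.arccos_le_pi (s * Real.cos θ); simp only [φ]; linarith
  have hin : ∀ θ ∈ Set.Ioo 0 Real.pi, |s * Real.cos θ| < 1 := by
    intro θ hθ
    have hS : 0 < Real.sin θ := Real.sin_pos_of_mem_Ioo hθ
    rw [← sq_lt_one_iff_abs_lt_one]
    nlinarith [Real.sin_sq_add_cos_sq θ, sq_nonneg (Real.cos θ), mul_le_mul_of_nonneg_right hs1 (sq_nonneg (Real.cos θ))]
  refine ⟨fun θ => 2 * t * Real.cos (φ θ), fun θ => 2 * t * (-Real.sin (φ θ) * φ' θ), t, ht, ?_, ?_,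
    ?_, ?_, ?_, ?_, ?_, ?_⟩
  · have := Real.continuous_arccos
    simp only [φ]; fun_prop
  · have h1 : Measurable φ := by
      have := Real.continuous_arccos.measurable
      simp only [φ]; fun_prop
    have h2 : Measurable φ' := by simp only [φ']; fun_prop
    fun_prop
  · intro θ
    have h1 : |φ' θ| ≤ 1 := by
      simp only [φ']
      rw [abs_div, abs_div, abs_of_nonneg (Real.sqrt_nonneg _)]
      have : |s * Real.sin θ| ≤ Real.sqrt (1 - (s * Real.cos θ) ^ 2) := by
        apply Real.abs_le_sqrt
        have e : (s * Real.sin θ) ^ 2 = s ^ 2 - (s * Real.cos θ) ^ 2 := by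
          rw [mul_pow, mul_pow, Real.sin_sq]; ring
        linarith
      have h3 := div_le_one_of_le₀ this (Real.sqrt_nonneg _)
      rw [abs_of_pos (by norm_num : (0:ℝ) < 3)]
      have h4 : 0 ≤ |s * Real.sin θ| / Real.sqrt (1 - (s * Real.cos θ) ^ 2) := by positivity
      linarith
    have h2 := Real.abs_sin_le_one (φ θ)
    rw [abs_mul (2 * t), abs_of_pos (by positivity : 0 < 2 * t), abs_mul, abs_neg]
    have := mul_le_one₀ h2 (abs_nonneg _) h1
    nlinarith
  · intro θ
    have : Real.cos (Real.pi / 3) ≤ Real.cos (φ θ) :=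
      Real.cos_le_cos_of_nonneg_of_le_pi (hφ0 θ) (by linarith) (hφ1 θ)
    rw [Real.cos_pi_div_three] at this
    nlinarith
  · intro θ
    nlinarith [Real.cos_le_one (φ θ)]
  · intro θ
    have h3 : Real.cos (3 * φ θ) = s * Real.cos θ := by
      have e : 3 * φ θ = Real.arccos (s * Real.cos θ) := by simp only [φ]; ring
      rw [e, Real.cos_arccos (abs_le.mp (hsc θ)).1 (abs_le.mp (hsc θ)).2]
    rw [Real.cos_three_mul] at h3
    rw [htb, hs]
    linear_combination 2 * t ^ 3 * h3
  · intro θ hθ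
    have hlt := abs_lt.mp (hin θ hθ)
    have h1 : HasDerivAt φ (φ' θ) θ := by
      have := ((Real.hasDerivAt_arccos hlt.1.ne' hlt.2.ne).comp θ
        ((Real.hasDerivAt_cos θ).const_mul s)).div_const 3
      refine this.congr_deriv ?_
      change _ = (s * Real.sin θ / Real.sqrt (1 - (s * Real.cos θ) ^ 2)) / 3
      ring
    exact (h1.cos).const_mul (2 * t)
  · intro θ hθ
    have hlt := abs_lt.mp (hin θ hθ)
    have h1 : φ θ < Real.pi / 3 := by
      have : Real.arccos (s * Real.cos θ) < Real.pi := by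
        rw [← Real.arccos_neg_one]
        exact Real.arccos_lt_arccos le_rfl hlt.1 hlt.2.le
      simp only [φ]; linarith
    have : Real.cos (Real.pi / 3) < Real.cos (φ θ) :=
      Real.cos_lt_cos_of_nonneg_of_le_pi (hφ0 θ) (by linarith) h1
    rw [Real.cos_pi_div_three] at this
    simp only
    rw [htb]
    have h2 : t < 2 * t * Real.cos (φ θ) := by nlinarith
    nlinarith

/-- negative part of the Laurent polynomials -/
def Dp (b c : ℝ) : ℕ → Polynomial ℝ
  | 0 => -Polynomial.C b - Polynomial.C (2 * c) * Polynomial.X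
  | 1 => (Polynomial.C b * Polynomial.X + Polynomial.C c * Polynomial.X ^ 2) *
      (-Polynomial.C b - Polynomial.C (2 * c) * Polynomial.X) - Polynomial.C c
  | n + 2 => (Polynomial.C b * Polynomial.X + Polynomial.C c * Polynomial.X ^ 2) * Dp b c (n + 1)
      + Polynomial.C c * Polynomial.X * Dp b c n

lemma laurent_identity {a b c x : ℝ} {w y : ℂ} (hwy : w * y = 1)
    (hx : (x : ℂ) = a + w + b * y + c * y ^ 2) (n : ℕ) :
    ((Qr a b c x n : ℝ) : ℂ) * (1 - b * y ^ 2 - 2 * c * y ^ 3) =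
      w ^ n + y ^ 2 * Polynomial.aeval y (Dp b c n) := by
  have hy : y ≠ 0 := right_ne_zero_of_mul_eq_one hwy
  have hw : w = y⁻¹ := eq_inv_of_mul_eq_one_left hwy
  have d2 : ∀ n, Polynomial.aeval y (Dp b c (n+2)) = (b * y + c * y ^ 2) * Polynomial.aeval y (Dp b c (n+1)) + c * y * Polynomial.aeval y (Dp b c n) := by
    intro n; simp [Dp]
  induction n using Nat.strong_induction_on with
  | _ n ih =>
    match n, ih with
    | 0, _ => simp [Qr, Dp]; ring
    | 1, _ => 
      simp [Qr, Dp]; rw [hx, hw]; field_simp; ring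
    | 2, _ =>
      rw [d2]
      simp [Qr, Dp]; rw [hx, hw]; field_simp; ring
    | n + 3, ih =>
      have i0 := ih n (by omega)
      have i1 := ih (n+1) (by omega)
      have i2 := ih (n+2) (by omega)
      have k1 := d2 (n+1)
      have k0 := d2 n
      have e : ((Qr a b c x (n + 3) : ℝ) : ℂ) = (w + b * y + c * y ^ 2) * (Qr a b c x (n+2) : ℝ)
        - b * (Qr a b c x (n+1) : ℝ) - c * (Qr a b c x n : ℝ) := by
        simp only [Qr]; push_cast; rw [hx]; ring
      rw [e, show n + 3 = n + 1 + 2 from rfl, k1]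
      rw [show n + 1 + 1 = n + 2 from rfl]
      rw [k0] at i2 ⊢
      generalize Polynomial.aeval y (Dp b c (n+1)) = D1 at *
      generalize Polynomial.aeval y (Dp b c n) = D0 at *
      have e1 : (w + b * y + c * y ^ 2) * (Qr a b c x (n+2) : ℝ) * (1 - b * y ^ 2 - 2 * c * y ^ 3)
         = (w + b * y + c * y ^ 2) * (w ^ (n+2) + y ^ 2 * ((b * y + c * y ^ 2) * D1 + c * y * D0)) := by
        rw [mul_assoc, i2]
      linear_combination e1 - b * i1 - c * i0 + (y ^ 2 * (b * D1 + c * y * D1 + c * D0) + b * w ^ (n+1) + c * w ^ n + c * y * w ^ (n+1)) * hwy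



lemma hasDerivAt_pow_div {f : ℝ → ℂ} {f' : ℂ} {x : ℝ} (h : HasDerivAt f f' x) (n : ℕ) :
    HasDerivAt (fun θ => f θ ^ (n + 1) / ((n + 1 : ℕ) : ℂ)) (f x ^ n * f') x := by
  refine ((h.fun_pow (n + 1)).div_const _).congr_deriv ?_
  have : ((n + 1 : ℕ) : ℂ) ≠ 0 := Nat.cast_ne_zero.mpr (by omega)
  rw [Nat.add_sub_cancel]
  field_simp

lemma curve_density_nonneg {b c r r' C S : ℝ} (hr : 0 < r) (hCS : S ^ 2 + C ^ 2 = 1)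
    (h1 : r ^ 3 - b * r = 2 * c * C) (h2 : (3 * r ^ 2 - b) * r' = -2 * c * S)
    (h3 : 0 < 3 * r ^ 2 - b) :
    0 ≤ (((1 : ℂ) - b * (⟨C / r, -S / r⟩ : ℂ) ^ 2 - 2 * c * (⟨C / r, -S / r⟩ : ℂ) ^ 3) *
      (⟨r' / r, 1⟩ : ℂ)).im := by
  obtain ⟨A, hA⟩ : ∃ A, A = 1 - b * (C ^ 2 - S ^ 2) / r ^ 2 - 2 * c * (C ^ 3 - 3 * C * S ^ 2) / r ^ 3 :=
    ⟨_, rfl⟩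
  obtain ⟨B, hB⟩ : ∃ B, B = 2 * b * C * S / r ^ 2 + 2 * c * (3 * C ^ 2 * S - S ^ 3) / r ^ 3 :=
    ⟨_, rfl⟩
  have e : ((1 : ℂ) - b * (⟨C / r, -S / r⟩ : ℂ) ^ 2 - 2 * c * (⟨C / r, -S / r⟩ : ℂ) ^ 3) =
      ⟨A, B⟩ := by
    apply Complex.ext
    · simp [pow_succ]; rw [hA]; field_simp; ring
    · simp [pow_succ]; rw [hB]; field_simp; ring
  rw [e]
  simp only [Complex.mul_im, mul_one]
  have hA' : A * r ^ 3 = 2 * r * S ^ 2 * (2 * r ^ 2 - b) := by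
    have : A * r ^ 3 = r ^ 3 - b * r * (C ^ 2 - S ^ 2) - (2 * c * C) * (C ^ 2 - 3 * S ^ 2) := by
      rw [hA]; field_simp
    rw [this, ← h1]
    linear_combination (-r ^ 3) * hCS
  have hB' : B * r ^ 3 = S * (C * r * (3 * r ^ 2 - b) - 2 * c * S ^ 2) := by
    have : B * r ^ 3 = S * (2 * b * C * r + 3 * C * (2 * c * C) - 2 * c * S ^ 2) := by
      rw [hB]; field_simp; ring
    rw [this, ← h1]
    ring
  have key : (A + B * (r' / r)) * (r ^ 4 * (3 * r ^ 2 - b)) =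
      S ^ 2 * ((3 * r ^ 2 - b) ^ 2 * r ^ 2 + 4 * c ^ 2 * S ^ 2) := by
    have : (A + B * (r' / r)) * (r ^ 4 * (3 * r ^ 2 - b)) =
      (A * r ^ 3) * r * (3 * r ^ 2 - b) + (B * r ^ 3) * ((3 * r ^ 2 - b) * r') := by
      field_simp
    rw [this, hA', hB', h2]
    linear_combination S ^ 2 * r * (3 * r ^ 2 - b) * h1
  have hpos : 0 < r ^ 4 * (3 * r ^ 2 - b) := by positivity
  have h0 : 0 ≤ (A + B * (r' / r)) * (r ^ 4 * (3 * r ^ 2 - b)) := by rw [key]; positivity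
  exact nonneg_of_mul_nonneg_left h0 hpos

lemma exists_nu_pos {a b c : ℝ} (hb : 0 < b) (h : b ^ 3 ≥ 27 * c ^ 2)
    {P : ℕ → Polynomial ℝ} (hP : Rec4 a b c P) :
    ∃ ν : Measure ℝ, IsProbabilityMeasure ν ∧
      (∀ n : ℕ, Integrable (fun x : ℝ => x ^ n) ν) ∧
      ∀ n : ℕ, 1 ≤ n → ∫ x, (P n).eval x ∂ν = 0 := by
  obtain ⟨r, r', t, ht, hrc, hrm, hrb, hr1, hr2, hr3, hrd, hrk⟩ := exists_curve hb h
  have hr0 : ∀ θ, 0 < r θ := fun θ => ht.trans_le (hr1 θ)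
  have hrC : ∀ θ, (r θ : ℂ) ≠ 0 := fun θ => Complex.ofReal_ne_zero.mpr (hr0 θ).ne'
  have hpi := Real.pi_pos
  let E : ℝ → ℂ := fun θ => Complex.exp (θ * Complex.I)
  have hE : ∀ θ, E θ = ⟨Real.cos θ, Real.sin θ⟩ := fun θ => by
    simp only [E]; rw [Complex.exp_mul_I]; apply Complex.ext <;> simp [← Complex.ofReal_cos, ← Complex.ofReal_sin]
  have hE0 : ∀ θ, E θ ≠ 0 := fun θ => Complex.exp_ne_zero _
  have hEc : Continuous E := by simp only [E]; fun_prop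
  let w : ℝ → ℂ := fun θ => r θ * E θ
  let y : ℝ → ℂ := fun θ => (w θ)⁻¹
  let w' : ℝ → ℂ := fun θ => (r' θ + r θ * Complex.I) * E θ
  have hw0 : ∀ θ, w θ ≠ 0 := fun θ => mul_ne_zero (hrC θ) (hE0 θ)
  have hwy : ∀ θ, w θ * y θ = 1 := fun θ => mul_inv_cancel₀ (hw0 θ)
  have hwc : Continuous w := by
    exact (Complex.continuous_ofReal.comp hrc).mul hEc
  have hyc : Continuous y := hwc.inv₀ hw0
  have hye : ∀ θ, y θ = ⟨Real.cos θ / r θ, -Real.sin θ / r θ⟩ := by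
    intro θ
    refine inv_eq_of_mul_eq_one_right ?_
    simp only [w, hE]
    have := Real.sin_sq_add_cos_sq θ
    have h0 := (hr0 θ).ne'
    apply Complex.ext
    · simp; field_simp; linarith
    · simp; field_simp; ring
  have hyw' : ∀ θ, y θ * w' θ = ⟨r' θ / r θ, 1⟩ := by
    intro θ
    have e : (⟨r' θ / r θ, 1⟩ : ℂ) = r' θ / r θ + Complex.I := by
      apply Complex.ext <;> simp [← Complex.ofReal_div]
    rw [e]
    simp only [y, w, w']
    have := hrC θ
    have := hE0 θ
    field_simp
  have hwd : ∀ θ ∈ Set.Ioo 0 Real.pi, HasDerivAt w (w' θ) θ := by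
    intro θ hθ
    have h1 : HasDerivAt E (E θ * Complex.I) θ := by
      have := ((Complex.ofRealCLM.hasDerivAt (x := θ)).mul_const Complex.I).cexp
      simpa using this
    refine ((hrd θ hθ).ofReal_comp.mul h1).congr_deriv ?_
    simp only [w']; ring
  have hyd : ∀ θ ∈ Set.Ioo 0 Real.pi, HasDerivAt y (-(y θ ^ 2 * w' θ)) θ := by
    intro θ hθ
    refine ((hwd θ hθ).fun_inv (hw0 θ)).congr_deriv ?_
    simp only [y]; field_simp
  have hw'm : Measurable w' := by
    exact ((Complex.measurable_ofReal.comp hrm).add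
      ((Complex.measurable_ofReal.comp hrc.measurable).mul_const _)).mul hEc.measurable
  have hw'i : IntervalIntegrable w' volume 0 Real.pi := by
    have hc : IntervalIntegrable (fun _ : ℝ => (4 * t : ℝ)) volume 0 Real.pi :=
      intervalIntegrable_const
    refine hc.mono_fun hw'm.aestronglyMeasurable (Filter.Eventually.of_forall fun θ => ?_)
    have hEn : ‖E θ‖ = 1 := Complex.norm_exp_ofReal_mul_I θ
    simp only [w']
    rw [norm_mul, hEn, mul_one, Real.norm_of_nonneg (by positivity)]
    refine (norm_add_le _ _).trans ?_
    simp only [norm_mul, Complex.norm_real, Complex.norm_I, mul_one, Real.norm_eq_abs]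
    rw [abs_of_pos (hr0 θ)]
    linarith [hrb θ, hr2 θ]
  have hIntg : ∀ f : ℝ → ℂ, Continuous f → IntervalIntegrable (fun θ => f θ * w' θ) volume 0 Real.pi :=
    fun f hf => hw'i.continuousOn_mul hf.continuousOn
  have wend0 : w 0 = ((r 0 : ℝ) : ℂ) := by simp [w, E]
  have wend1 : w Real.pi = ((-r Real.pi : ℝ) : ℂ) := by simp [w, E, Complex.exp_pi_mul_I]
  have yend0 : y 0 = (((r 0)⁻¹ : ℝ) : ℂ) := by simp [y, wend0]
  have yend1 : y Real.pi = (((-r Real.pi)⁻¹ : ℝ) : ℂ) := by simp only [y, wend1]; push_cast; rfl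
  -- the functional
  let J : (ℝ → ℂ) → ℝ := fun f => (∫ θ in (0:ℝ)..Real.pi, f θ * w' θ).im
  have hJw : ∀ n : ℕ, J (fun θ => w θ ^ n) = 0 := by
    intro n
    have hF : ∫ θ in (0:ℝ)..Real.pi, w θ ^ n * w' θ =
        w Real.pi ^ (n + 1) / ((n + 1 : ℕ) : ℂ) - w 0 ^ (n + 1) / ((n + 1 : ℕ) : ℂ) := by
      refine intervalIntegral.integral_eq_sub_of_hasDerivAt_of_le
        (f := fun θ => w θ ^ (n + 1) / ((n + 1 : ℕ) : ℂ)) hpi.le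
        (by fun_prop) ?_ (hIntg _ (hwc.pow n))
      intro θ hθ
      exact hasDerivAt_pow_div (hwd θ hθ) n
    simp only [J]
    rw [hF, wend0, wend1]
    norm_cast
  have hJy : ∀ n : ℕ, J (fun θ => y θ ^ n * y θ ^ 2) = 0 := by
    intro n
    have hF : ∫ θ in (0:ℝ)..Real.pi, y θ ^ n * y θ ^ 2 * w' θ =
        -(y Real.pi ^ (n + 1) / ((n + 1 : ℕ) : ℂ)) - -(y 0 ^ (n + 1) / ((n + 1 : ℕ) : ℂ)) := by
      refine intervalIntegral.integral_eq_sub_of_hasDerivAt_of_le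
        (f := fun θ => -(y θ ^ (n + 1) / ((n + 1 : ℕ) : ℂ))) hpi.le
        (by fun_prop) ?_ (hIntg _ (by fun_prop))
      intro θ hθ
      refine (hasDerivAt_pow_div (hyd θ hθ) n).fun_neg.congr_deriv ?_
      ring
    simp only [J]
    rw [hF, yend0, yend1]
    norm_cast
  have hJadd : ∀ f g : ℝ → ℂ, Continuous f → Continuous g → J (fun θ => f θ + g θ) = J f + J g := by
    intro f g hf hg
    simp only [J, add_mul]
    rw [intervalIntegral.integral_add (hIntg f hf) (hIntg g hg), Complex.add_im]
  have hpc : ∀ p : Polynomial ℝ, Continuous (fun θ => Polynomial.aeval (y θ) p) := by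
    intro p
    exact p.continuous_aeval.comp hyc
  have hpc2 : ∀ p : Polynomial ℝ, Continuous (fun θ => Polynomial.aeval (y θ) p * y θ ^ 2) :=
    fun p => (hpc p).mul (hyc.pow 2)
  have hJp : ∀ p : Polynomial ℝ, J (fun θ => Polynomial.aeval (y θ) p * y θ ^ 2) = 0 := by
    intro p
    induction p using Polynomial.induction_on' with
    | add p q hp hq =>
      simp only [map_add, add_mul]
      rw [hJadd _ _ (hpc2 p) (hpc2 q), hp, hq, add_zero]
    | monomial n s =>
      simp only [Polynomial.aeval_monomial, Complex.coe_algebraMap]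
      have : J (fun θ => (s : ℂ) * y θ ^ n * y θ ^ 2) = s * J (fun θ => y θ ^ n * y θ ^ 2) := by
        simp only [J]
        rw [← Complex.im_ofReal_mul, ← intervalIntegral.integral_const_mul]
        simp only [mul_assoc]
      rw [this, hJy, mul_zero]
  have hJ1 : J y = Real.pi := by
    have e : J y = ∫ θ in (0:ℝ)..Real.pi, (y θ * w' θ).im :=
      (Complex.imCLM.intervalIntegral_comp_comm (hIntg y hyc)).symm
    rw [e]
    simp [hyw']
  let x : ℝ → ℝ := fun θ => a + (w θ + b * y θ + c * y θ ^ 2).re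
  have hxC : ∀ θ, (x θ : ℂ) = a + w θ + b * y θ + c * y θ ^ 2 := by
    intro θ
    have him : (w θ + b * y θ + c * y θ ^ 2).im = 0 := by
      rw [hye]
      simp only [w, hE, pow_two]
      simp
      have h0 := (hr0 θ).ne'
      have := hr3 θ
      field_simp
      linear_combination Real.sin θ * this
    apply Complex.ext
    · simp [x]; ring
    · have h2 : ((a : ℂ) + w θ + b * y θ + c * y θ ^ 2) = a + (w θ + b * y θ + c * y θ ^ 2) := by ring
      rw [h2, Complex.add_im, him]; simp
  have hxm : Continuous x := by
    simp only [x]; exact continuous_const.add (Complex.continuous_re.comp (by fun_prop))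
  have hEn : ∀ θ, ‖E θ‖ = 1 := fun θ => Complex.norm_exp_ofReal_mul_I θ
  have hwn : ∀ θ, ‖w θ‖ = r θ := fun θ => by
    simp only [w]; rw [norm_mul, hEn, mul_one, Complex.norm_real, Real.norm_of_nonneg (hr0 θ).le]
  have hyn : ∀ θ, ‖y θ‖ ≤ t⁻¹ := fun θ => by
    simp only [y]; rw [norm_inv, hwn]; exact inv_anti₀ ht (hr1 θ)
  have hxb : ∀ θ, |x θ| ≤ |a| + (2 * t + |b| * t⁻¹ + |c| * t⁻¹ ^ 2) := by
    intro θ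
    refine (abs_add_le _ _).trans ?_
    gcongr
    refine (Complex.abs_re_le_norm _).trans ?_
    refine (norm_add₃_le).trans ?_
    rw [hwn, norm_mul, norm_mul, norm_pow, Complex.norm_real, Complex.norm_real]
    simp only [Real.norm_eq_abs]
    gcongr
    · exact hr2 θ
    · exact hyn θ
    · exact hyn θ
  -- density
  let z' : ℝ → ℂ := fun θ => 1 - b * y θ ^ 2 - 2 * c * y θ ^ 3
  have hz'c : Continuous z' := by simp only [z']; fun_prop
  let ρ : ℝ → ℝ := fun θ => Real.pi⁻¹ * (z' θ * y θ * w' θ).im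
  have hρm : Measurable ρ := by
    exact (Complex.measurable_im.comp ((hz'c.measurable.mul hyc.measurable).mul hw'm)).const_mul _
  have hρ0 : ∀ θ ∈ Set.Ioo 0 Real.pi, 0 ≤ ρ θ := by
    intro θ hθ
    have hd : (3 * r θ ^ 2 - b) * r' θ = -2 * c * Real.sin θ := by
      have h1 : HasDerivAt (fun θ => r θ ^ 3 - b * r θ) (3 * r θ ^ 2 * r' θ - b * r' θ) θ := by
        refine (((hrd θ hθ).fun_pow 3).fun_sub ((hrd θ hθ).const_mul b)).congr_deriv ?_
        simp
      have h2 : HasDerivAt (fun θ => r θ ^ 3 - b * r θ) (2 * c * -Real.sin θ) θ := by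
        simp only [hr3]
        exact (Real.hasDerivAt_cos θ).const_mul (2 * c)
      have := h1.unique h2
      linarith
    have := curve_density_nonneg (hr0 θ) (Real.sin_sq_add_cos_sq θ) (hr3 θ) hd (hrk θ hθ)
    rw [← hyw', ← hye, ← mul_assoc] at this
    simp only [ρ]
    exact mul_nonneg (inv_nonneg.mpr hpi.le) this
  have hρi : IntervalIntegrable ρ volume 0 Real.pi := by
    have h1 := hIntg (fun θ => z' θ * y θ) (hz'c.mul hyc)
    exact ((Complex.imCLM.integrable_comp h1.1).const_mul _ |> fun h => ⟨h, by
      simpa [Set.Ioc_eq_empty hpi.le.not_gt] using (integrableOn_empty)⟩)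
  -- the integral of Q_n
  have hQ : ∀ n, ∫ θ in (0:ℝ)..Real.pi, ρ θ * Qr a b c (x θ) n =
      Real.pi⁻¹ * J (fun θ => w θ ^ n * y θ) := by
    intro n
    have e1 : ∀ θ, ρ θ * Qr a b c (x θ) n = Real.pi⁻¹ *
        ((w θ ^ n * y θ + Polynomial.aeval (y θ) (Dp b c n * Polynomial.X) * y θ ^ 2) * w' θ).im := by
      intro θ
      have hl := laurent_identity (hwy θ) (hxC θ) n
      simp only [ρ, z']
      rw [mul_assoc, mul_comm (Complex.im _), ← Complex.im_ofReal_mul]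
      congr 2
      generalize w' θ = ω
      calc _ = ((Qr a b c (x θ) n : ℝ) * (1 - b * y θ ^ 2 - 2 * c * y θ ^ 3)) * (y θ * ω) := by ring
        _ = _ := by
          rw [hl]
          simp only [map_mul, Polynomial.aeval_X]
          ring
    have hc1 : Continuous (fun θ => w θ ^ n * y θ) := by fun_prop
    have hc2 := hpc2 (Dp b c n * Polynomial.X)
    simp only [e1]
    rw [intervalIntegral.integral_const_mul]
    congr 1
    have hJs := hJadd _ _ hc1 hc2
    rw [hJp, add_zero] at hJs
    rw [← hJs]
    exact (Complex.imCLM.intervalIntegral_comp_comm (hIntg _ (hc1.add hc2)))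
  let σ : Measure ℝ := (volume.restrict (Set.Ioo 0 Real.pi)).withDensity
    (fun θ => ENNReal.ofReal (ρ θ))
  have hσi : ∀ g : ℝ → ℝ, ∫ θ, g θ ∂σ = ∫ θ in (0:ℝ)..Real.pi, ρ θ * g θ := by
    intro g
    simp only [σ]
    rw [integral_withDensity_eq_integral_toReal_smul hρm.ennreal_ofReal
      (Filter.Eventually.of_forall fun θ => ENNReal.ofReal_lt_top),
      intervalIntegral.integral_of_le hpi.le, integral_Ioc_eq_integral_Ioo]
    refine setIntegral_congr_fun measurableSet_Ioo fun θ hθ => ?_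
    simp only [smul_eq_mul]
    rw [ENNReal.toReal_ofReal (hρ0 θ hθ)]
  have htot : ∫ θ in (0:ℝ)..Real.pi, ρ θ = 1 := by
    have := hQ 0
    simp only [Qr, mul_one, pow_zero, one_mul] at this
    rw [this, hJ1, inv_mul_cancel₀ hpi.ne']
  have hσp : IsProbabilityMeasure σ := by
    constructor
    simp only [σ]
    rw [withDensity_apply _ MeasurableSet.univ, Measure.restrict_univ,
      ← ofReal_integral_eq_lintegral_ofReal]
    · rw [← integral_Ioc_eq_integral_Ioo, ← intervalIntegral.integral_of_le hpi.le, htot]; simp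
    · exact hρi.1.mono_set Set.Ioo_subset_Ioc_self
    · exact (ae_restrict_iff' measurableSet_Ioo).mpr (Filter.Eventually.of_forall hρ0)
  refine exists_nu_of_measure σ x hxm.measurable _ hxb ?_ hP
  intro n
  rw [hσi, hQ]
  have : (fun θ => w θ ^ (n + 1) * y θ) = fun θ => w θ ^ n := by
    funext θ; rw [pow_succ, mul_assoc, hwy, mul_one]
  rw [this, hJw, mul_zero]

lemma exists_nu_of_ge {a b c : ℝ} (h : b ^ 3 ≥ 27 * c ^ 2)
    {P : ℕ → Polynomial ℝ} (hP : Rec4 a b c P) :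
    ∃ ν : Measure ℝ, IsProbabilityMeasure ν ∧
      (∀ n : ℕ, Integrable (fun x : ℝ => x ^ n) ν) ∧
      ∀ n : ℕ, 1 ≤ n → ∫ x, (P n).eval x ∂ν = 0 := by
  have hb : 0 ≤ b := by
    by_contra hb
    push Not at hb
    have : b ^ 3 < 0 := Odd.pow_neg (by decide) hb
    nlinarith [sq_nonneg c]
  rcases hb.lt_or_eq with hb | hb
  · exact exists_nu_pos hb h hP
  · subst hb
    have hc : c = 0 := by nlinarith [sq_nonneg c]
    subst hc
    refine exists_nu_of_measure (Measure.dirac (0 : ℝ)) (fun _ => a) measurable_const |a|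
      (fun _ => le_rfl) ?_ hP
    have : ∀ n, Qr a 0 0 a (n + 1) = 0 := by
      intro n
      match n with
      | 0 => simp [Qr]
      | 1 => simp [Qr]
      | n + 2 => simp [Qr]
    intro n; simp [this]



lemma gen_identity {a b c : ℝ} {P : ℕ → Polynomial ℝ} (hP : Rec4 a b c P) (x : ℝ) (s z : ℂ)
    (hs : s ≠ 0) (hz : z = s⁻¹ + a + b * s + c * s ^ 2) (n : ℕ) :
    (z - x) * ∑ i ∈ Finset.range (n + 3), (((P i).eval x : ℝ) : ℂ) * s ^ i =
      (z - s) - s ^ (n + 2) * ((((P (n + 3)).eval x : ℝ) : ℂ) - b * s * (((P (n + 2)).eval x : ℝ) : ℂ)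
        - c * s ^ 2 * (((P (n + 2)).eval x : ℝ) : ℂ) - c * s * (((P (n + 1)).eval x : ℝ) : ℂ)) := by
  have e0 : (((P 0).eval x : ℝ) : ℂ) = 1 := by rw [hP.h0]; simp
  have e1 : (((P 1).eval x : ℝ) : ℂ) = x := by rw [hP.h1]; simp
  have e2 : (x : ℂ) * (((P 1).eval x : ℝ) : ℂ) = (((P 2).eval x : ℝ) : ℂ) +
      a * (((P 1).eval x : ℝ) : ℂ) + (((P 0).eval x : ℝ) : ℂ) := by
    have := congrArg (fun p => ((p.eval x : ℝ) : ℂ)) hP.h2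
    simpa using this
  have e3 : (x : ℂ) * (((P 2).eval x : ℝ) : ℂ) = (((P 3).eval x : ℝ) : ℂ) +
      a * (((P 2).eval x : ℝ) : ℂ) + b * (((P 1).eval x : ℝ) : ℂ) := by
    have := congrArg (fun p => ((p.eval x : ℝ) : ℂ)) hP.h3
    simpa using this
  have hsz : s * z = 1 + a * s + b * s ^ 2 + c * s ^ 3 := by rw [hz]; field_simp
  have hcan : ∀ u v : ℂ, s * u = s * v → u = v := fun u v h => mul_left_cancel₀ hs h
  induction n with
  | zero =>
    simp only [Finset.sum_range_succ, Finset.sum_range_zero, zero_add]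
    apply hcan
    generalize (((P 0).eval x : ℝ) : ℂ) = p0 at *
    generalize (((P 1).eval x : ℝ) : ℂ) = p1 at *
    generalize (((P 2).eval x : ℝ) : ℂ) = p2 at *
    generalize (((P 3).eval x : ℝ) : ℂ) = p3 at *
    subst e0
    linear_combination (p1 * s + p2 * s ^ 2) * hsz + s * e1 - s ^ 2 * e2 - s ^ 3 * e3
  | succ n ih =>
    have e4 : (x : ℂ) * (((P (n + 3)).eval x : ℝ) : ℂ) = (((P (n + 4)).eval x : ℝ) : ℂ) +
        a * (((P (n + 3)).eval x : ℝ) : ℂ) + b * (((P (n + 2)).eval x : ℝ) : ℂ)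
        + c * (((P (n + 1)).eval x : ℝ) : ℂ) := by
      have := congrArg (fun p => ((p.eval x : ℝ) : ℂ)) (hP.h4 n)
      simpa using this
    rw [show n + 1 + 3 = n + 3 + 1 from rfl, Finset.sum_range_succ, mul_add, ih]
    simp only [show n + 3 + 1 = n + 4 from rfl, show n + 1 + 2 = n + 3 from rfl,
      show n + 1 + 1 = n + 2 from rfl]
    generalize (((P (n + 1)).eval x : ℝ) : ℂ) = p1 at *
    generalize (((P (n + 2)).eval x : ℝ) : ℂ) = p2 at *
    generalize (((P (n + 3)).eval x : ℝ) : ℂ) = p3 at *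
    generalize (((P (n + 4)).eval x : ℝ) : ℂ) = p4 at *
    apply hcan
    linear_combination (p3 * s ^ (n + 3)) * hsz - s ^ (n + 4) * e4

lemma norm_sub_real_ge {z : ℂ} (hz : 0 < z.im) (x : ℝ) : z.im ≤ ‖z - x‖ := by
  have := Complex.abs_im_le_norm (z - x)
  simp at this
  exact (le_abs_self _).trans this

lemma sub_real_ne {z : ℂ} (hz : 0 < z.im) (x : ℝ) : z - x ≠ 0 := by
  have := norm_sub_real_ge hz x
  exact norm_pos_iff.mp (hz.trans_le this)

lemma norm_inv_sub_le {z : ℂ} (hz : 0 < z.im) (x : ℝ) : ‖(z - x)⁻¹‖ ≤ z.im⁻¹ := by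
  rw [norm_inv]; exact inv_anti₀ hz (norm_sub_real_ge hz x)

lemma integrable_inv_sub (ν : Measure ℝ) [IsProbabilityMeasure ν] {z : ℂ} (hz : 0 < z.im) :
    Integrable (fun x : ℝ => (z - x)⁻¹) ν := by
  refine (integrable_const (z.im⁻¹ : ℝ)).mono' ?_ (Filter.Eventually.of_forall (norm_inv_sub_le hz))
  exact (Continuous.inv₀ (by fun_prop) (sub_real_ne hz)).aestronglyMeasurable

/-- the Stieltjes transform -/
def stG (ν : Measure ℝ) (z : ℂ) : ℂ := ∫ x : ℝ, (z - x)⁻¹ ∂ν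

lemma stG_diff (ν : Measure ℝ) [IsProbabilityMeasure ν] :
    DifferentiableOn ℂ (stG ν) {z | 0 < z.im} := by
  intro z0 hz0
  simp only [Set.mem_ofPred_eq] at hz0
  apply DifferentiableAt.differentiableWithinAt
  have hopen : {z : ℂ | z0.im / 2 < z.im} ∈ nhds z0 :=
    (isOpen_lt continuous_const Complex.continuous_im).mem_nhds (by simp; linarith)
  have key := hasDerivAt_integral_of_dominated_loc_of_deriv_le (μ := ν) (𝕜 := ℂ)
    (F := fun (z : ℂ) (x : ℝ) => (z - x)⁻¹) (F' := fun (z : ℂ) (x : ℝ) => -1 / (z - x) ^ 2)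
    (x₀ := z0) (bound := fun _ => ((z0.im / 2)⁻¹) ^ 2) hopen ?_ ?_ ?_ ?_ ?_ ?_
  · exact key.2.differentiableAt
  · filter_upwards [hopen] with z hz
    have hz1 : z0.im / 2 < z.im := hz
    have hz : 0 < z.im := by linarith
    exact (integrable_inv_sub ν hz).aestronglyMeasurable
  · exact integrable_inv_sub ν hz0
  · refine Continuous.aestronglyMeasurable ?_
    refine Continuous.div continuous_const (by fun_prop) fun x => pow_ne_zero _ (sub_real_ne hz0 x)
  · refine Filter.Eventually.of_forall fun x z hz => ?_
    have hz1 : z0.im / 2 < z.im := hz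
    have hz : 0 < z.im := by linarith
    rw [neg_div, norm_neg, one_div, ← inv_pow, norm_pow]
    gcongr
    exact (norm_inv_sub_le hz x).trans (inv_anti₀ (by linarith) hz1.le)
  · exact integrable_const _
  · refine Filter.Eventually.of_forall fun x z hz => ?_
    have hz1 : z0.im / 2 < z.im := hz
    have hz : 0 < z.im := by linarith
    have := ((hasDerivAt_id z).sub_const (x : ℂ)).fun_inv (sub_real_ne hz x)
    simpa using this

lemma stG_eq {a b c : ℝ} {P : ℕ → Polynomial ℝ} (hP : Rec4 a b c P) (ν : Measure ℝ)
    [IsProbabilityMeasure ν] (hν : ∀ n : ℕ, Integrable (fun x : ℝ => x ^ n) ν)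
    (h0 : ∀ n : ℕ, 1 ≤ n → ∫ x, (P n).eval x ∂ν = 0) (s z : ℂ)
    (hs : s ≠ 0) (hz : z = s⁻¹ + a + b * s + c * s ^ 2) (hzi : 0 < z.im)
    (hsE : ‖s‖ * (3 + 2 * (|a| + |b| + |c|)) < 1) :
    (z - s) * stG ν z = 1 := by
  obtain ⟨E, hE⟩ : ∃ E, E = 3 + 2 * (|a| + |b| + |c|) := ⟨_, rfl⟩
  rw [← hE] at hsE
  have hE1 : 1 ≤ E := by
    have := abs_nonneg a; have := abs_nonneg b; have := abs_nonneg c; linarith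
  have hL0 : intL ν hν 1 = 1 := by simp [intL]
  have hab : ∀ n, ∫ x, |(P n).eval x| ∂ν ≤ E ^ n := by
    intro n
    have hb := bound_all hP (intL ν hν) hL0 h0 n n 0
    rw [← hE] at hb
    have hi2 : Integrable (fun x => (P n).eval x * (P n).eval x) ν := by
      simpa using integrable_poly hν (P n * P n)
    have e : intL ν hν (Polynomial.X ^ 0 * P n * P n) = ∫ x, (P n).eval x * (P n).eval x ∂ν := by
      simp [intL]
    rw [e] at hb
    have h1 : ∫ x, |(P n).eval x| ∂ν ≤ ∫ x, (1 + (P n).eval x * (P n).eval x) / 2 ∂ν := by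
      refine integral_mono (integrable_poly hν (P n)).abs (((integrable_const _).add hi2).div_const _) ?_
      intro x
      simp only
      nlinarith [sq_nonneg (|(P n).eval x| - 1), abs_mul_abs_self ((P n).eval x)]
    rw [integral_div, integral_add (integrable_const _) hi2] at h1
    have h2 : (1 : ℝ) ≤ E ^ n := one_le_pow₀ hE1
    have h3 := (le_abs_self _).trans hb
    simp at h1 h3
    linarith
  let p : ℕ → ℝ → ℂ := fun n x => (((P n).eval x : ℝ) : ℂ)
  have hpi : ∀ n, Integrable (p n) ν := fun n => (integrable_poly hν (P n)).ofReal
  have hpn : ∀ n, ∫ x, ‖p n x‖ ∂ν ≤ E ^ n := by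
    intro n
    simpa [p] using hab n
  let R : ℕ → ℝ → ℂ := fun n x => s ^ (n + 2) * (p (n + 3) x - b * s * p (n + 2) x
        - c * s ^ 2 * p (n + 2) x - c * s * p (n + 1) x)
  have hRi : ∀ n, Integrable (R n) ν := fun n =>
    (((((hpi (n + 3)).sub ((hpi (n + 2)).const_mul (b * s))).sub
      ((hpi (n + 2)).const_mul (c * s ^ 2))).sub ((hpi (n + 1)).const_mul (c * s))).const_mul _)
  obtain ⟨K, hK⟩ : ∃ K, K = E + |b| * ‖s‖ + |c| * ‖s‖ ^ 2 + |c| * ‖s‖ := ⟨_, rfl⟩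
  have hRn : ∀ n, ∫ x, ‖R n x‖ ∂ν ≤ (‖s‖ * E) ^ (n + 2) * K := by
    intro n
    have hb : ∀ x, ‖R n x‖ ≤ ‖s‖ ^ (n + 2) * (‖p (n + 3) x‖ + |b| * ‖s‖ * ‖p (n + 2) x‖
        + |c| * ‖s‖ ^ 2 * ‖p (n + 2) x‖ + |c| * ‖s‖ * ‖p (n + 1) x‖) := by
      intro x
      simp only [R]
      rw [norm_mul, norm_pow]
      gcongr
      refine (norm_sub_le _ _).trans ?_
      refine (add_le_add_left (norm_sub_le _ _) _).trans ?_
      refine (add_le_add_left (add_le_add_left (norm_sub_le _ _) _) _).trans ?_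
      simp
    have i1 := (hpi (n + 3)).norm
    have i2 := (hpi (n + 2)).norm.const_mul (|b| * ‖s‖)
    have i3 := (hpi (n + 2)).norm.const_mul (|c| * ‖s‖ ^ 2)
    have i4 := (hpi (n + 1)).norm.const_mul (|c| * ‖s‖)
    refine (integral_mono (hRi n).norm ((((i1.add i2).add i3).add i4).const_mul (‖s‖ ^ (n + 2))) hb).trans ?_
    rw [integral_const_mul]
    have e : ∫ x, (((fun x => ‖p (n + 3) x‖) + (fun x => |b| * ‖s‖ * ‖p (n + 2) x‖))
        + (fun x => |c| * ‖s‖ ^ 2 * ‖p (n + 2) x‖) + (fun x => |c| * ‖s‖ * ‖p (n + 1) x‖)) x ∂ν =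
        ∫ x, ‖p (n + 3) x‖ ∂ν + |b| * ‖s‖ * ∫ x, ‖p (n + 2) x‖ ∂ν
        + |c| * ‖s‖ ^ 2 * ∫ x, ‖p (n + 2) x‖ ∂ν + |c| * ‖s‖ * ∫ x, ‖p (n + 1) x‖ ∂ν := by
      rw [integral_add' ((i1.add i2).add i3) i4, integral_add' (i1.add i2) i3, integral_add' i1 i2,
        integral_const_mul, integral_const_mul, integral_const_mul]
    rw [e, mul_pow, mul_assoc (‖s‖ ^ (n + 2)), hK]
    have hE2 : E ^ (n + 1) ≤ E ^ (n + 2) := pow_le_pow_right₀ hE1 (by omega)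
    have := hpn (n + 1)
    have := hpn (n + 2)
    have := hpn (n + 3)
    gcongr
    have t1 : |b| * ‖s‖ * ∫ x, ‖p (n + 2) x‖ ∂ν ≤ |b| * ‖s‖ * E ^ (n + 2) := by gcongr
    have t2 : |c| * ‖s‖ ^ 2 * ∫ x, ‖p (n + 2) x‖ ∂ν ≤ |c| * ‖s‖ ^ 2 * E ^ (n + 2) := by gcongr
    have t3 : |c| * ‖s‖ * ∫ x, ‖p (n + 1) x‖ ∂ν ≤ |c| * ‖s‖ * E ^ (n + 2) := by
      gcongr; linarith
    have t4 : E ^ (n + 3) = E ^ (n + 2) * E := pow_succ _ _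
    linarith
  have hone : ∀ n : ℕ, ∫ x, (∑ i ∈ Finset.range (n + 3), p i x * s ^ i) ∂ν = 1 := by
    intro n
    rw [integral_finsetSum _ (fun i _ => (hpi i).mul_const _), Finset.sum_range_succ']
    rw [Finset.sum_eq_zero]
    · rw [integral_mul_const]; simp [p, hP.h0]
    · intro i _
      rw [integral_mul_const]
      have : ∫ x, p (i + 1) x ∂ν = ((∫ x, (P (i + 1)).eval x ∂ν : ℝ) : ℂ) := integral_ofReal
      rw [this, h0 _ (by omega)]; simp
  have hbd : ∀ n : ℕ, ‖(z - s) * stG ν z - 1‖ ≤ z.im⁻¹ * ((‖s‖ * E) ^ (n + 2) * K) := by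
    intro n
    have hpt : ∀ x : ℝ, (z - s) * (z - x)⁻¹ - ∑ i ∈ Finset.range (n + 3), p i x * s ^ i =
        (z - x)⁻¹ * R n x := by
      intro x
      have hne := sub_real_ne hzi x
      have := gen_identity hP x s z hs hz n
      have e : (z - s) = (z - x) * (∑ i ∈ Finset.range (n + 3), p i x * s ^ i) + R n x := by
        simp only [R, p]; rw [this]; ring
      rw [e]; field_simp; ring
    have hpI : ∫ x : ℝ, (z - x)⁻¹ * R n x ∂ν = (z - s) * stG ν z - 1 := by
      simp only [← hpt]
      rw [integral_sub ((integrable_inv_sub ν hzi).const_mul _)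
        (integrable_finsetSum _ (fun i _ => (hpi i).mul_const _)), hone, integral_const_mul]
      rfl
    rw [← hpI]
    refine (norm_integral_le_integral_norm _).trans ?_
    refine le_trans ?_ (mul_le_mul_of_nonneg_left (hRn n) (inv_nonneg.mpr hzi.le))
    rw [← integral_const_mul]
    refine integral_mono_of_nonneg (Filter.Eventually.of_forall fun x => norm_nonneg _)
      ((hRi n).norm.const_mul _) (Filter.Eventually.of_forall fun x => ?_)
    simp only [norm_mul]
    gcongr
    exact norm_inv_sub_le hzi x
  have hlim : Filter.Tendsto (fun n : ℕ => z.im⁻¹ * ((‖s‖ * E) ^ (n + 2) * K)) Filter.atTop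
      (nhds (z.im⁻¹ * (0 * K))) :=
    (((Filter.tendsto_add_atTop_iff_nat 2).mpr
      (tendsto_pow_atTop_nhds_zero_of_lt_one (by positivity) hsE)).mul_const _).const_mul _
  have := ge_of_tendsto' hlim hbd
  rw [zero_mul, mul_zero] at this
  exact sub_eq_zero.mp (norm_le_zero_iff.mp this)

lemma exists_crit {b c : ℝ} (h : b ^ 3 < 27 * c ^ 2) :
    ∃ w0 y m : ℝ, 0 < y ∧ 0 < m ∧ m = w0 ^ 2 - b ∧ 2 * c = w0 * m ∧ w0 ^ 2 < 4 * m ∧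
      w0 ^ 2 / 4 + y ^ 2 = m := by
  obtain ⟨w0, hw⟩ : ∃ w0 : ℝ, w0 ^ 3 - b * w0 - 2 * c = 0 := by
    obtain ⟨M, hM⟩ : ∃ M, M = 1 + |b| + 2 * |c| := ⟨_, rfl⟩
    have hb := abs_nonneg b
    have hc := abs_nonneg c
    have hM1 : 1 ≤ M := by linarith
    have hcont : ContinuousOn (fun w : ℝ => w ^ 3 - b * w - 2 * c) (Set.Icc (-M) M) := by fun_prop
    have key := intermediate_value_Icc (by linarith : -M ≤ M) hcont
    have hb1 := le_abs_self b
    have hb2 := neg_abs_le b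
    have hc1 := le_abs_self c
    have hc2 := neg_abs_le c
    have hmain : 0 ≤ M * (M ^ 2 - |b|) - 2 * |c| := by
      have : M ≤ M ^ 2 := by nlinarith
      nlinarith
    have : (0 : ℝ) ∈ Set.Icc ((-M) ^ 3 - b * (-M) - 2 * c) (M ^ 3 - b * M - 2 * c) := by
      constructor <;> nlinarith
    obtain ⟨w0, _, hw⟩ := key this
    exact ⟨w0, hw⟩
  obtain ⟨m, hm⟩ : ∃ m, m = w0 ^ 2 - b := ⟨_, rfl⟩
  have hc : 2 * c = w0 * m := by rw [hm]; linarith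
  have hid : 27 * c ^ 2 - b ^ 3 = (4 * m - w0 ^ 2) * (w0 ^ 2 + m / 2) ^ 2 := by
    have hb : b = w0 ^ 2 - m := by linarith
    have hc' : c = w0 * m / 2 := by linarith
    rw [hb, hc']; ring
  have h4 : 0 < 4 * m - w0 ^ 2 := by
    have : 0 < (4 * m - w0 ^ 2) * (w0 ^ 2 + m / 2) ^ 2 := by rw [← hid]; linarith
    exact pos_of_mul_pos_left this (sq_nonneg _)
  refine ⟨w0, √(4 * m - w0 ^ 2) / 2, m, by positivity, by nlinarith [sq_nonneg w0], hm, hc, by linarith, ?_⟩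
  rw [div_pow, Real.sq_sqrt h4.le]; ring

lemma crit_im_pos {a b c w0 y m ρ : ℝ} (hy : 0 < y) (hm : 0 < m) (hb : m = w0 ^ 2 - b)
    (hc : 2 * c = w0 * m) (h4 : w0 ^ 2 < 4 * m) (hρ : 0 < ρ) :
    0 < (((ρ : ℂ) * (⟨-w0 / 2 / m, -y / m⟩ : ℂ))⁻¹ + a + b * ((ρ : ℂ) * (⟨-w0 / 2 / m, -y / m⟩ : ℂ))
      + c * ((ρ : ℂ) * (⟨-w0 / 2 / m, -y / m⟩ : ℂ)) ^ 2).im ∨ w0 ^ 2 / 4 + y ^ 2 ≠ m := by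
  by_cases hyy : w0 ^ 2 / 4 + y ^ 2 = m
  swap
  · exact Or.inr hyy
  left
  have hinv : ((ρ : ℂ) * (⟨-w0 / 2 / m, -y / m⟩ : ℂ))⁻¹ = ⟨-w0 / 2 / ρ, y / ρ⟩ := by
    refine inv_eq_of_mul_eq_one_right ?_
    apply Complex.ext
    · simp; field_simp; linarith
    · simp; field_simp; ring
  rw [hinv]
  have e : ((⟨-w0 / 2 / ρ, y / ρ⟩ : ℂ) + a + b * ((ρ : ℂ) * (⟨-w0 / 2 / m, -y / m⟩ : ℂ))
      + c * ((ρ : ℂ) * (⟨-w0 / 2 / m, -y / m⟩ : ℂ)) ^ 2).im =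
      y / (ρ * m) * (m - b * ρ ^ 2 + w0 ^ 2 * ρ ^ 3 / 2) := by
    have hc' : c = w0 * m / 2 := by linarith
    rw [hc']
    simp [pow_two]
    field_simp
    ring
  rw [e]
  have hb' : b = w0 ^ 2 - m := by linarith
  have : 0 < m - b * ρ ^ 2 + w0 ^ 2 * ρ ^ 3 / 2 := by
    rw [hb']
    have h1 : 0 < (m - w0 ^ 2 / 4) * (1 + ρ ^ 2) := mul_pos (by linarith) (by positivity)
    have h2 : 0 ≤ w0 ^ 2 / 4 * ((1 - ρ) ^ 2 * (1 + 2 * ρ)) := by positivity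
    linarith
  positivity

lemma no_nu {a b c : ℝ} (h : b ^ 3 < 27 * c ^ 2) {P : ℕ → Polynomial ℝ} (hP : Rec4 a b c P)
    (ν : Measure ℝ) [IsProbabilityMeasure ν] (hν : ∀ n : ℕ, Integrable (fun x : ℝ => x ^ n) ν)
    (h0 : ∀ n : ℕ, 1 ≤ n → ∫ x, (P n).eval x ∂ν = 0) : False := by
  obtain ⟨w0, y, m, hy, hm, hb, hc, h4, hyy⟩ := exists_crit h
  obtain ⟨q, hq⟩ : ∃ q : ℂ, q = ⟨-w0 / 2 / m, -y / m⟩ := ⟨_, rfl⟩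
  let Z : ℂ → ℂ := fun s => s⁻¹ + a + b * s + c * s ^ 2
  have hZpos : ∀ ρ : ℝ, 0 < ρ → 0 < (Z (ρ * q)).im := by
    intro ρ hρ
    rcases crit_im_pos (a := a) hy hm hb hc h4 hρ with h | h
    · rw [hq]; exact h
    · exact absurd hyy h
  have hq0 : q ≠ 0 := by
    intro h
    have := congrArg Complex.im h
    rw [hq] at this
    simp [hm.ne', hy.ne'] at this
  let U : Set ℂ := (fun ρ : ℝ => (ρ : ℂ) * q) '' Set.Ioi 0
  have hUc : IsPreconnected U := isPreconnected_Ioi.image _ (by fun_prop)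
  have hne : ∀ ρ : ℝ, 0 < ρ → (ρ : ℂ) * q ≠ 0 := fun ρ hρ =>
    mul_ne_zero (Complex.ofReal_ne_zero.mpr hρ.ne') hq0
  let H : ℂ → ℂ := fun s => (Z s - s) * stG ν (Z s)
  have hZa : ∀ s, s ≠ 0 → AnalyticAt ℂ Z s := by
    intro s hs
    simp only [Z]
    have : AnalyticAt ℂ (fun s : ℂ => s⁻¹) s := analyticAt_id.inv hs
    fun_prop
  have hGa : AnalyticOnNhd ℂ (stG ν) {z | 0 < z.im} :=
    (stG_diff ν).analyticOnNhd (isOpen_lt continuous_const Complex.continuous_im)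
  have hHa : AnalyticOnNhd ℂ H U := by
    rintro _ ⟨ρ, hρ, rfl⟩
    have h1 := hZa _ (hne ρ hρ)
    have h2 : AnalyticAt ℂ (fun s => stG ν (Z s)) (ρ * q) :=
      AnalyticAt.fun_comp (hGa _ (hZpos ρ hρ)) h1
    exact (h1.sub analyticAt_id).mul h2
  obtain ⟨E, hE⟩ : ∃ E, E = 3 + 2 * (|a| + |b| + |c|) := ⟨_, rfl⟩
  have hE1 : 0 < E := by
    have := abs_nonneg a; have := abs_nonneg b; have := abs_nonneg c; linarith
  have hqn : 0 < ‖q‖ := norm_pos_iff.mpr hq0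
  obtain ⟨ρ0, hρ0⟩ : ∃ ρ0, ρ0 = (2 * E * ‖q‖)⁻¹ := ⟨_, rfl⟩
  have hρ0p : 0 < ρ0 := by rw [hρ0]; positivity
  have hnear : H =ᶠ[nhds ((ρ0 : ℂ) * q)] fun _ => 1 := by
    have c1 : ∀ᶠ s in nhds ((ρ0 : ℂ) * q), s ≠ 0 := isOpen_ne.mem_nhds (hne ρ0 hρ0p)
    have c2 : ∀ᶠ s in nhds ((ρ0 : ℂ) * q), 0 < (Z s).im :=
      (Complex.continuous_im.continuousAt.comp (hZa _ (hne ρ0 hρ0p)).continuousAt).eventually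
        (isOpen_Ioi.mem_nhds (hZpos ρ0 hρ0p))
    have c3 : ∀ᶠ s in nhds ((ρ0 : ℂ) * q), ‖s‖ * E < 1 := by
      refine (isOpen_lt (by fun_prop) continuous_const).mem_nhds ?_
      simp only [Set.mem_ofPred_eq]
      rw [norm_mul, Complex.norm_real, Real.norm_of_nonneg hρ0p.le, hρ0]
      have : (2 * E * ‖q‖)⁻¹ * ‖q‖ * E = 1 / 2 := by field_simp
      rw [this]; norm_num
    filter_upwards [c1, c2, c3] with s s1 s2 s3
    exact stG_eq hP ν hν h0 s (Z s) s1 rfl s2 (hE ▸ s3)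
  have hEq : Set.EqOn H (fun _ => 1) U :=
    hHa.eqOn_of_preconnected_of_eventuallyEq analyticOnNhd_const hUc ⟨ρ0, hρ0p, rfl⟩ hnear
  have hq1 : ((1 : ℝ) : ℂ) * q = q := by simp
  have hHq : H q = 1 := hEq ⟨1, Set.mem_Ioi.mpr one_pos, hq1⟩
  have hZq : 0 < (Z q).im := by have := hZpos 1 one_pos; rwa [hq1] at this
  have hZd : HasDerivAt Z 0 q := by
    have d1 := (hasDerivAt_inv hq0)
    have d : HasDerivAt Z (-(q ^ 2)⁻¹ + b * 1 + c * (2 * q)) q := by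
      have d2 := ((hasDerivAt_id q).const_mul (b : ℂ))
      have d3 := ((hasDerivAt_pow 2 q).const_mul (c : ℂ))
      have := ((d1.add_const (a : ℂ)).add d2).add d3
      refine this.congr_deriv ?_
      simp
    refine d.congr_deriv ?_
    have hq2 : 1 + w0 * q + m * q ^ 2 = 0 := by
      rw [hq]
      apply Complex.ext
      · simp [pow_two]; field_simp; linarith
      · simp [pow_two]; field_simp; ring
    have hbC : (b : ℂ) = w0 ^ 2 - m := by rw [hb]; push_cast; ring
    have hcC : (c : ℂ) = w0 * m / 2 := by
      have : c = w0 * m / 2 := by linarith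
      rw [this]; push_cast; ring
    rw [hbC, hcC]
    field_simp
    linear_combination (-1 + w0 * q) * hq2
  have hGd : HasDerivAt (stG ν) (deriv (stG ν) (Z q)) (Z q) :=
    (hGa _ hZq).differentiableAt.hasDerivAt
  have hHd : HasDerivAt H (-stG ν (Z q)) q := by
    have h1 := (hZd.sub (hasDerivAt_id q)).mul (hGd.comp q hZd)
    refine h1.congr_deriv ?_
    simp
  have hray : HasDerivAt (fun ρ : ℝ => H ((ρ : ℂ) * q)) (-stG ν (Z q) * q) 1 := by
    have hl : HasDerivAt (fun ρ : ℝ => (ρ : ℂ) * q) q 1 := by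
      have := (Complex.ofRealCLM.hasDerivAt (x := (1 : ℝ))).mul_const q
      simpa using this
    have hHd' : HasDerivAt H (-stG ν (Z q)) (((1 : ℝ) : ℂ) * q) := by rw [hq1]; exact hHd
    exact hHd'.comp (1 : ℝ) hl
  have hcst : HasDerivAt (fun ρ : ℝ => H ((ρ : ℂ) * q)) 0 1 := by
    refine (hasDerivAt_const (1 : ℝ) (1 : ℂ)).congr_of_eventuallyEq ?_
    filter_upwards [isOpen_Ioi.mem_nhds (Set.mem_Ioi.mpr (one_pos : (0 : ℝ) < 1))] with ρ hρ
    exact hEq ⟨ρ, hρ, rfl⟩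
  have h5 := hray.unique hcst
  have h6 : stG ν (Z q) = 0 := by
    rcases mul_eq_zero.mp h5 with h | h
    · exact neg_eq_zero.mp h
    · exact absurd h hq0
  have h7 : (Z q - q) * stG ν (Z q) = 1 := hHq
  rw [h6, mul_zero] at h7
  exact zero_ne_one h7


/-- Polynomials given by the 4-step recursion (with `P₀ = 1`, `P₁ = x`) are
`ν-2`-orthogonal for some probability measure `ν` with all moments finite
if and only if `b³ ≥ 27c²`. -/
theorem four_step_recursion_orthogonality (a b c : ℝ) (P : ℕ → Polynomial ℝ)
    (hP0 : P 0 = 1) (hP1 : P 1 = Polynomial.X)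
    (hrec1 : Polynomial.X * P 1 = P 2 + Polynomial.C a * P 1 + P 0)
    (hrec2 : Polynomial.X * P 2 = P 3 + Polynomial.C a * P 2 + Polynomial.C b * P 1)
    (hrecn : ∀ n : ℕ, 3 ≤ n → Polynomial.X * P n =
      P (n + 1) + Polynomial.C a * P n + Polynomial.C b * P (n - 1)
        + Polynomial.C c * P (n - 2)) :
    b ^ 3 ≥ 27 * c ^ 2 ↔
      ∃ ν : Measure ℝ, IsProbabilityMeasure ν ∧
        (∀ n : ℕ, Integrable (fun x : ℝ => x ^ n) ν) ∧
        NuDOrthogonal ν 2 P := by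
  have hP : Rec4 a b c P := ⟨hP0, hP1, hrec1, hrec2, fun n => hrecn (n + 3) (by omega)⟩
  constructor
  · intro h
    obtain ⟨ν, hp, hν, h0⟩ := exists_nu_of_ge h hP
    refine ⟨ν, hp, hν, h0, ?_⟩
    intro k hk n hn
    have := orth_all hP (intL ν hν) h0 k 0 n (by omega) (by omega)
    simp only [intL, LinearMap.coe_mk, AddHom.coe_mk, pow_zero, one_mul, Polynomial.eval_mul] at this
    rw [← this]
    simp only [mul_comm]
  · rintro ⟨ν, hp, hν, h0, _⟩
    by_contra hlt
    exact no_nu (not_le.mp hlt) hP ν hν h0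
end
end
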